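/- arXiv:1408.4252 — 5 statements merged into one kernel-verified Lean document; each statement's English description precedes it below -/
import Mathlib

section
/- Let (X, 𝒜) be a standard Borel space, ν a finite measure on X, and f : X → X a bijection such that f and f⁻¹ are measurable and f preserves ν. Assume that the set of periodic points {x ∈ X : f^n(x) = x for some n ≥ 1} has ν-measure zero. Then for every integer ℓ₀ ≥ 1 there exist measurable subsets Y₀, Y₁, …, Y_{ℓ₀−1} of X such that the sets f^k(Y_ℓ), for 0 ≤ ℓ ≤ ℓ₀−1 and 0 ≤ k ≤ ℓ₀+ℓ−1, are pairwise disjoint (i.e., f^k(Y_ℓ) ∩ f^{k′}(Y_{ℓ′}) = ∅ whenever (k,ℓ) ≠ (k′,ℓ′)) and the complement in X of their union has ν-measure zero. -/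
open MeasureTheory

/-!
The towers are built over a *maximal* `ℓ₀`-separated measurable set `A`: no point of `A` returns
to `A` at a time in `[1, ℓ₀)`, and every aperiodic point has a point of `A` at orbit distance less
than `ℓ₀` (`exists_marker`). Looking from `f^ℓ₀ y`, with `y ∈ A` aperiodic, maximality yields a
return to `A` at a time in `[1, 2ℓ₀ - 1]`, and separation pushes the first return time up to
`[ℓ₀, 2ℓ₀ - 1]`. So `Y_ℓ`, the set of points of `A` with first return time exactly `ℓ₀ + ℓ`, works:
an aperiodic point lies in the column over its last visit to `A`, and disjointness is immediate
from the definition of first return.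

The set `A` is obtained greedily. The points not fixed by `f, …, f^(ℓ₀-1)` are covered by countably
many `ℓ₀`-separated measurable sets `B n` (`exists_separated_cover`, from a measurable injection
into `ℝ`), and at stage `n` the points of `B n` far from everything chosen so far are added.
The columns thus cover every aperiodic point, hence almost every point.
-/

lemma iterate_iterate_sub {X : Type*} {f g : X → X} (hgf : Function.LeftInverse g f)
    {i j : ℕ} (h : i ≤ j) (x : X) : g^[i] (f^[j] x) = f^[j - i] x := by
  obtain ⟨k, rfl⟩ := Nat.exists_eq_add_of_le h
  rw [Function.iterate_add_apply, hgf.iterate i, Nat.add_sub_cancel_left]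

/-- The sets are `{x | ⌊n φ(x)⌋ = m, ⌊n φ(fⁱ x)⌋ ≠ m for 1 ≤ i < L}` for a measurable injection
`φ : X → ℝ`, indexed by `n : ℕ` and `m : ℤ`. -/
lemma exists_separated_cover {X : Type*} [MeasurableSpace X] [StandardBorelSpace X]
    {f : X → X} (hf : Measurable f) (L : ℕ) :
    ∃ B : ℕ → Set X, (∀ n, MeasurableSet (B n)) ∧
      (∀ n, ∀ x ∈ B n, ∀ i, 1 ≤ i → i < L → f^[i] x ∉ B n) ∧
      ∀ x, (∀ i, 1 ≤ i → i < L → f^[i] x ≠ x) → ∃ n, x ∈ B n := by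
  obtain ⟨φ, hφ⟩ := exists_measurableEmbedding_real X
  let C : ℕ × ℤ → Set X := fun p =>
    {x | ⌊(p.1 : ℝ) * φ x⌋ = p.2 ∧ ∀ i, 1 ≤ i → i < L → ⌊(p.1 : ℝ) * φ (f^[i] x)⌋ ≠ p.2}
  have hm : ∀ (n : ℕ) (i : ℕ), Measurable fun x => ⌊(n : ℝ) * φ (f^[i] x)⌋ := fun n i =>
    Int.measurable_floor.comp ((hφ.measurable.comp (hf.iterate i)).const_mul _)
  obtain ⟨e, he⟩ := exists_surjective_nat (ℕ × ℤ)
  refine ⟨fun n => C (e n), fun n => ?_, fun n x hx i h1 h2 h3 => hx.2 i h1 h2 h3.1, ?_⟩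
  · have h0 : MeasurableSet {x | ⌊((e n).1 : ℝ) * φ x⌋ = (e n).2} :=
      hm (e n).1 0 (measurableSet_singleton _)
    have h1 : MeasurableSet
        {x | ∀ i, 1 ≤ i → i < L → ⌊((e n).1 : ℝ) * φ (f^[i] x)⌋ ≠ (e n).2} := by
      simp only [Set.ofPred_forall]
      exact MeasurableSet.iInter fun i => MeasurableSet.iInter fun _ => MeasurableSet.iInter
        fun _ => (hm (e n).1 i (measurableSet_singleton _)).compl
    exact h0.inter h1
  · intro x hx
    -- The floors are distinct as soon as `n` exceeds every `1 / |φ (fⁱ x) - φ x|`.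
    have hev : ∀ᶠ n : ℕ in Filter.atTop, ∀ i ∈ Finset.Ico 1 L,
        ⌊(n : ℝ) * φ (f^[i] x)⌋ ≠ ⌊(n : ℝ) * φ x⌋ := by
      rw [Filter.eventually_all_finset]
      intro i hi
      rw [Finset.mem_Ico] at hi
      have hpos : 0 < |φ (f^[i] x) - φ x| :=
        abs_pos.2 (sub_ne_zero.2 fun h => hx i hi.1 hi.2 (hφ.injective h))
      obtain ⟨N, hN⟩ := exists_nat_gt (1 / |φ (f^[i] x) - φ x|)
      filter_upwards [Filter.eventually_ge_atTop N] with n hn hfl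
      have h1 := Int.abs_sub_lt_one_of_floor_eq_floor hfl
      rw [← mul_sub, abs_mul, Nat.abs_cast] at h1
      rw [div_lt_iff₀ hpos] at hN
      have h2 : (N : ℝ) * |φ (f^[i] x) - φ x| ≤ n * |φ (f^[i] x) - φ x| := by gcongr
      linarith
    obtain ⟨n, hn⟩ := hev.exists
    obtain ⟨k, hk⟩ := he (n, ⌊(n : ℝ) * φ x⌋)
    refine ⟨k, ?_⟩
    change x ∈ C (e k)
    rw [hk]
    exact ⟨rfl, fun i h1 h2 => hn i (Finset.mem_Ico.2 ⟨h1, h2⟩)⟩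

/-- The greedy construction: stage `n + 1` adds to stage `n` the points of `B n` whose orbit
distance to stage `n` is at least `L`. -/
def greedyMarker {X : Type*} (f g : X → X) (L : ℕ) (B : ℕ → Set X) : ℕ → Set X
  | 0 => ∅
  | n + 1 => greedyMarker f g L B n ∪
      (B n ∩ {x | ∀ i, i < L →
        f^[i] x ∉ greedyMarker f g L B n ∧ g^[i] x ∉ greedyMarker f g L B n})

/-- A measurable `L`-separated set that is maximal as far as aperiodic points are concerned. -/
lemma exists_marker {X : Type*} [MeasurableSpace X] [StandardBorelSpace X]
    {f g : X → X} (hf : Measurable f) (hg : Measurable g)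
    (hgf : Function.LeftInverse g f) {L : ℕ} (hL : 1 ≤ L) :
    ∃ A : Set X, MeasurableSet A ∧ (∀ x ∈ A, ∀ i, 1 ≤ i → i < L → f^[i] x ∉ A) ∧
      ∀ x, (∀ i, 1 ≤ i → i < L → f^[i] x ≠ x) → ∃ i < L, f^[i] x ∈ A ∨ g^[i] x ∈ A := by
  obtain ⟨B, hB, hsep, hcov⟩ := exists_separated_cover hf L
  set G := greedyMarker f g L B with hG
  have hsucc : ∀ n, G (n + 1) =
      G n ∪ (B n ∩ {x | ∀ i, i < L → f^[i] x ∉ G n ∧ g^[i] x ∉ G n}) := fun n => rfl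
  have hmono : Monotone G := monotone_nat_of_le_succ fun n => by
    rw [hsucc]; exact Set.subset_union_left
  have hmeas : ∀ n, MeasurableSet (G n) := by
    intro n
    induction n with
    | zero => exact MeasurableSet.empty
    | succ n ih =>
      rw [hsucc]
      refine ih.union ((hB n).inter ?_)
      simp only [Set.ofPred_forall]
      exact MeasurableSet.iInter fun i => MeasurableSet.iInter fun _ =>
        (hf.iterate i ih).compl.inter (hg.iterate i ih).compl
  have hGsep : ∀ n, ∀ x ∈ G n, ∀ i, 1 ≤ i → i < L → f^[i] x ∉ G n := by
    intro n
    induction n with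
    | zero => intro x hx; exact hx.elim
    | succ n ih =>
      intro x hx i h1 h2 h3
      rw [hsucc] at hx h3
      rcases hx with hx | hx <;> rcases h3 with h3 | h3
      · exact ih x hx i h1 h2 h3
      · exact (h3.2 i h2).2 (by rwa [hgf.iterate i])
      · exact (hx.2 i h2).1 h3
      · exact hsep n x hx.1 i h1 h2 h3.1
  refine ⟨⋃ n, G n, MeasurableSet.iUnion hmeas, ?_, ?_⟩
  · intro x hx i h1 h2 h3
    obtain ⟨m, hm⟩ := Set.mem_iUnion.1 hx
    obtain ⟨n, hn⟩ := Set.mem_iUnion.1 h3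
    exact hGsep (max m n) x (hmono (le_max_left _ _) hm) i h1 h2 (hmono (le_max_right _ _) hn)
  · intro x hx
    obtain ⟨n, hn⟩ := hcov x hx
    by_contra! hcon
    have hmem : x ∈ G (n + 1) := by
      rw [hsucc]
      exact Or.inr ⟨hn, fun i hi => ⟨fun h => (hcon i hi).1 (Set.mem_iUnion.2 ⟨n, h⟩),
        fun h => (hcon i hi).2 (Set.mem_iUnion.2 ⟨n, h⟩)⟩⟩
    exact (hcon 0 hL).1 (Set.mem_iUnion.2 ⟨n + 1, hmem⟩)

/-- The points of `A` whose first return to `A` under `f` happens exactly at time `r`. -/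
def firstReturnSet {X : Type*} (f : X → X) (A : Set X) (r : ℕ) : Set X :=
  A ∩ {x | f^[r] x ∈ A} ∩ {x | ∀ i, 1 ≤ i → i < r → f^[i] x ∉ A}

lemma measurableSet_firstReturnSet {X : Type*} [MeasurableSpace X] {f : X → X}
    (hf : Measurable f) {A : Set X} (hA : MeasurableSet A) (r : ℕ) :
    MeasurableSet (firstReturnSet f A r) := by
  refine (hA.inter (hf.iterate r hA)).inter ?_
  simp only [Set.ofPred_forall]
  exact MeasurableSet.iInter fun i => MeasurableSet.iInter fun _ => MeasurableSet.iInter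
    fun _ => (hf.iterate i hA).compl

lemma firstReturn_level_unique {X : Type*} {f : X → X} (hinj : Function.Injective f)
    {A : Set X} {r r' k k' : ℕ} (hr : 1 ≤ r) (hr' : 1 ≤ r') (hk : k < r) (hk' : k' < r')
    {y y' : X} (hy : y ∈ firstReturnSet f A r) (hy' : y' ∈ firstReturnSet f A r')
    (h : f^[k] y = f^[k'] y') : k = k' ∧ r = r' := by
  wlog hkk : k ≤ k' generalizing r r' k k' y y'
  · have := this hr' hr hk' hk hy' hy h.symm (by omega)
    exact ⟨this.1.symm, this.2.symm⟩
  obtain ⟨d, rfl⟩ := Nat.exists_eq_add_of_le hkk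
  rw [Function.iterate_add_apply] at h
  have hyd : y = f^[d] y' := hinj.iterate k h
  obtain rfl : d = 0 := by
    by_contra hd
    exact hy'.2 d (by omega) (by omega) (hyd ▸ hy.1.1)
  obtain rfl : y = y' := hyd
  refine ⟨rfl, ?_⟩
  rcases lt_trichotomy r r' with hlt | heq | hlt
  · exact (hy'.2 r hr hlt hy.1.2).elim
  · exact heq
  · exact (hy.2 r' hr' hlt hy'.1.2).elim

/-- **Lemma 3.9 (Kakutani–Rokhlin towers).**  Let `f` be a measure-preserving bi-measurable
bijection of a standard Borel space with a finite invariant measure `ν`, whose periodic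
points have `ν`-measure zero.  Then for every `ℓ₀ ≥ 1` there are measurable sets
`Y₀, …, Y_{ℓ₀−1}` whose images `f^k(Y_ℓ)`, for `0 ≤ ℓ ≤ ℓ₀−1` and `0 ≤ k ≤ ℓ₀+ℓ−1`, are
pairwise disjoint and fill the space up to a `ν`-null set. -/
theorem rokhlin_tower_decomposition {X : Type*} [MeasurableSpace X] [StandardBorelSpace X]
    (ν : Measure X) [IsFiniteMeasure ν]
    (f g : X → X) (hf : Measurable f) (hg : Measurable g)
    (hgf : Function.LeftInverse g f) (hfg : Function.RightInverse g f)
    (hpres : MeasurePreserving f ν ν)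
    (hper : ν {x | ∃ n : ℕ, 1 ≤ n ∧ f^[n] x = x} = 0)
    (ℓ₀ : ℕ) (hℓ₀ : 1 ≤ ℓ₀) :
    ∃ Y : ℕ → Set X,
      (∀ ℓ < ℓ₀, MeasurableSet (Y ℓ)) ∧
      (∀ ℓ ℓ' k k' : ℕ, ℓ < ℓ₀ → ℓ' < ℓ₀ → k < ℓ₀ + ℓ → k' < ℓ₀ + ℓ' →
        (k, ℓ) ≠ (k', ℓ') → Disjoint (f^[k] '' Y ℓ) (f^[k'] '' Y ℓ')) ∧
      ν ((⋃ ℓ ∈ Finset.range ℓ₀, ⋃ k ∈ Finset.range (ℓ₀ + ℓ), f^[k] '' Y ℓ)ᶜ) = 0 := by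
  obtain ⟨A, hA, hsep, hmax⟩ := exists_marker hf hg hgf hℓ₀
  refine ⟨fun ℓ => firstReturnSet f A (ℓ₀ + ℓ),
    fun ℓ _ => measurableSet_firstReturnSet hf hA _, ?_, ?_⟩
  · intro ℓ ℓ' k k' _ _ hk hk' hne
    rw [Set.disjoint_left]
    rintro _ ⟨y, hy, rfl⟩ ⟨y', hy', h⟩
    obtain ⟨h1, h2⟩ := firstReturn_level_unique hgf.injective (by omega) (by omega) hk hk' hy hy'
      h.symm
    exact hne (Prod.ext h1 (by simpa using h2))
  · refine measure_mono_null ?_ hper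
    intro x hx
    by_contra hap
    apply hx
    simp only [Set.mem_ofPred_eq, not_exists, not_and] at hap
    -- Aperiodicity propagates along the whole orbit.
    have hapg : ∀ j i, 1 ≤ i → f^[i] (g^[j] x) ≠ g^[j] x := by
      intro j i hi h
      refine hap i hi ?_
      have h' := congrArg f^[j] h
      rwa [← Function.iterate_add_apply, add_comm, Function.iterate_add_apply,
        hfg.iterate j] at h'
    have hapf : ∀ j m i, 1 ≤ i → f^[i] (f^[m] (g^[j] x)) ≠ f^[m] (g^[j] x) := by
      intro j m i hi h
      rw [← Function.iterate_add_apply, add_comm, Function.iterate_add_apply] at h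
      exact hapg j i hi (hgf.injective.iterate m h)
    -- A visit to `A` in the past of `x` is found near `g^(ℓ₀-1) x`.
    have hpast : ∃ j, g^[j] x ∈ A := by
      obtain ⟨i, hi, h | h⟩ := hmax (g^[ℓ₀ - 1] x) fun i h1 _ => hapg _ i h1
      · exact ⟨ℓ₀ - 1 - i, by rwa [iterate_iterate_sub hfg (by omega)] at h⟩
      · exact ⟨i + (ℓ₀ - 1), by rwa [Function.iterate_add_apply]⟩
    classical
    let j := Nat.find hpast
    have hj : g^[j] x ∈ A := Nat.find_spec hpast
    have hjmin : ∀ i < j, g^[i] x ∉ A := fun i hi => Nat.find_min hpast hi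
    have hret : ∃ r, 1 ≤ r ∧ r < 2 * ℓ₀ ∧ f^[r] (g^[j] x) ∈ A := by
      obtain ⟨i, hi, h | h⟩ := hmax (f^[ℓ₀] (g^[j] x)) fun i h1 _ => hapf _ _ i h1
      · exact ⟨i + ℓ₀, by omega, by omega, by rwa [Function.iterate_add_apply]⟩
      · exact ⟨ℓ₀ - i, by omega, by omega, by rwa [iterate_iterate_sub hgf hi.le] at h⟩
    let r := Nat.find hret
    obtain ⟨hr1, hr2, hrA⟩ : 1 ≤ r ∧ r < 2 * ℓ₀ ∧ f^[r] (g^[j] x) ∈ A := Nat.find_spec hret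
    have hrmin : ∀ i, 1 ≤ i → i < r → f^[i] (g^[j] x) ∉ A := fun i h1 h2 h3 =>
      Nat.find_min hret h2 ⟨h1, by omega, h3⟩
    have hrℓ : ℓ₀ ≤ r := by
      by_contra hlt
      exact hsep _ hj r hr1 (by omega) hrA
    have hjr : j < r := by
      by_contra hle
      rw [iterate_iterate_sub hfg (by omega)] at hrA
      exact hjmin (j - r) (by omega) hrA
    have hsum : ℓ₀ + (r - ℓ₀) = r := by omega
    simp only [Set.mem_iUnion, Finset.mem_range]
    refine ⟨r - ℓ₀, by omega, j, by omega, g^[j] x, ?_, hfg.iterate j x⟩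
    rw [hsum]
    exact ⟨⟨hj, hrA⟩, hrmin⟩
end

section
/- For every integer d ≥ 2 there exists a dense G_δ subset 𝒢 of GL(d,ℝ) × GL(d,ℝ) such that for every pair (B, B′) ∈ 𝒢 there is no Borel probability measure μ on the real projective space P(ℝ^d) satisfying both B_*μ = μ and B′_*μ = μ, where T_* denotes the push-forward of measures under the homeomorphism of P(ℝ^d) induced by an invertible linear map T. -/
/-!
The generic set is cut out of `GL(d,ℝ) × GL(d,ℝ)` by two conditions on a pair `(B, C)`:

* for all `m, n ≥ 1`, the words `X^i Y X^j` in `X = B^m`, `Y = C^n` span all matrices (`Spanning`),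
  so `B^m` and `C^n` have no common nonzero proper invariant subspace;
* no nonzero symmetric bilinear form has the same pullbacks under `B^n C` and `C B^n` for all
  `n ≤ d²` (`NoForm`), so `B` and `C` do not scale a common inner product.

Each of these countably many conditions is the injectivity of a linear system with coefficients
polynomial in `(B, C)`. It holds for the test pair `B = diag(2, 3, 5, …)`, `C = ` all-ones matrix,
hence off the zero set of an analytic function that is not identically zero, and such a set is open
and dense. Baire's theorem in the space of pairs of operators, pulled back along the open embedding
of the units, gives a dense `G_δ` set.

Let a probability measure `μ` on projective space be invariant under both maps. If `μ` charges a
proper subspace, a minimal such subspace is periodic under `B` and `C` by Poincaré recurrence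
(`exists_periodic_subspace`), against the first condition. Otherwise, by Furstenberg's lemma
(`furstenberg`), a sequence of determinant `±1` operators preserving `μ` cannot be unbounded: its
normalisations would accumulate at a nonzero singular operator. So these operators form a bounded
group (`stab_bounded`), which preserves an inner product (`exists_invariant_form`); `B` and `C`
scale it (`exists_scaling`), against the second condition.
-/

open MeasureTheory

/-- The quotient topology on the projectivization of a topological vector space. -/
instance projectivizationTopology {K V : Type*} [DivisionRing K] [AddCommGroup V] [Module K V]
    [TopologicalSpace V] : TopologicalSpace (Projectivization K V) :=
  inferInstanceAs (TopologicalSpace (Quotient (projectivizationSetoid K V)))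

/-- The Borel σ-algebra on the projectivization. -/
instance projectivizationMeasurableSpace {K V : Type*} [DivisionRing K] [AddCommGroup V]
    [Module K V] [TopologicalSpace V] : MeasurableSpace (Projectivization K V) :=
  borel _

/-- The homeomorphism of projective space induced by an invertible linear map. -/
noncomputable def projectiveMap {d : ℕ}
    (B : (EuclideanSpace ℝ (Fin d) →L[ℝ] EuclideanSpace ℝ (Fin d))ˣ) :
    Projectivization ℝ (EuclideanSpace ℝ (Fin d)) →
      Projectivization ℝ (EuclideanSpace ℝ (Fin d)) :=
  Projectivization.map
    ((B : EuclideanSpace ℝ (Fin d) →L[ℝ] EuclideanSpace ℝ (Fin d)).toLinearMap)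
    (by
      intro x y hxy
      have h2 : ∀ v : EuclideanSpace ℝ (Fin d),
          (↑B⁻¹ : EuclideanSpace ℝ (Fin d) →L[ℝ] EuclideanSpace ℝ (Fin d))
            ((↑B : EuclideanSpace ℝ (Fin d) →L[ℝ] EuclideanSpace ℝ (Fin d)) v) = v := by
        intro v
        rw [← ContinuousLinearMap.mul_apply, Units.inv_mul, ContinuousLinearMap.one_apply]
      have hxy' : (↑B : EuclideanSpace ℝ (Fin d) →L[ℝ] EuclideanSpace ℝ (Fin d)) x
          = (↑B : EuclideanSpace ℝ (Fin d) →L[ℝ] EuclideanSpace ℝ (Fin d)) y := hxy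
      calc x = _ := (h2 x).symm
        _ = _ := by rw [hxy']
        _ = y := h2 y)

/-! ### Operators and their matrix entries -/

/-- Euclidean space `ℝ^d`. -/
abbrev Eu (d : ℕ) := EuclideanSpace ℝ (Fin d)

/-- Linear operators of `ℝ^d`, with the operator norm. -/
abbrev Op (d : ℕ) := Eu d →L[ℝ] Eu d

/-- The `(k, l)` entry of the matrix of `T` in the standard basis. -/
noncomputable def ent {d : ℕ} (T : Op d) (k l : Fin d) : ℝ := T (EuclideanSpace.single l 1) k

lemma ent_toEuclideanCLM {d : ℕ} (M : Matrix (Fin d) (Fin d) ℝ) (k l : Fin d) :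
    ent (Matrix.toEuclideanCLM (𝕜 := ℝ) (n := Fin d) M) k l = M k l := by
  simp [ent, Matrix.ofLp_toEuclideanCLM]

lemma apply_eq_sum_ent {d : ℕ} (T : Op d) (v : Eu d) (k : Fin d) :
    T v k = ∑ l, ent T k l * v l := by
  have hv : v = ∑ l, v l • EuclideanSpace.single l (1 : ℝ) := by
    ext j; simp [Finset.sum_apply, Pi.single_apply]
  conv_lhs => rw [hv]
  simp [ent, map_sum, Finset.sum_apply, mul_comm]

lemma analyticAt_ent {d : ℕ} {P : Type*} [NormedAddCommGroup P] [NormedSpace ℝ P]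
    {f : P → Op d} {p : P} (hf : AnalyticAt ℝ f p) (k l : Fin d) :
    AnalyticAt ℝ (fun p => ent (f p) k l) p := by
  let φ : Op d →L[ℝ] ℝ := (EuclideanSpace.proj k : Eu d →L[ℝ] ℝ).comp
    (ContinuousLinearMap.apply ℝ (Eu d) (EuclideanSpace.single l (1 : ℝ)))
  exact (φ.analyticAt (f p)).comp hf

/-! ### Analytic genericity -/

/-- The complement of the zero set of an analytic function that is not identically zero is dense
(identity theorem). -/
lemma dense_ne_zero {P : Type*} [NormedAddCommGroup P] [NormedSpace ℝ P] {f : P → ℝ}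
    (hf : ∀ p, AnalyticAt ℝ f p) {p₁ : P} (h₁ : f p₁ ≠ 0) : Dense {p | f p ≠ 0} := by
  intro p
  by_contra hp
  have h0 : f =ᶠ[nhds p] 0 := by
    have := mem_closure_iff_frequently.not.1 hp
    filter_upwards [Filter.not_frequently.1 this] with x hx
    simpa using hx
  have hA : AnalyticOnNhd ℝ f Set.univ := fun x _ => hf x
  exact h₁ (hA.eqOn_zero_of_preconnected_of_eventuallyEq_zero isPreconnected_univ
    (Set.mem_univ p) h0 (Set.mem_univ p₁))

/-- Injectivity of a linear system whose coefficients depend analytically on a parameter `p` is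
generic as soon as it holds at one parameter `p₁`: if `R` is a left inverse at `p₁`, it suffices
that `det (R * c p) ≠ 0`. -/
lemma exists_analytic_of_injective {P ι κ : Type*} [NormedAddCommGroup P] [NormedSpace ℝ P]
    [Fintype ι] [DecidableEq ι] [Fintype κ] [DecidableEq κ] (c : P → Matrix κ ι ℝ)
    (hc : ∀ x i p, AnalyticAt ℝ (fun p => c p x i) p) {p₁ : P}
    (h₁ : ∀ a : ι → ℝ, (∀ x, ∑ i, c p₁ x i * a i = 0) → a = 0) :
    ∃ f : P → ℝ, (∀ p, AnalyticAt ℝ f p) ∧ f p₁ ≠ 0 ∧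
      ∀ p, f p ≠ 0 → ∀ a : ι → ℝ, (∀ x, ∑ i, c p x i * a i = 0) → a = 0 := by
  have hker : LinearMap.ker (Matrix.toLin' (c p₁)) = ⊥ := by
    rw [LinearMap.ker_eq_bot']
    intro a ha
    exact h₁ a fun x => congrFun ha x
  obtain ⟨g, hg⟩ := LinearMap.exists_leftInverse_of_injective _ hker
  let R := LinearMap.toMatrix' g
  have hR : R * c p₁ = 1 := by
    have := congrArg LinearMap.toMatrix' hg
    rwa [LinearMap.toMatrix'_comp, LinearMap.toMatrix'_toLin', LinearMap.toMatrix'_id] at this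
  refine ⟨fun p => (R * c p).det, fun p => ?_, by simp [hR], fun p hp a ha => ?_⟩
  · simp only [Matrix.det_apply, Matrix.mul_apply]
    refine Finset.analyticAt_fun_sum _ fun σ _ => ?_
    refine AnalyticAt.const_smul ?_
    refine Finset.analyticAt_fun_prod _ fun i _ => ?_
    refine Finset.analyticAt_fun_sum _ fun x _ => ?_
    exact analyticAt_const.mul (hc _ _ _)
  · refine Matrix.eq_zero_of_mulVec_eq_zero hp ?_
    rw [← Matrix.mulVec_mulVec, show (c p).mulVec a = 0 from funext ha, Matrix.mulVec_zero]

/-! ### The two generic conditions and the test pair -/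

/-- The words `X^i Y X^j` with `i, j < d` span the full matrix algebra, stated as: no nonzero
linear functional on matrices annihilates them all. -/
def Spanning {d : ℕ} (X Y : Op d) : Prop :=
  ∀ a : Fin d × Fin d → ℝ,
    (∀ x : Fin d × Fin d, ∑ i, ent (X ^ (x.1 : ℕ) * Y * X ^ (x.2 : ℕ)) i.1 i.2 * a i = 0) → a = 0

/-- No nonzero symmetric bilinear form takes, for each `n ≤ d * d`, the same pullback under
`B^n C` and under `C B^n`. The form is given by its Gram matrix in the standard basis. -/
def NoForm {d : ℕ} (B C : Op d) : Prop :=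
  ∀ a : Fin d × Fin d → ℝ, (∀ k l, a (k, l) = a (l, k)) →
    (∀ (n : Fin (d * d + 1)) (k l : Fin d),
      ∑ s, (ent (B ^ (n : ℕ) * C) s.1 k * ent (B ^ (n : ℕ) * C) s.2 l -
        ent (C * B ^ (n : ℕ)) s.1 k * ent (C * B ^ (n : ℕ)) s.2 l) * a s = 0) → a = 0

lemma analyticAt_pow_fst {d : ℕ} (n : ℕ) (p : Op d × Op d) :
    AnalyticAt ℝ (fun p : Op d × Op d => p.1 ^ n) p := analyticAt_fst.pow n

lemma analyticAt_pow_snd {d : ℕ} (n : ℕ) (p : Op d × Op d) :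
    AnalyticAt ℝ (fun p : Op d × Op d => p.2 ^ n) p := analyticAt_snd.pow n

/-- The test values: distinct primes, so that products of pairs determine the pair. -/
noncomputable def testVal {d : ℕ} (k : Fin d) : ℝ := (Nat.nth Nat.Prime k : ℝ)

/-- First test operator: diagonal, with distinct primes as eigenvalues. -/
noncomputable def testB (d : ℕ) : Op d :=
  Matrix.toEuclideanCLM (𝕜 := ℝ) (n := Fin d) (Matrix.diagonal testVal)

/-- Second test operator: all matrix entries are equal to `1`. -/
noncomputable def testC (d : ℕ) : Op d :=
  Matrix.toEuclideanCLM (𝕜 := ℝ) (n := Fin d) (Matrix.of fun _ _ => 1)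

lemma testVal_pos {d : ℕ} (k : Fin d) : 0 < testVal k := by
  have := (Nat.prime_nth_prime k).pos
  unfold testVal; exact_mod_cast this

lemma testVal_injective {d : ℕ} : Function.Injective (testVal : Fin d → ℝ) := by
  intro k l h
  have h' : Nat.nth Nat.Prime k = Nat.nth Nat.Prime l := by
    unfold testVal at h; exact_mod_cast h
  exact Fin.ext (Nat.nth_injective Nat.infinite_setOfPred_prime h')

lemma testVal_mul_eq {d : ℕ} {s t k l : Fin d}
    (h : testVal s * testVal t = testVal k * testVal l) :
    (s = k ∧ t = l) ∨ (s = l ∧ t = k) := by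
  have h' : Nat.nth Nat.Prime s * Nat.nth Nat.Prime t
      = Nat.nth Nat.Prime k * Nat.nth Nat.Prime l := by
    unfold testVal at h; exact_mod_cast h
  have hdvd : Nat.nth Nat.Prime s ∣ Nat.nth Nat.Prime k * Nat.nth Nat.Prime l :=
    h' ▸ Dvd.intro _ rfl
  have key : ∀ j : Fin d, Nat.nth Nat.Prime s ∣ Nat.nth Nat.Prime j → s = j := by
    intro j hj
    have := (Nat.prime_dvd_prime_iff_eq (Nat.prime_nth_prime _) (Nat.prime_nth_prime _)).1 hj
    exact Fin.ext (Nat.nth_injective Nat.infinite_setOfPred_prime this)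
  rcases (Nat.prime_nth_prime s).dvd_mul.1 hdvd with hk | hl
  · obtain rfl := key k hk
    exact Or.inl ⟨rfl, testVal_injective (mul_left_cancel₀ (testVal_pos s).ne' h)⟩
  · obtain rfl := key l hl
    rw [mul_comm (testVal k)] at h
    exact Or.inr ⟨rfl, testVal_injective (mul_left_cancel₀ (testVal_pos s).ne' h)⟩

lemma ones_pow_pos {d : ℕ} (m : ℕ) (hm : m ≠ 0) (k l : Fin d) :
    0 < ((Matrix.of fun _ _ => 1 : Matrix (Fin d) (Fin d) ℝ) ^ m) k l := by
  obtain ⟨n, rfl⟩ := Nat.exists_eq_succ_of_ne_zero hm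
  clear hm
  induction n generalizing k l with
  | zero => simp
  | succ n ih =>
    rw [pow_succ, Matrix.mul_apply]
    exact Finset.sum_pos (fun j _ => by simpa using ih k j) ⟨k, Finset.mem_univ _⟩

/-- The entries of `X^i Y X^j` at the test pair are `x_k^i Y_kl x_l^j` with distinct `x_k` and
nonzero `Y_kl`, so a Vandermonde argument in each index applies. -/
lemma spanning_test {d : ℕ} (m n : ℕ) (hm : m ≠ 0) (hn : n ≠ 0) :
    Spanning (testB d ^ m) (testC d ^ n) := by
  intro a ha
  set Y := (Matrix.of fun _ _ => 1 : Matrix (Fin d) (Fin d) ℝ) ^ n with hY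
  have hent : ∀ (i j : ℕ) (k l : Fin d),
      ent ((testB d ^ m) ^ i * testC d ^ n * (testB d ^ m) ^ j) k l
        = (testVal k ^ m) ^ i * Y k l * (testVal l ^ m) ^ j := by
    intro i j k l
    simp only [testB, testC, ← map_pow, ← map_mul, ent_toEuclideanCLM, Matrix.diagonal_pow,
      Matrix.mul_diagonal, Matrix.diagonal_mul, Pi.pow_apply, hY]
  have hinj : Function.Injective (fun k : Fin d => testVal k ^ m) := fun k l h =>
    testVal_injective ((pow_left_inj₀ (testVal_pos k).le (testVal_pos l).le hm).1 h)
  have h1 : ∀ j : Fin d, (fun k => ∑ l, Y k l * (testVal l ^ m) ^ (j : ℕ) * a (k, l)) = 0 := by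
    intro j
    refine Matrix.eq_zero_of_forall_pow_sum_mul_pow_eq_zero hinj fun i => ?_
    rw [← ha (i, j), Fintype.sum_prod_type]
    refine Finset.sum_congr rfl fun k _ => ?_
    rw [Finset.sum_mul]
    refine Finset.sum_congr rfl fun l _ => ?_
    rw [hent]; ring
  funext ⟨k, l⟩
  have h2 : (fun l => Y k l * a (k, l)) = 0 := by
    refine Matrix.eq_zero_of_forall_pow_sum_mul_pow_eq_zero hinj fun j => ?_
    refine Eq.trans ?_ (congrFun (h1 j) k)
    exact Finset.sum_congr rfl fun l _ => by ring
  exact (mul_eq_zero.1 (congrFun h2 l)).resolve_left (ne_of_gt (ones_pow_pos n hn k l))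

/-- With `χ (k, l) = x_k x_l` for the diagonal entries `x_k` of `testB`, the equations read
`∑ s, (χ s ^ n - χ (k, l) ^ n) * a s = 0`. Since `χ` separates unordered pairs, interpolation shows
that `a` vanishes. -/
lemma noForm_test {d : ℕ} (hd : 2 ≤ d) : NoForm (testB d) (testC d) := by
  intro a hsymm ha
  let χ : Fin d × Fin d → ℝ := fun s => testVal s.1 * testVal s.2
  have hχ : ∀ (n : ℕ), n < d * d + 1 → ∀ k l, ∑ s, (χ s ^ n - χ (k, l) ^ n) * a s = 0 := by
    intro n hn k l
    rw [← ha ⟨n, hn⟩ k l]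
    refine Finset.sum_congr rfl fun s _ => ?_
    simp only [testB, testC, ← map_pow, ← map_mul, ent_toEuclideanCLM, Matrix.diagonal_pow,
      Matrix.mul_diagonal, Matrix.diagonal_mul, Pi.pow_apply, χ, Matrix.of_apply, mul_pow]
    ring
  funext ⟨s, t⟩
  -- a pair `(k, l)` different from both `(s, t)` and `(t, s)`
  obtain ⟨k, l, hkl⟩ : ∃ k l, χ (s, t) ≠ χ (k, l) := by
    by_cases hst : s = t
    · obtain ⟨k, hk⟩ : ∃ k : Fin d, k ≠ s := by
        have : Nontrivial (Fin d) := Fin.nontrivial_iff_two_le.2 hd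
        exact exists_ne s
      refine ⟨k, k, fun h => ?_⟩
      rcases testVal_mul_eq h with h | h
      · exact hk h.1.symm
      · exact hk h.1.symm
    · refine ⟨s, s, fun h => ?_⟩
      rcases testVal_mul_eq h with h | h
      · exact hst h.2.symm
      · exact hst h.2.symm
  -- Lagrange basis polynomial separating the value `χ (s, t)` from all others
  let T : Finset ℝ := Finset.univ.image χ
  have hT : ∀ r, χ r ∈ T := fun r => Finset.mem_image_of_mem _ (Finset.mem_univ r)
  let p : Polynomial ℝ := Lagrange.basis T id (χ (s, t))
  have hinj : Set.InjOn (id : ℝ → ℝ) (T : Set ℝ) := Function.injective_id.injOn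
  have hdeg : p.natDegree < d * d + 1 := by
    have h1 := Lagrange.natDegree_basis hinj (hT (s, t))
    have h2 : T.card ≤ d * d := by
      refine Finset.card_image_le.trans ?_
      simp
    have : p.natDegree = T.card - 1 := h1
    omega
  have hpself : p.eval (χ (s, t)) = 1 := Lagrange.eval_basis_self hinj (hT (s, t))
  have hpne : ∀ r, χ (s, t) ≠ χ r → p.eval (χ r) = 0 := fun r hr =>
    Lagrange.eval_basis_of_ne (v := id) hr (hT r)
  have hp : ∑ r, p.eval (χ r) * a r = 0 := by
    have h0 : ∑ r, (p.eval (χ r) - p.eval (χ (k, l))) * a r = 0 := by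
      simp only [Polynomial.eval_eq_sum_range' hdeg, ← Finset.sum_sub_distrib, ← mul_sub,
        Finset.sum_mul, mul_assoc]
      rw [Finset.sum_comm]
      refine Finset.sum_eq_zero fun i hi => ?_
      rw [← Finset.mul_sum, hχ i (Finset.mem_range.1 hi) k l, mul_zero]
    rw [hpne _ hkl] at h0
    simpa using h0
  have hterm : ∀ r, p.eval (χ r) * a r = if r = (s, t) ∨ r = (t, s) then a (s, t) else 0 := by
    rintro ⟨u, v⟩
    split_ifs with h
    · rcases h with h | h
      · rw [h, hpself, one_mul]
      · rw [h, show χ (t, s) = χ (s, t) from mul_comm _ _, hpself, one_mul, hsymm]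
    · rw [hpne, zero_mul]
      intro h'
      rcases testVal_mul_eq h' with h' | h'
      · exact h (Or.inl (Prod.ext h'.1.symm h'.2.symm))
      · exact h (Or.inr (Prod.ext h'.2.symm h'.1.symm))
  simp only [hterm, Finset.sum_ite, Finset.sum_const_zero, add_zero, Finset.sum_const,
    nsmul_eq_mul] at hp
  refine (mul_eq_zero.1 hp).resolve_left ?_
  rw [Nat.cast_eq_zero, ← ne_eq, ← Nat.pos_iff_ne_zero, Finset.card_pos]
  exact ⟨(s, t), by simp⟩

lemma exists_analytic_spanning (d : ℕ) (m n : ℕ) (hm : m ≠ 0) (hn : n ≠ 0) :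
    ∃ f : Op d × Op d → ℝ, (∀ p, AnalyticAt ℝ f p) ∧ (∃ p₁, f p₁ ≠ 0) ∧
      ∀ p, f p ≠ 0 → Spanning (p.1 ^ m) (p.2 ^ n) := by
  obtain ⟨f, h1, h2, h3⟩ := exists_analytic_of_injective
    (fun (p : Op d × Op d) => Matrix.of fun (x i : Fin d × Fin d) =>
      ent ((p.1 ^ m) ^ (x.1 : ℕ) * p.2 ^ n * (p.1 ^ m) ^ (x.2 : ℕ)) i.1 i.2)
    (fun x i p => analyticAt_ent ((((analyticAt_pow_fst m p).pow _).mul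
      (analyticAt_pow_snd n p)).mul ((analyticAt_pow_fst m p).pow _)) _ _)
    (p₁ := (testB d, testC d)) (spanning_test m n hm hn)
  exact ⟨f, h1, ⟨_, h2⟩, h3⟩

lemma exists_analytic_noForm (d : ℕ) (hd : 2 ≤ d) :
    ∃ f : Op d × Op d → ℝ, (∀ p, AnalyticAt ℝ f p) ∧ (∃ p₁, f p₁ ≠ 0) ∧
      ∀ p, f p ≠ 0 → NoForm p.1 p.2 := by
  -- the equations `a (k, l) - a (l, k) = 0` are appended to the system in `NoForm`
  let c : Op d × Op d → Matrix ((Fin (d * d + 1) × Fin d × Fin d) ⊕ (Fin d × Fin d))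
      (Fin d × Fin d) ℝ := fun p => Matrix.of fun x s => Sum.elim
    (fun y : Fin (d * d + 1) × Fin d × Fin d =>
      ent (p.1 ^ (y.1 : ℕ) * p.2) s.1 y.2.1 * ent (p.1 ^ (y.1 : ℕ) * p.2) s.2 y.2.2 -
        ent (p.2 * p.1 ^ (y.1 : ℕ)) s.1 y.2.1 * ent (p.2 * p.1 ^ (y.1 : ℕ)) s.2 y.2.2)
    (fun y => (if s = y then 1 else 0) - (if s = y.swap then 1 else 0)) x
  have hc : ∀ (p : Op d × Op d) (a : Fin d × Fin d → ℝ),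
      (∀ x, ∑ i, c p x i * a i = 0) ↔ ((∀ k l, a (k, l) = a (l, k)) ∧
        (∀ (n : Fin (d * d + 1)) (k l : Fin d),
          ∑ s, (ent (p.1 ^ (n : ℕ) * p.2) s.1 k * ent (p.1 ^ (n : ℕ) * p.2) s.2 l -
            ent (p.2 * p.1 ^ (n : ℕ)) s.1 k * ent (p.2 * p.1 ^ (n : ℕ)) s.2 l) * a s = 0)) := by
    intro p a
    have hs : ∀ y : Fin d × Fin d, ∑ i, c p (Sum.inr y) i * a i = a y - a y.swap := by
      intro y
      simp [c, sub_mul, Finset.sum_sub_distrib]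
    constructor
    · intro h
      refine ⟨fun k l => ?_, fun n k l => h (Sum.inl (n, k, l))⟩
      have := h (Sum.inr (k, l))
      rw [hs] at this
      exact sub_eq_zero.1 this
    · rintro ⟨h1, h2⟩ (⟨n, k, l⟩ | ⟨k, l⟩)
      · exact h2 n k l
      · rw [hs]; exact sub_eq_zero.2 (h1 k l)
  obtain ⟨f, h1, h2, h3⟩ := exists_analytic_of_injective c
    (by
      rintro (⟨n, k, l⟩ | ⟨k, l⟩) s p
      · have e1 : AnalyticAt ℝ (fun p : Op d × Op d => p.1 ^ (n : ℕ) * p.2) p :=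
          (analyticAt_pow_fst _ p).mul analyticAt_snd
        have e2 : AnalyticAt ℝ (fun p : Op d × Op d => p.2 * p.1 ^ (n : ℕ)) p :=
          analyticAt_snd.mul (analyticAt_pow_fst _ p)
        exact ((analyticAt_ent e1 _ _).mul (analyticAt_ent e1 _ _)).sub
          ((analyticAt_ent e2 _ _).mul (analyticAt_ent e2 _ _))
      · exact analyticAt_const)
    (p₁ := (testB d, testC d))
    (fun a ha => noForm_test hd a ((hc _ a).1 ha).1 ((hc _ a).1 ha).2)
  exact ⟨f, h1, ⟨_, h2⟩, fun p hp a ha hb => h3 p hp a ((hc p a).2 ⟨ha, hb⟩)⟩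

/-! ### Projective space -/

/-- The projective space of `ℝ^d`. -/
abbrev Pr (d : ℕ) := Projectivization ℝ (Eu d)

instance (d : ℕ) : BorelSpace (Pr d) := ⟨rfl⟩

lemma projectiveMap_mk {d : ℕ} (B : (Op d)ˣ) (v : Eu d) (hv : v ≠ 0)
    (hBv : (B : Op d) v ≠ 0) :
    projectiveMap B (Projectivization.mk ℝ v hv) = Projectivization.mk ℝ ((B : Op d) v) hBv :=
  rfl

lemma unit_apply_ne_zero {d : ℕ} (B : (Op d)ˣ) {v : Eu d} (hv : v ≠ 0) : (B : Op d) v ≠ 0 := by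
  intro h
  apply hv
  have : ((B⁻¹ : (Op d)ˣ) : Op d) ((B : Op d) v) = v := by
    rw [← mul_apply_eq_comp, Units.inv_mul, one_apply_eq_self]
  rw [← this, h, map_zero]

lemma projectiveMap_mul {d : ℕ} (B C : (Op d)ˣ) :
    projectiveMap (B * C) = projectiveMap B ∘ projectiveMap C := by
  funext x
  induction x using Projectivization.ind with
  | h v hv => rfl

lemma projectiveMap_one {d : ℕ} : projectiveMap (1 : (Op d)ˣ) = id := by
  funext x
  induction x using Projectivization.ind with
  | h v hv => rfl

lemma projectiveMap_pow {d : ℕ} (B : (Op d)ˣ) (n : ℕ) :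
    projectiveMap (B ^ n) = (projectiveMap B)^[n] := by
  induction n with
  | zero => simp [projectiveMap_one]
  | succ n ih => rw [pow_succ, projectiveMap_mul, ih, Function.iterate_succ]

lemma continuous_projectiveMap {d : ℕ} (B : (Op d)ˣ) : Continuous (projectiveMap B) := by
  have hq : Topology.IsQuotientMap
      (fun v : {v : Eu d // v ≠ 0} => Projectivization.mk ℝ v.1 v.2) := isQuotientMap_quot_mk
  rw [hq.continuous_iff]
  have : (projectiveMap B ∘ fun v : {v : Eu d // v ≠ 0} => Projectivization.mk ℝ v.1 v.2)
      = (fun v : {v : Eu d // v ≠ 0} => Projectivization.mk ℝ v.1 v.2) ∘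
        (fun v => ⟨(B : Op d) v.1, unit_apply_ne_zero B v.2⟩) := rfl
  rw [this]
  exact hq.continuous.comp (((B : Op d).continuous.comp continuous_subtype_val).subtype_mk _)

/-- The projective subspace of a linear subspace `V`: the set of lines contained in `V`. -/
def projSet {d : ℕ} (V : Submodule ℝ (Eu d)) : Set (Pr d) := {x | x.submodule ≤ V}

lemma mk_mem_projSet {d : ℕ} (V : Submodule ℝ (Eu d)) (v : Eu d) (hv : v ≠ 0) :
    Projectivization.mk ℝ v hv ∈ projSet V ↔ v ∈ V := by
  show (Projectivization.mk ℝ v hv).submodule ≤ V ↔ _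
  rw [Projectivization.submodule_mk, Submodule.span_singleton_le_iff_mem]

lemma measurableSet_projSet {d : ℕ} (V : Submodule ℝ (Eu d)) : MeasurableSet (projSet V) := by
  refine IsClosed.measurableSet ?_
  have hq : Topology.IsQuotientMap
      (fun v : {v : Eu d // v ≠ 0} => Projectivization.mk ℝ v.1 v.2) := isQuotientMap_quot_mk
  rw [← hq.isClosed_preimage]
  have : (fun v : {v : Eu d // v ≠ 0} => Projectivization.mk ℝ v.1 v.2) ⁻¹' projSet V
      = Subtype.val ⁻¹' (V : Set (Eu d)) := by
    ext v; exact mk_mem_projSet V v.1 v.2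
  rw [this]
  exact V.closed_of_finiteDimensional.preimage continuous_subtype_val

/-! ### Measures charging a proper subspace -/

/-- If a probability measure `μ` charges a proper subspace, then some nonzero proper subspace is
periodic under every operator preserving `μ`: a minimal subspace of positive measure works, by
Poincaré recurrence. -/
lemma exists_periodic_subspace {d : ℕ} {μ : Measure (Pr d)} [IsProbabilityMeasure μ]
    {W : Submodule ℝ (Eu d)} (hW : W ≠ ⊤) (hμW : μ (projSet W) ≠ 0) :
    ∃ V : Submodule ℝ (Eu d), V ≠ ⊤ ∧ V ≠ ⊥ ∧
      ∀ B : (Op d)ˣ, MeasurePreserving (projectiveMap B) μ μ →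
        ∃ m : ℕ, m ≠ 0 ∧ ∀ v ∈ V, ((B : Op d) ^ m) v ∈ V := by
  obtain ⟨V, ⟨hVtop, hVμ⟩, hmin⟩ := WellFounded.has_min
    (wellFounded_lt (α := Submodule ℝ (Eu d)))
    {V | V ≠ ⊤ ∧ μ (projSet V) ≠ 0} ⟨W, hW, hμW⟩
  refine ⟨V, hVtop, ?_, fun B hB => ?_⟩
  · rintro rfl
    apply hVμ
    convert measure_empty (μ := μ)
    ext x
    induction x using Projectivization.ind with
    | h v hv => simp [mk_mem_projSet, hv]
  · obtain ⟨m, hm, hμm⟩ := hB.conservative.exists_gt_measure_inter_ne_zero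
      (measurableSet_projSet V).nullMeasurableSet hVμ 0
    refine ⟨m, by omega, ?_⟩
    let U : Submodule ℝ (Eu d) := V ⊓ V.comap ((B : Op d) ^ m).toLinearMap
    have hU : projSet V ∩ (projectiveMap B)^[m] ⁻¹' projSet V = projSet U := by
      rw [← projectiveMap_pow]
      ext x
      induction x using Projectivization.ind with
      | h v hv =>
        rw [Set.mem_inter_iff, Set.mem_preimage,
          projectiveMap_mk _ _ _ (unit_apply_ne_zero _ hv), mk_mem_projSet, mk_mem_projSet,
          mk_mem_projSet, Units.val_pow_eq_pow_val]
        rfl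
    have hUV : U ≤ V := inf_le_left
    have hUeq : U = V := by
      by_contra hne
      refine hmin U ⟨fun h => hVtop (top_le_iff.1 (h ▸ hUV)), hU ▸ hμm⟩ (lt_of_le_of_ne hUV hne)
    intro v hv
    rw [← hUeq] at hv
    exact hv.2

lemma exists_orthogonal {d : ℕ} {V : Submodule ℝ (Eu d)} (hV : V ≠ ⊤) :
    ∃ w : Eu d, w ≠ 0 ∧ ∀ v ∈ V, inner ℝ w v = 0 := by
  have : Vᗮ ≠ ⊥ := fun h => hV (Submodule.orthogonal_eq_bot_iff.1 h)
  obtain ⟨w, hw, hw0⟩ := Submodule.exists_mem_ne_zero_of_ne_bot this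
  exact ⟨w, hw0, fun v hv => Submodule.inner_left_of_mem_orthogonal hv hw⟩

lemma inner_eq_sum_ent {d : ℕ} (T : Op d) (w v : Eu d) :
    inner ℝ w (T v) = ∑ i : Fin d × Fin d, ent T i.1 i.2 * (w i.1 * v i.2) := by
  rw [Fintype.sum_prod_type, PiLp.inner_apply]
  refine Finset.sum_congr rfl fun k _ => ?_
  rw [apply_eq_sum_ent, RCLike.inner_apply, Finset.sum_mul]
  refine Finset.sum_congr rfl fun l _ => ?_
  simp only [conj_trivial]
  ring

/-- For `v ∈ V` and `w` orthogonal to `V`, the functional `T ↦ ⟨w, T v⟩` annihilates all words in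
`X` and `Y`. -/
lemma Spanning.no_invariant {d : ℕ} {X Y : Op d} (h : Spanning X Y) {V : Submodule ℝ (Eu d)}
    (hV : V ≠ ⊤) (hV' : V ≠ ⊥) (hX : ∀ v ∈ V, X v ∈ V) (hY : ∀ v ∈ V, Y v ∈ V) : False := by
  obtain ⟨w, hw0, hw⟩ := exists_orthogonal hV
  obtain ⟨v, hv, hv0⟩ := Submodule.exists_mem_ne_zero_of_ne_bot hV'
  have hXn : ∀ (n : ℕ), ∀ u ∈ V, (X ^ n) u ∈ V := by
    intro n
    induction n with
    | zero => intro u hu; simpa using hu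
    | succ n ih => intro u hu; rw [pow_succ]; exact ih _ (hX u hu)
  have ha := h (fun i => w i.1 * v i.2) (fun x => by
    rw [← inner_eq_sum_ent]
    exact hw _ (hXn _ _ (hY _ (hXn _ _ hv))))
  obtain ⟨k, hk⟩ : ∃ k, w k ≠ 0 := by
    by_contra! hc; exact hw0 (by ext k; simpa using hc k)
  obtain ⟨l, hl⟩ : ∃ l, v l ≠ 0 := by
    by_contra! hc; exact hv0 (by ext k; simpa using hc k)
  exact mul_ne_zero hk hl (congrFun ha (k, l))

/-! ### Furstenberg's lemma -/

/-- The function `[v] ↦ |⟨w, v⟩| / ‖v‖` on projective space; it vanishes exactly on the projective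
hyperplane orthogonal to `w`. -/
noncomputable def height {d : ℕ} (w : Eu d) : Pr d → ℝ :=
  Projectivization.lift (fun v : {v : Eu d // v ≠ 0} => |inner ℝ w v.1| / ‖v.1‖) (by
    rintro ⟨a, ha⟩ ⟨b, hb⟩ t h
    simp only at h
    have ht : t ≠ 0 := by rintro rfl; simp at h; exact ha h
    simp only [h, inner_smul_right, abs_mul, norm_smul, Real.norm_eq_abs]
    rw [mul_div_mul_left _ _ (abs_ne_zero.2 ht)])

lemma height_mk {d : ℕ} (w v : Eu d) (hv : v ≠ 0) :
    height w (Projectivization.mk ℝ v hv) = |inner ℝ w v| / ‖v‖ := rfl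

lemma continuous_height {d : ℕ} (w : Eu d) : Continuous (height w) := by
  have hq : Topology.IsQuotientMap
      (fun v : {v : Eu d // v ≠ 0} => Projectivization.mk ℝ v.1 v.2) := isQuotientMap_quot_mk
  rw [hq.continuous_iff]
  show Continuous fun v : {v : Eu d // v ≠ 0} => |inner ℝ w v.1| / ‖v.1‖
  refine Continuous.div (by fun_prop) (by fun_prop) fun v => norm_ne_zero_iff.2 v.2

lemma height_nonneg {d : ℕ} (w : Eu d) (x : Pr d) : 0 ≤ height w x := by
  induction x using Projectivization.ind with
  | h v hv => rw [height_mk]; positivity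

lemma height_le {d : ℕ} (w : Eu d) (x : Pr d) : height w x ≤ ‖w‖ := by
  induction x using Projectivization.ind with
  | h v hv =>
    rw [height_mk, div_le_iff₀ (norm_pos_iff.2 hv)]
    exact abs_real_inner_le_norm w v

/-- Furstenberg's lemma: if `μ` charges no proper subspace, then a sequence of measure preserving
operators, rescaled, cannot converge to a nonzero singular operator `A`. Almost every line would
be attracted to the projective subspace of the range of `A`, which would then carry `μ`. -/
lemma furstenberg {d : ℕ} {μ : Measure (Pr d)} [IsProbabilityMeasure μ]
    (hμ : ∀ W : Submodule ℝ (Eu d), W ≠ ⊤ → μ (projSet W) = 0)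
    (g : ℕ → (Op d)ˣ) (hg : ∀ n, MeasurePreserving (projectiveMap (g n)) μ μ)
    (c : ℕ → ℝ) (hc : ∀ n, c n ≠ 0) {A : Op d}
    (hA : Filter.Tendsto (fun n => c n • (g n : Op d)) Filter.atTop (nhds A))
    (hA0 : A ≠ 0) (hdet : A.det = 0) : False := by
  have hker : LinearMap.ker A.toLinearMap ≠ ⊤ := by
    intro h
    apply hA0
    ext1 v
    have : v ∈ LinearMap.ker A.toLinearMap := h ▸ Submodule.mem_top
    exact this
  have hrange : LinearMap.range A.toLinearMap ≠ ⊤ := by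
    have h1 : LinearMap.range A.toLinearMap < ⊤ := LinearMap.range_lt_top_of_det_eq_zero hdet
    exact h1.ne
  obtain ⟨w, hw0, hw⟩ := exists_orthogonal hrange
  have hlim : Filter.Tendsto (fun n => ∫ x, height w (projectiveMap (g n) x) ∂μ) Filter.atTop
      (nhds (∫ _, (0 : ℝ) ∂μ)) := by
    refine tendsto_integral_of_dominated_convergence (fun _ => ‖w‖) (fun n => ?_)
      (integrable_const _) (fun n => ?_) ?_
    · exact ((continuous_height w).comp
        (continuous_projectiveMap (g n))).measurable.aestronglyMeasurable
    · refine Filter.Eventually.of_forall fun x => ?_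
      rw [Real.norm_eq_abs, abs_of_nonneg (height_nonneg w _)]
      exact height_le w _
    · have hnull := hμ _ hker
      rw [measure_eq_zero_iff_ae_notMem] at hnull
      filter_upwards [hnull] with x hx
      induction x using Projectivization.ind with
      | h v hv =>
        rw [mk_mem_projSet] at hx
        have hAv : A v ≠ 0 := hx
        have hv' : Filter.Tendsto (fun n => (c n • (g n : Op d)) v) Filter.atTop
            (nhds (A v)) :=
          ((ContinuousLinearMap.apply ℝ (Eu d) v).continuous.tendsto A).comp hA
        have h1 : Filter.Tendsto (fun n => |inner ℝ w ((c n • (g n : Op d)) v)| /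
            ‖(c n • (g n : Op d)) v‖) Filter.atTop (nhds (|inner ℝ w (A v)| / ‖A v‖)) :=
          (Filter.Tendsto.inner tendsto_const_nhds hv').abs.div hv'.norm (norm_ne_zero_iff.2 hAv)
        rw [hw (A v) ⟨v, rfl⟩, abs_zero, zero_div] at h1
        refine h1.congr fun n => ?_
        rw [projectiveMap_mk _ _ _ (unit_apply_ne_zero _ hv), height_mk,
          smul_apply, inner_smul_right, abs_mul, norm_smul,
          Real.norm_eq_abs, mul_div_mul_left _ _ (abs_ne_zero.2 (hc n))]
  have hconst : ∀ n, ∫ x, height w (projectiveMap (g n) x) ∂μ = ∫ x, height w x ∂μ := by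
    intro n
    have h1 := integral_map (μ := μ) (hg n).measurable.aemeasurable (f := height w)
      ((continuous_height w).measurable.aestronglyMeasurable)
    rw [(hg n).map_eq] at h1
    exact h1.symm
  simp only [hconst, integral_zero] at hlim
  have hzero : ∫ x, height w x ∂μ = 0 := tendsto_nhds_unique tendsto_const_nhds hlim
  have hint : Integrable (height w) μ := by
    refine Integrable.mono' (integrable_const ‖w‖)
      (continuous_height w).measurable.aestronglyMeasurable (Filter.Eventually.of_forall fun x => ?_)
    rw [Real.norm_eq_abs, abs_of_nonneg (height_nonneg w _)]
    exact height_le w _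
  rw [integral_eq_zero_iff_of_nonneg (height_nonneg w) hint] at hzero
  -- `height w = 0` a.e. means that the hyperplane orthogonal to `w` has full measure
  have hH : (ℝ ∙ w)ᗮ ≠ ⊤ := by
    intro h
    have : w ∈ (ℝ ∙ w)ᗮ := h ▸ Submodule.mem_top
    rw [Submodule.mem_orthogonal_singleton_iff_inner_right] at this
    exact hw0 (inner_self_eq_zero.1 this)
  have hnull := hμ _ hH
  rw [measure_eq_zero_iff_ae_notMem] at hnull
  obtain ⟨x, hx, hx'⟩ := (hzero.and hnull).exists
  induction x using Projectivization.ind with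
  | h v hv =>
    rw [mk_mem_projSet, Submodule.mem_orthogonal_singleton_iff_inner_right] at hx'
    rw [height_mk] at hx
    rcases div_eq_zero_iff.1 hx with h | h
    · exact hx' (abs_eq_zero.1 h)
    · exact hv (norm_eq_zero.1 h)

/-! ### The bounded stabilizer and its invariant inner product -/

lemma det_smul_op {d : ℕ} (c : ℝ) (A : Op d) : (c • A).det = c ^ d * A.det := by
  have h := LinearMap.det_smul c A.toLinearMap
  rw [finrank_euclideanSpace_fin] at h
  exact h

lemma det_mul_op {d : ℕ} (A B : Op d) : (A * B).det = A.det * B.det :=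
  LinearMap.det_comp A.toLinearMap B.toLinearMap

lemma det_one_op {d : ℕ} : (1 : Op d).det = 1 := LinearMap.det_id

/-- The operators of determinant `±1` whose projective action preserves `μ`. -/
noncomputable def stab {d : ℕ} (μ : Measure (Pr d)) : Subgroup (Op d)ˣ where
  carrier := {g | MeasurePreserving (projectiveMap g) μ μ ∧ |(g : Op d).det| = 1}
  mul_mem' := by
    rintro g h ⟨hg, hg'⟩ ⟨hh, hh'⟩
    refine ⟨projectiveMap_mul g h ▸ hg.comp hh, ?_⟩
    rw [Units.val_mul, det_mul_op, abs_mul, hg', hh', one_mul]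
  one_mem' := by
    refine ⟨projectiveMap_one (d := d) ▸ MeasurePreserving.id μ, ?_⟩
    rw [Units.val_one, det_one_op, abs_one]
  inv_mem' := by
    rintro g ⟨hg, hg'⟩
    refine ⟨⟨(continuous_projectiveMap _).measurable, ?_⟩, ?_⟩
    · conv_lhs => rw [← hg.map_eq]
      rw [Measure.map_map (continuous_projectiveMap _).measurable hg.measurable,
        ← projectiveMap_mul, inv_mul_cancel, projectiveMap_one, Measure.map_id]
    · have h := congrArg abs (det_mul_op (g : Op d) ((g⁻¹ : (Op d)ˣ) : Op d))
      rw [Units.mul_inv, det_one_op, abs_mul, hg', one_mul, abs_one] at h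
      exact h.symm

/-- Normalising an unbounded sequence in `stab μ` gives operators of norm `1` whose determinants tend
to `0`; a limit point of it is excluded by `furstenberg`. -/
lemma stab_bounded {d : ℕ} (hd : 2 ≤ d) {μ : Measure (Pr d)} [IsProbabilityMeasure μ]
    (hμ : ∀ W : Submodule ℝ (Eu d), W ≠ ⊤ → μ (projSet W) = 0) :
    ∃ C : ℝ, ∀ g ∈ stab μ, ‖(g : Op d)‖ ≤ C := by
  by_contra! hcon
  choose g hg hgn using fun n : ℕ => hcon ((n : ℝ) + 1)
  have hpos : ∀ n, 0 < ‖(g n : Op d)‖ := fun n => lt_trans (by positivity) (hgn n)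
  let c : ℕ → ℝ := fun n => ‖(g n : Op d)‖⁻¹
  have hc : ∀ n, c n ≠ 0 := fun n => inv_ne_zero (hpos n).ne'
  have hsph : ∀ n, c n • (g n : Op d) ∈ Metric.sphere (0 : Op d) 1 := by
    intro n
    rw [mem_sphere_zero_iff_norm, norm_smul, norm_inv, norm_norm, inv_mul_cancel₀ (hpos n).ne']
  obtain ⟨A, hA, φ, hφ, hlim⟩ := (isCompact_sphere (0 : Op d) 1).tendsto_subseq hsph
  have hA0 : A ≠ 0 := by
    rintro rfl
    simp at hA
  have hc0 : Filter.Tendsto c Filter.atTop (nhds 0) := by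
    refine Filter.Tendsto.inv_tendsto_atTop ?_
    refine Filter.tendsto_atTop_mono (fun n => ?_) tendsto_natCast_atTop_atTop
    linarith [hgn n]
  have hdet : A.det = 0 := by
    have h1 : Filter.Tendsto (fun n => |(c (φ n) • (g (φ n) : Op d)).det|) Filter.atTop
        (nhds |A.det|) := ((ContinuousLinearMap.continuous_det.tendsto A).comp hlim).abs
    have h2 : Filter.Tendsto (fun n => |c (φ n)| ^ d) Filter.atTop (nhds (|0| ^ d)) :=
      ((hc0.comp hφ.tendsto_atTop).abs).pow d
    have h3 : ∀ n, |(c (φ n) • (g (φ n) : Op d)).det| = |c (φ n)| ^ d := by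
      intro n
      rw [det_smul_op, abs_mul, abs_pow, (hg (φ n)).2, mul_one]
    simp only [h3] at h1
    have := tendsto_nhds_unique h1 h2
    rw [abs_zero, zero_pow (by omega)] at this
    exact abs_eq_zero.1 this
  exact furstenberg hμ (fun n => g (φ n)) (fun n => (hg (φ n)).1) (fun n => c (φ n))
    (fun n => hc _) hlim hA0 hdet

/-- A bounded group of operators is relatively compact, hence preserves an inner product, obtained
by averaging the Euclidean one over the Haar measure of its closure. -/
lemma exists_invariant_form {d : ℕ} (H : Subgroup (Op d)ˣ) {C : ℝ}
    (hC : ∀ g ∈ H, ‖(g : Op d)‖ ≤ C) :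
    ∃ q : Eu d →ₗ[ℝ] Eu d →ₗ[ℝ] ℝ, (∀ x y, q x y = q y x) ∧ (∀ x, x ≠ 0 → 0 < q x x) ∧
      ∀ g ∈ H, ∀ x y, q ((g : Op d) x) ((g : Op d) y) = q x y := by
  let K := H.topologicalClosure
  have hKC : ∀ g ∈ K, ‖(g : Op d)‖ ≤ C := by
    have hcl : IsClosed {g : (Op d)ˣ | ‖(g : Op d)‖ ≤ C} :=
      isClosed_le Units.continuous_val.norm continuous_const
    intro g hg
    exact closure_minimal (fun g hg => hC g hg) hcl hg
  have hKcpt : IsCompact (K : Set (Op d)ˣ) := by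
    have h1 : IsCompact (Metric.closedBall (0 : Op d) C ×ˢ
        (MulOpposite.opHomeomorph '' Metric.closedBall (0 : Op d) C)) :=
      (isCompact_closedBall _ _).prod
        ((isCompact_closedBall _ _).image MulOpposite.opHomeomorph.continuous)
    refine (Units.isClosedEmbedding_embedProduct.isCompact_preimage h1).of_isClosed_subset
      H.isClosed_topologicalClosure ?_
    intro g hg
    refine ⟨by simpa using hKC g hg, ⟨((g⁻¹ : (Op d)ˣ) : Op d), ?_, rfl⟩⟩
    simpa using hKC _ (K.inv_mem hg)
  have : CompactSpace K := isCompact_iff_compactSpace.1 hKcpt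
  borelize ↥K
  let ν : Measure K := Measure.haar
  let F : Eu d → Eu d → K → ℝ := fun x y h =>
    inner ℝ ((((h : (Op d)ˣ)⁻¹ : (Op d)ˣ) : Op d) x) ((((h : (Op d)ˣ)⁻¹ : (Op d)ˣ) : Op d) y)
  have hFcont : ∀ x y, Continuous (F x y) := by
    intro x y
    have hinv : Continuous fun h : K => ((((h : (Op d)ˣ)⁻¹ : (Op d)ˣ) : Op d)) :=
      Units.continuous_val.comp (continuous_inv.comp continuous_subtype_val)
    exact (hinv.clm_apply continuous_const).inner (hinv.clm_apply continuous_const)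
  have hFint : ∀ x y, Integrable (F x y) ν := fun x y =>
    (hFcont x y).integrable_of_hasCompactSupport (HasCompactSupport.of_compactSpace _)
  let q : Eu d →ₗ[ℝ] Eu d →ₗ[ℝ] ℝ := LinearMap.mk₂ ℝ (fun x y => ∫ h, F x y h ∂ν)
    (fun x x' y => by
      rw [← integral_add (hFint _ _) (hFint _ _)]
      simp only [F, map_add, inner_add_left])
    (fun c x y => by
      rw [smul_eq_mul, ← integral_const_mul]
      simp only [F, map_smul, real_inner_smul_left])
    (fun x y y' => by
      rw [← integral_add (hFint _ _) (hFint _ _)]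
      simp only [F, map_add, inner_add_right])
    (fun c x y => by
      rw [smul_eq_mul, ← integral_const_mul]
      simp only [F, map_smul, real_inner_smul_right])
  have hq : ∀ x y, q x y = ∫ h, F x y h ∂ν := fun x y => rfl
  refine ⟨q, fun x y => ?_, fun x hx => ?_, fun g hg x y => ?_⟩
  · rw [hq, hq]
    exact integral_congr_ae (Filter.Eventually.of_forall fun h => real_inner_comm _ _)
  · rw [hq]
    have hpos : ∀ h, 0 < F x x h := fun h =>
      real_inner_self_pos.2 (unit_apply_ne_zero _ hx)
    rw [integral_pos_iff_support_of_nonneg (fun h => (hpos h).le) (hFint x x)]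
    have : Function.support (F x x) = Set.univ := by
      ext h; simp [(hpos h).ne']
    rw [this]
    exact isOpen_univ.measure_pos ν ⟨1, Set.mem_univ _⟩
  · rw [hq, hq]
    let k : K := ⟨g, H.le_topologicalClosure hg⟩
    rw [← integral_mul_left_eq_self (F ((g : Op d) x) ((g : Op d) y)) k]
    refine integral_congr_ae (Filter.Eventually.of_forall fun h => ?_)
    have key : ∀ z : Eu d, ((((k * h : K) : (Op d)ˣ)⁻¹ : (Op d)ˣ) : Op d) ((g : Op d) z)
        = (((h : (Op d)ˣ)⁻¹ : (Op d)ˣ) : Op d) z := by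
      intro z
      rw [← mul_apply_eq_comp, ← Units.val_mul]
      congr 2
      simp [k]
    simp only [F, key]

/-- Every invertible operator is a scalar multiple of one of determinant `±1`, which has the same
projective action; hence a form invariant under `stab μ` is scaled by all measure preserving operators. -/
lemma exists_scaling {d : ℕ} (hd : 2 ≤ d) {μ : Measure (Pr d)}
    {q : Eu d →ₗ[ℝ] Eu d →ₗ[ℝ] ℝ}
    (hq : ∀ g ∈ stab μ, ∀ x y, q ((g : Op d) x) ((g : Op d) y) = q x y)
    (B : (Op d)ˣ) (hB : MeasurePreserving (projectiveMap B) μ μ) :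
    ∃ r : ℝ, ∀ x y, q ((B : Op d) x) ((B : Op d) y) = r * q x y := by
  have hdet : (B : Op d).det ≠ 0 := by
    intro h
    have h1 := det_mul_op (B : Op d) ((B⁻¹ : (Op d)ˣ) : Op d)
    rw [Units.mul_inv, det_one_op, h, zero_mul] at h1
    exact one_ne_zero h1
  have hpos : 0 < |(B : Op d).det| := abs_pos.2 hdet
  let c : ℝ := |(B : Op d).det| ^ (-(1 / (d : ℝ)))
  have hc : 0 < c := Real.rpow_pos_of_pos hpos _
  have hcd : c ^ d * |(B : Op d).det| = 1 := by
    rw [← Real.rpow_natCast, ← Real.rpow_mul hpos.le]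
    have : -(1 / (d : ℝ)) * d = -1 := by
      have : (d : ℝ) ≠ 0 := by positivity
      field_simp
    rw [this, Real.rpow_neg_one, inv_mul_cancel₀ hpos.ne']
  let g : (Op d)ˣ := Units.map (algebraMap ℝ (Op d)).toMonoidHom (Units.mk0 c hc.ne') * B
  have hg : (g : Op d) = c • (B : Op d) := by
    ext1 x
    rfl
  have hmap : projectiveMap g = projectiveMap B := by
    funext x
    induction x using Projectivization.ind with
    | h v hv =>
      rw [projectiveMap_mk _ _ _ (unit_apply_ne_zero _ hv),
        projectiveMap_mk _ _ _ (unit_apply_ne_zero _ hv), Projectivization.mk_eq_mk_iff']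
      exact ⟨c, by rw [hg]; rfl⟩
  have hgs : g ∈ stab μ := by
    refine ⟨hmap ▸ hB, ?_⟩
    rw [hg, det_smul_op, abs_mul, abs_pow, abs_of_pos hc, hcd]
  refine ⟨(c * c)⁻¹, fun x y => ?_⟩
  have h := hq g hgs x y
  simp only [hg, smul_apply, map_smul, LinearMap.smul_apply, smul_eq_mul] at h
  rw [← h]
  field_simp

lemma form_apply_eq_sum {d : ℕ} (q : Eu d →ₗ[ℝ] Eu d →ₗ[ℝ] ℝ) (x y : Eu d) :
    q x y = ∑ s : Fin d × Fin d, x s.1 * y s.2 *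
      q (EuclideanSpace.single s.1 1) (EuclideanSpace.single s.2 1) := by
  have hv : ∀ v : Eu d, v = ∑ l, v l • EuclideanSpace.single l (1 : ℝ) := by
    intro v
    ext j; simp [Finset.sum_apply, Pi.single_apply]
  conv_lhs => rw [hv x, hv y]
  simp only [map_sum, map_smul, LinearMap.sum_apply, LinearMap.smul_apply, smul_eq_mul,
    Fintype.sum_prod_type, Finset.mul_sum]
  rw [Finset.sum_comm]
  refine Finset.sum_congr rfl fun s _ => Finset.sum_congr rfl fun t _ => ?_
  ring

/-- Operators satisfying `NoForm` do not scale a common inner product: `B^n C` and `C B^n` would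
scale it by the same factor. -/
lemma NoForm.false {d : ℕ} (hd : 2 ≤ d) {B C : Op d} (h : NoForm B C)
    {q : Eu d →ₗ[ℝ] Eu d →ₗ[ℝ] ℝ} (hsymm : ∀ x y, q x y = q y x)
    (hpos : ∀ x, x ≠ 0 → 0 < q x x) {r t : ℝ} (hB : ∀ x y, q (B x) (B y) = r * q x y)
    (hC : ∀ x y, q (C x) (C y) = t * q x y) : False := by
  have hBn : ∀ (n : ℕ) x y, q ((B ^ n) x) ((B ^ n) y) = r ^ n * q x y := by
    intro n
    induction n with
    | zero => intro x y; simp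
    | succ n ih =>
      intro x y
      rw [pow_succ, mul_apply_eq_comp, mul_apply_eq_comp, ih, hB]
      ring
  have ha := h (fun s => q (EuclideanSpace.single s.1 1) (EuclideanSpace.single s.2 1))
    (fun k l => hsymm _ _) (fun n k l => by
      simp only [sub_mul, Finset.sum_sub_distrib]
      have e : ∀ T : Op d, ∑ s : Fin d × Fin d, ent T s.1 k * ent T s.2 l *
          q (EuclideanSpace.single s.1 1) (EuclideanSpace.single s.2 1) =
          q (T (EuclideanSpace.single k 1)) (T (EuclideanSpace.single l 1)) := fun T =>
        (form_apply_eq_sum q _ _).symm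
      rw [e, e]
      simp only [mul_apply_eq_comp, hBn, hC]
      ring)
  let k : Fin d := ⟨0, by omega⟩
  have h1 := hpos (EuclideanSpace.single k (1 : ℝ)) (by simp)
  exact h1.ne' (congrFun ha (k, k))

lemma no_common_invariant {d : ℕ} (hd : 2 ≤ d) (B C : (Op d)ˣ)
    (h1 : ∀ m n : ℕ, m ≠ 0 → n ≠ 0 → Spanning ((B : Op d) ^ m) ((C : Op d) ^ n))
    (h2 : NoForm (B : Op d) (C : Op d)) (μ : Measure (Pr d)) [IsProbabilityMeasure μ]
    (hB : MeasurePreserving (projectiveMap B) μ μ)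
    (hC : MeasurePreserving (projectiveMap C) μ μ) : False := by
  by_cases hμ : ∀ W : Submodule ℝ (Eu d), W ≠ ⊤ → μ (projSet W) = 0
  · obtain ⟨K, hK⟩ := stab_bounded hd hμ
    obtain ⟨q, hsymm, hpos, hinv⟩ := exists_invariant_form (stab μ) hK
    obtain ⟨r, hr⟩ := exists_scaling hd hinv B hB
    obtain ⟨t, ht⟩ := exists_scaling hd hinv C hC
    exact h2.false hd hsymm hpos hr ht
  · push Not at hμ
    obtain ⟨W, hW, hμW⟩ := hμ
    obtain ⟨V, hV, hV', hper⟩ := exists_periodic_subspace hW hμW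
    obtain ⟨m, hm, hBm⟩ := hper B hB
    obtain ⟨n, hn, hCn⟩ := hper C hC
    exact (h1 m n hm hn).no_invariant hV hV' hBm hCn

/-- **Generic pairs of projective maps admit no common invariant measure.**
For every `d ≥ 2` there is a dense `G_δ` subset `𝒢` of `GL(d,ℝ) × GL(d,ℝ)` such that for
`(B, B′) ∈ 𝒢` no Borel probability measure on the projective space `P(ℝ^d)` is invariant
under both induced maps. -/
theorem generic_pair_no_common_invariant_projective_measure (d : ℕ) (hd : 2 ≤ d) :
    ∃ 𝒢 : Set ((EuclideanSpace ℝ (Fin d) →L[ℝ] EuclideanSpace ℝ (Fin d))ˣ ×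
        (EuclideanSpace ℝ (Fin d) →L[ℝ] EuclideanSpace ℝ (Fin d))ˣ),
      Dense 𝒢 ∧ IsGδ 𝒢 ∧
      ∀ p ∈ 𝒢,
        ¬ ∃ μ : Measure (Projectivization ℝ (EuclideanSpace ℝ (Fin d))),
          IsProbabilityMeasure μ ∧
          (∀ s, MeasurableSet s → μ (projectiveMap p.1 ⁻¹' s) = μ s) ∧
          (∀ s, MeasurableSet s → μ (projectiveMap p.2 ⁻¹' s) = μ s) := by
  -- generic conditions, cut out by countably many analytic inequations `f p ≠ 0`
  choose f hf hf₁ hfS using fun mn : ℕ × ℕ =>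
    exists_analytic_spanning d (mn.1 + 1) (mn.2 + 1) (Nat.succ_ne_zero _) (Nat.succ_ne_zero _)
  obtain ⟨g, hg, ⟨p₁, hg₁⟩, hgN⟩ := exists_analytic_noForm d hd
  let F : Option (ℕ × ℕ) → Op d × Op d → ℝ := fun o => o.elim g f
  have hFan : ∀ o p, AnalyticAt ℝ (F o) p := by
    rintro (_ | mn) p
    · exact hg p
    · exact hf mn p
  have hFne : ∀ o, ∃ p, F o p ≠ 0 := by
    rintro (_ | mn)
    · exact ⟨p₁, hg₁⟩
    · exact hf₁ mn
  have hopen : ∀ o, IsOpen {p | F o p ≠ 0} := fun o =>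
    isOpen_ne_fun (continuous_iff_continuousAt.2 fun p => (hFan o p).continuousAt)
      continuous_const
  have hdense : Dense (⋂ o, {p | F o p ≠ 0}) :=
    dense_iInter_of_isOpen hopen fun o => dense_ne_zero (hFan o) (hFne o).choose_spec
  let ι : (Op d)ˣ × (Op d)ˣ → Op d × Op d := Prod.map Units.val Units.val
  have hι : IsOpenMap ι := Units.isOpenEmbedding_val.isOpenMap.prodMap
    Units.isOpenEmbedding_val.isOpenMap
  have hιc : Continuous ι := Units.continuous_val.prodMap Units.continuous_val
  refine ⟨ι ⁻¹' ⋂ o, {p | F o p ≠ 0}, hdense.preimage hι, ?_, ?_⟩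
  · rw [Set.preimage_iInter]
    exact IsGδ.iInter_of_isOpen fun o => (hopen o).preimage hιc
  · rintro ⟨B, C⟩ hp ⟨μ, hμ, hB, hC⟩
    have hp' : ∀ o, F o ((B : Op d), (C : Op d)) ≠ 0 := fun o => Set.mem_iInter.1 hp o
    have hmp : ∀ T : (Op d)ˣ, (∀ s, MeasurableSet s → μ (projectiveMap T ⁻¹' s) = μ s) →
        MeasurePreserving (projectiveMap T) μ μ := fun T hT =>
      ⟨(continuous_projectiveMap T).measurable, by
        ext s hs
        rw [Measure.map_apply (continuous_projectiveMap T).measurable hs, hT s hs]⟩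
    have hN : NoForm (B : Op d) (C : Op d) := hgN ((B : Op d), (C : Op d)) (hp' none)
    refine no_common_invariant hd B C (fun m n hm hn => ?_) hN μ (hmp B hB) (hmp C hC)
    obtain ⟨m, rfl⟩ := Nat.exists_eq_succ_of_ne_zero hm
    obtain ⟨n, rfl⟩ := Nat.exists_eq_succ_of_ne_zero hn
    exact hfS (m, n) ((B : Op d), (C : Op d)) (hp' (some (m, n)))
end

section
/- Let X be a finite subset of the circle ℝ/ℤ with d = #X ≥ 1. Then for every a ∈ (0, 1/2) there exist a real number κ with d^{−2d}·(a/2)^d ≤ κ ≤ a/2, an integer n ≥ 1, and real numbers t₁ < t₂ < ⋯ < t_n < t₁ + 1 such that: every element of X is the image modulo 1 of a point of one of the open intervals (t_i, t_i + κ); and the gaps satisfy t_{i+1} − (t_i + κ) > κ/a for 1 ≤ i ≤ n−1, as well as (t₁ + 1) − (t_n + κ) > κ/a. Equivalently: X is covered by n open arcs of ℝ/ℤ, each of length κ, and every connected component of the complement of their union has length greater than κ/a. -/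
/-!
Write `d = #X` and consider the `d` scales `κ_j = (a / (2 d²))^(j+1)`, `j < d`.

Some open arc of length `1/d` misses `X` (`exists_empty_arc`): the circle minus a point `x₀ ∈ X`
contains `d` disjoint such arcs, and only `d - 1` points remain. Cutting the circle there, `X` lifts
to a set `S` in an interval of length `1 - 1/d`. The set `S` has at most `d - 1` gaps between
consecutive points, while the windows `[κ_j / d, 2 κ_j / a)` are pairwise disjoint, so some window
contains no gap (`exists_good_scale`). For that `κ = κ_j`, call a point of `S` a cluster start if no
point of `S` lies less than `2 κ / a` below it. Distinct cluster starts are at least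
`2 κ / a > κ + κ / a` apart, and every point of `S` is reached from a cluster start by at most
`d - 1` gaps, each shorter than `κ / d` (`exists_start_near`). Intervals of length `κ` starting
slightly below the cluster starts therefore do what is wanted; the gap across the cut is handled by
`1/d ≥ 2 κ / a`.
-/

lemma exists_empty_arc (X : Finset (AddCircle (1 : ℝ))) (hX : 1 ≤ X.card) :
    ∃ p : ℝ, ∀ s : ℝ, p < s → s < p + 1 / X.card → (s : AddCircle (1 : ℝ)) ∉ X := by
  classical
  obtain ⟨x₀, hx₀⟩ := Finset.card_pos.mp hX
  obtain ⟨r, rfl⟩ := QuotientAddGroup.mk_surjective x₀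
  have hd : (0 : ℝ) < X.card := by exact_mod_cast hX
  have hlift : ∀ x : AddCircle (1 : ℝ), ∃ s : ℝ, s ∈ Set.Ico r (r + 1) ∧
      (s : AddCircle (1 : ℝ)) = x := fun x =>
    ⟨AddCircle.equivIco 1 r x, (AddCircle.equivIco 1 r x).2, AddCircle.coe_equivIco⟩
  choose f hf hfx using hlift
  -- The points of `X` other than `r` occupy at most `d - 1` of the `d` arcs of length `1/d`.
  obtain ⟨i, hi, hni⟩ : ∃ i ∈ Finset.range X.card,
      i ∉ (X.erase (r : AddCircle (1 : ℝ))).image (fun x => ⌊X.card * (f x - r)⌋₊) := by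
    apply Finset.exists_mem_notMem_of_card_lt_card
    calc _ ≤ (X.erase (r : AddCircle (1 : ℝ))).card := Finset.card_image_le
      _ < X.card := Finset.card_erase_lt_of_mem hx₀
      _ = _ := (Finset.card_range _).symm
  have hi' : (i : ℝ) + 1 ≤ X.card := by exact_mod_cast Finset.mem_range.mp hi
  refine ⟨r + i / X.card, fun s hs1 hs2 hsX => hni ?_⟩
  have h1 : (i : ℝ) < X.card * (s - r) := by
    have : (i : ℝ) / X.card < s - r := by linarith
    rw [div_lt_iff₀ hd] at this
    linarith
  have h2 : X.card * (s - r) < i + 1 := by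
    have : s - r < (i + 1 : ℝ) / X.card := by rw [add_div]; linarith
    rw [lt_div_iff₀ hd] at this
    linarith
  have hsr : r < s := by
    have : (0 : ℝ) ≤ i / X.card := by positivity
    linarith
  have hs1 : s < r + 1 := by nlinarith
  have hmem : s ∈ Set.Ico r (r + 1) := ⟨hsr.le, hs1⟩
  have hfs : f (s : AddCircle (1 : ℝ)) = s :=
    (AddCircle.coe_eq_coe_iff_of_mem_Ico (hf _) hmem).mp (hfx _)
  refine Finset.mem_image.mpr ⟨s, Finset.mem_erase.mpr ⟨fun h => ?_, hsX⟩, ?_⟩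
  · have := (AddCircle.coe_eq_coe_iff_of_mem_Ico (p := (1 : ℝ)) hmem ⟨le_rfl, by linarith⟩).mp h
    exact hsr.ne' this
  · rw [hfs, Nat.floor_eq_iff (by positivity)]
    exact ⟨h1.le, h2⟩

/-- `y` is the immediate predecessor of `s` in the finite set `S`. -/
def IsPred (S : Finset ℝ) (y s : ℝ) : Prop :=
  y ∈ S ∧ y < s ∧ ∀ z ∈ S, z < s → z ≤ y

lemma exists_isPred {S : Finset ℝ} {s z : ℝ} (hz : z ∈ S) (hzs : z < s) :
    ∃ y, IsPred S y s := by
  obtain ⟨y, hy, hmax⟩ := (S.filter (· < s)).exists_max_image id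
    ⟨z, Finset.mem_filter.mpr ⟨hz, hzs⟩⟩
  rw [Finset.mem_filter] at hy
  exact ⟨y, hy.1, hy.2, fun w hw hws => hmax w (Finset.mem_filter.mpr ⟨hw, hws⟩)⟩

/-- Pigeonhole on scales: `S` has fewer than `d` gaps, so one of the `d` disjoint windows
`[κ / d, 2 κ / a)`, with `κ = (a / (2 d²))^(j+1)`, contains none of them. -/
lemma exists_good_scale (S : Finset ℝ) (hS : S.Nonempty) (a : ℝ) (ha : 0 < a) (ha1 : a < 1) :
    ∃ j < S.card, ∀ s ∈ S, ∀ y, IsPred S y s →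
      s - y < (a / (2 * (S.card : ℝ) ^ 2)) ^ (j + 1) / S.card ∨
      2 * (a / (2 * (S.card : ℝ) ^ 2)) ^ (j + 1) / a ≤ s - y := by
  classical
  have hd1 : (1 : ℝ) ≤ S.card := by exact_mod_cast Finset.card_pos.mpr hS
  set d : ℝ := (S.card : ℝ) with hd
  set q : ℝ := a / (2 * d ^ 2) with hq
  have hd0 : 0 < d := by linarith
  have hq0 : 0 < q := by positivity
  have hq1 : q ≤ 1 := by
    rw [hq, div_le_one (by positivity)]
    nlinarith
  by_contra! hcon
  choose! s hs y hy h1 h2 using hcon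
  have hmaps : ∀ j ∈ Finset.range S.card, s j ∈ S.erase (S.min' hS) := by
    intro j hj
    have hj := Finset.mem_range.mp hj
    refine Finset.mem_erase.mpr ⟨?_, hs j hj⟩
    exact ((S.min'_le _ (hy j hj).1).trans_lt (hy j hj).2.1).ne'
  obtain ⟨i, hi, j, hj, hij, hsij⟩ := Finset.exists_ne_map_eq_of_card_lt_of_maps_to
    (by rw [Finset.card_range]; exact Finset.card_erase_lt_of_mem (S.min'_mem hS)) hmaps
  -- The windows of scales `i < j` are disjoint: the upper end of the second is at most the lower
  -- end of the first.
  have key : ∀ i j, i < S.card → j < S.card → s i = s j → ¬ i < j := by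
    intro i j hi hj hsij hlt
    have hyy : y i = y j := by
      have hpi := hy i hi
      have hpj := hy j hj
      rw [hsij] at hpi
      exact le_antisymm (hpj.2.2 _ hpi.1 hpi.2.1) (hpi.2.2 _ hpj.1 hpj.2.1)
    have e1 := h1 i hi
    have e2 := h2 j hj
    rw [hsij, hyy] at e1
    have e3 : q ^ (j + 1) ≤ q ^ (i + 1) * q := by
      rw [← pow_succ]
      exact pow_le_pow_of_le_one hq0.le hq1 (by omega)
    have e4 : 2 * q ^ (j + 1) / a ≤ q ^ (i + 1) / d := by
      calc 2 * q ^ (j + 1) / a ≤ 2 * (q ^ (i + 1) * q) / a := by gcongr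
        _ = q ^ (i + 1) / d ^ 2 := by
          rw [show q ^ (i + 1) * q = q ^ (i + 1) * (a / (2 * d ^ 2)) from rfl]
          field_simp
        _ ≤ q ^ (i + 1) / d := by
          gcongr
          nlinarith
    linarith
  rw [Finset.mem_range] at hi hj
  rcases lt_or_gt_of_ne hij with h | h
  · exact key i j hi hj hsij h
  · exact key j i hj hi hsij.symm h

/-- If no gap of `S` has length in `[δ, L)`, every point of `S` is reached from a cluster start,
that is, a point of `S` with no point of `S` less than `L` below it, by gaps shorter than `δ`,
at most one for each point of `S` below it. -/
lemma exists_start_near (S : Finset ℝ) (δ L : ℝ) (hδ : 0 ≤ δ)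
    (hgap : ∀ s ∈ S, ∀ y, IsPred S y s → s - y < δ ∨ L ≤ s - y) :
    ∀ k : ℕ, ∀ s ∈ S, (S.filter (· < s)).card = k →
      ∃ c ∈ S, (∀ y ∈ S, y < c → L ≤ c - y) ∧ c ≤ s ∧ s - c ≤ k * δ := by
  intro k
  induction k using Nat.strong_induction_on with
  | _ k ih =>
    intro s hs hk
    by_cases hstart : ∀ y ∈ S, y < s → L ≤ s - y
    · exact ⟨s, hs, hstart, le_rfl, by rw [sub_self]; positivity⟩
    push Not at hstart
    obtain ⟨z, hz, hzs, hzL⟩ := hstart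
    obtain ⟨y, hy⟩ := exists_isPred hz hzs
    have hlt : (S.filter (· < y)).card < k := by
      rw [← hk]
      apply Finset.card_lt_card
      refine Finset.ssubset_iff_of_subset (fun w hw => ?_) |>.mpr ⟨y, ?_, ?_⟩
      · rw [Finset.mem_filter] at hw ⊢
        exact ⟨hw.1, hw.2.trans hy.2.1⟩
      · exact Finset.mem_filter.mpr ⟨hy.1, hy.2.1⟩
      · simp
    have hsy : s - y < δ := by
      have := hy.2.2 z hz hzs
      rcases hgap s hs y hy with h | h
      · exact h
      · linarith
    obtain ⟨c, hc, hcs, hcy, hle⟩ := ih _ hlt y hy.1 rfl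
    refine ⟨c, hc, hcs, hcy.trans hy.2.1.le, ?_⟩
    have : (((S.filter (· < y)).card : ℝ) + 1) * δ ≤ k * δ := by
      gcongr
      exact_mod_cast hlt
    linarith

/-- **Covering sublemma on the circle.**  A finite subset `X` of `ℝ/ℤ` of cardinality `d ≥ 1`
can, for every `a ∈ (0,1/2)`, be covered by finitely many open arcs of common length
`κ ∈ [d^{−2d}(a/2)^d, a/2]` such that every complementary gap has length greater than `κ/a`.
The arcs are presented as the images mod 1 of intervals `(t_i, t_i + κ)` with
`t₁ < ⋯ < t_n < t₁ + 1`. -/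
theorem circle_covering_with_separated_arcs
    (X : Finset (AddCircle (1 : ℝ))) (hX : 1 ≤ X.card)
    (a : ℝ) (ha : a ∈ Set.Ioo (0 : ℝ) (1/2)) :
    ∃ κ : ℝ,
      ((X.card : ℝ) ^ (2 * X.card))⁻¹ * (a / 2) ^ X.card ≤ κ ∧ κ ≤ a / 2 ∧
      ∃ n : ℕ, ∃ t : Fin (n + 1) → ℝ,
        StrictMono t ∧
        (∀ x ∈ X, ∃ i : Fin (n + 1), ∃ s : ℝ,
          t i < s ∧ s < t i + κ ∧ (s : AddCircle (1 : ℝ)) = x) ∧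
        (∀ i : Fin n, κ / a < t i.succ - (t i.castSucc + κ)) ∧
        κ / a < (t 0 + 1) - (t (Fin.last n) + κ) := by
  classical
  obtain ⟨ha0, ha2⟩ := ha
  obtain ⟨p, hp⟩ := exists_empty_arc X hX
  have hlift : ∀ x : AddCircle (1 : ℝ), ∃ s : ℝ, s ∈ Set.Ioc p (p + 1) ∧
      (s : AddCircle (1 : ℝ)) = x := fun x =>
    ⟨AddCircle.equivIoc 1 p x, (AddCircle.equivIoc 1 p x).2, AddCircle.coe_equivIoc⟩
  choose f hf hfx using hlift
  have hcard : (X.image f).card = X.card :=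
    Finset.card_image_of_injective _ (Function.LeftInverse.injective hfx)
  have hSne : (X.image f).Nonempty := by rw [← Finset.card_pos, hcard]; exact hX
  obtain ⟨j, hj, hgood⟩ := exists_good_scale (X.image f) hSne a ha0 (by linarith)
  have hSlo : ∀ s ∈ X.image f, p + 1 / X.card ≤ s := by
    intro s hs
    obtain ⟨x, hx, rfl⟩ := Finset.mem_image.mp hs
    by_contra! h
    exact hp _ (hf x).1 h (by rw [hfx]; exact hx)
  have hShi : ∀ s ∈ X.image f, s ≤ p + 1 := by
    intro s hs
    obtain ⟨x, hx, rfl⟩ := Finset.mem_image.mp hs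
    exact (hf x).2
  have hfS : ∀ x ∈ X, f x ∈ X.image f := fun x hx => Finset.mem_image_of_mem f hx
  rw [hcard] at hj hgood
  generalize X.image f = S at *
  have hd1 : (1 : ℝ) ≤ X.card := by exact_mod_cast hX
  have hlow : ((X.card : ℝ) ^ (2 * X.card))⁻¹ * (a / 2) ^ X.card =
      (a / (2 * (X.card : ℝ) ^ 2)) ^ X.card := by
    rw [pow_mul, ← inv_pow, ← mul_pow]
    congr 1
    field_simp
  rw [hlow]
  set d : ℝ := (X.card : ℝ) with hd
  set q : ℝ := a / (2 * d ^ 2) with hq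
  have hd0 : 0 < d := by linarith
  have hq0 : 0 < q := by positivity
  have hq1 : q ≤ 1 := by
    rw [hq, div_le_one (by positivity)]
    nlinarith
  have hqa : q ≤ a / 2 := by
    rw [hq]
    gcongr
    nlinarith
  have hκq : q ^ (j + 1) ≤ q := pow_le_of_le_one hq0.le hq1 (by omega)
  have hκlow : q ^ X.card ≤ q ^ (j + 1) := pow_le_pow_of_le_one hq0.le hq1 hj
  have hκ0 : 0 < q ^ (j + 1) := by positivity
  generalize q ^ (j + 1) = κ at *
  refine ⟨κ, hκlow, hκq.trans hqa, ?_⟩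
  have hκd : 2 * κ / a ≤ 1 / d := by
    calc 2 * κ / a ≤ 2 * q / a := by gcongr
      _ = 1 / d ^ 2 := by rw [hq]; field_simp
      _ ≤ 1 / d := by
        gcongr
        nlinarith
  have h2κ : 2 * κ / a = κ / a + κ / a := by ring
  have hκa : 2 * κ < κ / a := by
    rw [lt_div_iff₀ ha0]
    nlinarith
  have hεκ : κ / (2 * d) ≤ κ / 2 := by
    gcongr
    linarith
  have hε0 : 0 < κ / (2 * d) := by positivity
  have hεd : κ / d = κ / (2 * d) + κ / (2 * d) := by field_simp; norm_num
  -- `C` is the set of cluster starts; each interval begins `κ / (2 d)` below one of them, which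
  -- fits because a cluster has length at most `κ - κ / d`.
  let C := S.filter (fun c => ∀ y ∈ S, y < c → 2 * κ / a ≤ c - y)
  have hCne : C.Nonempty := ⟨S.min' hSne, Finset.mem_filter.mpr ⟨S.min'_mem hSne,
    fun y hy hlt => absurd (S.min'_le y hy) (not_le.mpr hlt)⟩⟩
  obtain ⟨n, hn⟩ : ∃ n, C.card = n + 1 :=
    Nat.exists_eq_succ_of_ne_zero (Finset.card_pos.mpr hCne).ne'
  have hcS : ∀ i, C.orderEmbOfFin hn i ∈ S := fun i =>
    (Finset.mem_filter.mp (C.orderEmbOfFin_mem hn i)).1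
  refine ⟨n, fun i => C.orderEmbOfFin hn i - κ / (2 * d), ?_, ?_, ?_, ?_⟩
  · intro i i' h
    have := (C.orderEmbOfFin hn).strictMono h
    dsimp only
    linarith
  · intro x hx
    obtain ⟨c, hc, hcs, hcx, hle⟩ := exists_start_near S (κ / d) (2 * κ / a) (by positivity)
      hgood _ (f x) (hfS x hx) rfl
    have hcC : c ∈ Set.range (C.orderEmbOfFin hn) := by
      rw [Finset.range_orderEmbOfFin]
      exact Finset.mem_filter.mpr ⟨hc, hcs⟩
    obtain ⟨i, rfl⟩ := hcC
    refine ⟨i, f x, by linarith, ?_, hfx x⟩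
    have hlt : (S.filter (· < f x)).card < X.card := by
      rw [← hcard]
      apply Finset.card_lt_card
      exact (Finset.filter_ssubset).mpr ⟨f x, hfS x hx, lt_irrefl _⟩
    have : (((S.filter (· < f x)).card : ℝ) + 1) * (κ / d) ≤ d * (κ / d) := by
      gcongr
      rw [hd]; exact_mod_cast hlt
    rw [mul_div_cancel₀ _ hd0.ne'] at this
    linarith
  · intro i
    have h := (Finset.mem_filter.mp (C.orderEmbOfFin_mem hn i.succ)).2 _ (hcS i.castSucc)
      ((C.orderEmbOfFin hn).strictMono i.castSucc_lt_succ)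
    linarith
  · have h0 := hSlo _ (hcS 0)
    have h1 := hShi _ (hcS (Fin.last n))
    linarith
end

section
/- For every integer d ≥ 1 and all θ > 0, χ′ > 0 there exists η > 0 with the following property. Let Q be a compact subset of the closed unit ball of ℝ^d that is homeomorphic to the closed unit ball of ℝ^d and has diameter equal to 1, and let f : B(0,2) → ℝ^d be a C^∞ map that is a diffeomorphism onto its image and satisfies ‖Df(x) − Id‖ < η for all x ∈ B(0,2). Then there exist b ∈ ℝ^d and a C^∞ map g : B(0,2) → ℝ^d that is a diffeomorphism onto its image such that: g(x) = f(x) for every x ∈ B(0,2) whose distance to Q is at least χ′; g(z) = z + b for every z ∈ Q; and ‖Dg(x) − Df(x)‖ ≤ θ for all x ∈ B(0,2). -/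
/-!
Glue `f` to a translation with a cutoff function: fix `q ∈ Q`, put `b = f q - q`, and let
`g = f + φ • (id + b - f)` with `φ` smooth, `0 ≤ φ ≤ 1`, `φ = 1` on `Q`, and `φ = 0` at distance
at least `χ'` from `Q`.  By the mean value inequality `‖x + b - f x‖ ≤ η ‖x - q‖ ≤ 3 η`, so
`Dg - Df = φ (Id - Df) + Dφ ⊗ (id + b - f)` has norm at most `η (1 + 3 C)`, where `C` bounds `‖Dφ‖`.
For `η` small this is at most `θ`, and `g` is so `C¹`-close to the identity on the convex ball that
it is a diffeomorphism onto its image (`diffeo_of_fderiv_near_id`).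

The constant `C` must not depend on `Q`.  This is `exists_uniform_cutoff`: the unit ball is covered
by finitely many balls of radius `χ'/3`, and `φ` is built from bump functions on those balls that
meet `Q`; only finitely many functions `φ` arise in this way.
-/

open Metric

/-- A smooth map on an open convex set whose derivative stays within `c < 1` of the identity is
a diffeomorphism onto its open image. -/
lemma diffeo_of_fderiv_near_id {E : Type*} [NormedAddCommGroup E] [NormedSpace ℝ E]
    [CompleteSpace E] {s : Set E} (hs : IsOpen s) (hconv : Convex ℝ s) {g : E → E}
    (hg : ContDiffOn ℝ (⊤ : ℕ∞) g s) {c : ℝ} (hc0 : 0 ≤ c) (hc : c < 1)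
    (hD : ∀ x ∈ s, ‖fderiv ℝ g x - ContinuousLinearMap.id ℝ E‖ ≤ c) :
    Set.InjOn g s ∧ IsOpen (g '' s) ∧
      ∃ ginv, ContDiffOn ℝ (⊤ : ℕ∞) ginv (g '' s) ∧ ∀ x ∈ s, ginv (g x) = x := by
  have hgat : ∀ x ∈ s, ContDiffAt ℝ (⊤ : ℕ∞) g x := fun x hx => hg.contDiffAt (hs.mem_nhds hx)
  have hdiff : ∀ x ∈ s, DifferentiableAt ℝ g x := fun x hx =>
    (hgat x hx).differentiableAt (by simp)
  have happ : ApproximatesLinearOn g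
      ((ContinuousLinearEquiv.refl ℝ E : E ≃L[ℝ] E) : E →L[ℝ] E) s ⟨c, hc0⟩ :=
    fun x hx y hy => hconv.norm_image_sub_le_of_norm_fderiv_le' hdiff hD hy hx
  have hcN : Subsingleton E ∨ (⟨c, hc0⟩ : NNReal) <
      ‖((ContinuousLinearEquiv.refl ℝ E).symm : E →L[ℝ] E)‖₊⁻¹ := by
    rcases subsingleton_or_nontrivial E with h | h
    · exact Or.inl h
    · right
      have h1 : ‖((ContinuousLinearEquiv.refl ℝ E).symm : E →L[ℝ] E)‖₊ = 1 :=
        NNReal.eq (ContinuousLinearMap.norm_id (𝕜 := ℝ) (E := E))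
      rw [h1, inv_one]
      exact hc
  let e := happ.toOpenPartialHomeomorph g s hcN hs
  refine ⟨e.injOn, e.open_target, e.symm, ?_, fun x hx => e.left_inv hx⟩
  rintro _ ⟨x, hx, rfl⟩
  have hx' : e.symm (g x) = x := e.left_inv hx
  have hlt : ‖ContinuousLinearMap.id ℝ E - fderiv ℝ g x‖ < 1 := by
    rw [norm_sub_rev]
    exact (hD x hx).trans_lt hc
  let u : (E →L[ℝ] E)ˣ := Units.oneSub _ hlt
  have hu : ((ContinuousLinearEquiv.ofUnit u : E ≃L[ℝ] E) : E →L[ℝ] E) = fderiv ℝ g x := by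
    have h2 : (u : E →L[ℝ] E) = fderiv ℝ g x := sub_sub_cancel _ _
    rw [← h2]
    rfl
  refine (e.contDiffAt_symm (f₀' := ContinuousLinearEquiv.ofUnit u)
    (e.map_source hx) ?_ ?_).contDiffWithinAt
  · rw [show e.symm (e x) = x from hx', hu]
    exact (hdiff x hx).hasFDerivAt
  · rw [show e.symm (e x) = x from hx']
    exact hgat x hx

/-- Cutoff functions of subsets `Q` of the unit ball whose derivative is bounded on `B(0,2)` by
a constant depending only on the space and on the width `r` of the cutoff, not on `Q`. -/
lemma exists_uniform_cutoff (E : Type*) [NormedAddCommGroup E] [InnerProductSpace ℝ E]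
    [FiniteDimensional ℝ E] {r : ℝ} (hr : 0 < r) :
    ∃ C : ℝ, 0 ≤ C ∧ ∀ Q : Set E, Q ⊆ closedBall 0 1 →
      ∃ φ : E → ℝ, ContDiff ℝ (⊤ : ℕ∞) φ ∧ (∀ x, 0 ≤ φ x) ∧ (∀ x, φ x ≤ 1) ∧
        (∀ x ∈ Q, φ x = 1) ∧ (∀ x, r ≤ infDist x Q → φ x = 0) ∧
        ∀ x ∈ ball (0 : E) 2, ‖fderiv ℝ φ x‖ ≤ C := by
  classical
  obtain ⟨T, -, hT⟩ := (isCompact_closedBall (0 : E) 1).elim_nhds_subcover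
    (fun x => ball x (r / 3)) (fun x _ => ball_mem_nhds x (by positivity))
  let β : ∀ t : E, ContDiffBump t := fun t =>
    ⟨r / 3, 2 * r / 3, by positivity, by linarith⟩
  let Φ : Finset E → E → ℝ := fun S x => 1 - ∏ t ∈ S, (1 - β t x)
  have hΦ : ∀ S, ContDiff ℝ (⊤ : ℕ∞) (Φ S) := fun S =>
    contDiff_const.sub (contDiff_prod fun t _ => contDiff_const.sub (β t).contDiff)
  have hbound : ∀ S, ∃ C, ∀ x ∈ closedBall (0 : E) 2, ‖fderiv ℝ (Φ S) x‖ ≤ C := fun S =>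
    (isCompact_closedBall (0 : E) 2).exists_bound_of_continuousOn
      ((hΦ S).continuous_fderiv (by simp)).continuousOn
  choose C hC using hbound
  refine ⟨∑ S ∈ T.powerset, |C S|, Finset.sum_nonneg fun _ _ => abs_nonneg _, fun Q hQ => ?_⟩
  let S := T.filter fun t => (ball t (r / 3) ∩ Q).Nonempty
  have h0 : ∀ x, ∀ t ∈ S, 0 ≤ 1 - β t x := fun x t _ => sub_nonneg.2 (β t).le_one
  have h1 : ∀ x, ∀ t ∈ S, 1 - β t x ≤ 1 := fun x t _ => sub_le_self _ (β t).nonneg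
  refine ⟨Φ S, hΦ S, fun x => sub_nonneg.2 (Finset.prod_le_one (h0 x) (h1 x)),
    fun x => sub_le_self _ (Finset.prod_nonneg (h0 x)), fun x hx => ?_, fun x hx => ?_,
    fun x hx => ?_⟩
  · obtain ⟨t, htT, hxt⟩ := Set.mem_iUnion₂.1 (hT (hQ hx))
    have htS : t ∈ S := Finset.mem_filter.2 ⟨htT, x, hxt, hx⟩
    have : 1 - β t x = 0 := by
      rw [(β t).one_of_mem_closedBall (ball_subset_closedBall hxt), sub_self]
    simp only [Φ]
    rw [Finset.prod_eq_zero htS this, sub_zero]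
  · have : ∀ t ∈ S, 1 - β t x = 1 := by
      intro t ht
      obtain ⟨-, q, hqt, hq⟩ := Finset.mem_filter.1 ht
      have h3 : r ≤ dist x q := hx.trans (infDist_le_dist_of_mem hq)
      have h4 : dist x q ≤ dist x t + dist q t := dist_triangle_right _ _ _
      have h5 : dist q t < r / 3 := hqt
      rw [(β t).zero_of_le_dist (show 2 * r / 3 ≤ dist x t by linarith), sub_zero]
    simp only [Φ]
    rw [Finset.prod_eq_one this, sub_self]
  · refine (hC S x (ball_subset_closedBall hx)).trans ((le_abs_self _).trans ?_)
    exact Finset.single_le_sum (f := fun S => |C S|) (fun _ _ => abs_nonneg _)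
      (Finset.mem_powerset.2 (Finset.filter_subset _ _))

/-- **Local linearization lemma (non-conservative case).**  For every `d ≥ 1` and
`θ, χ′ > 0` there is `η > 0` such that: if `Q` is a compact subset of the closed unit ball
of `ℝ^d`, homeomorphic to the closed unit ball and of diameter `1`, and `f : B(0,2) → ℝ^d` is
a `C^∞` diffeomorphism onto its image with `‖Df − Id‖ < η` on `B(0,2)`, then there is a `C^∞`
diffeomorphism onto its image `g : B(0,2) → ℝ^d` coinciding with `f` at distance `≥ χ′` from
`Q`, equal to a translation `z ↦ z + b` on `Q`, and satisfying `‖Dg − Df‖ ≤ θ` on `B(0,2)`. -/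
theorem local_linearization_to_translation
    (d : ℕ) (hd : 1 ≤ d) (θ χ' : ℝ) (hθ : 0 < θ) (hχ' : 0 < χ') :
    ∃ η : ℝ, 0 < η ∧
      ∀ Q : Set (EuclideanSpace ℝ (Fin d)),
        IsCompact Q → Q ⊆ closedBall (0 : EuclideanSpace ℝ (Fin d)) 1 →
        Nonempty (Q ≃ₜ (closedBall (0 : EuclideanSpace ℝ (Fin d)) 1 :
          Set (EuclideanSpace ℝ (Fin d)))) →
        Metric.diam Q = 1 →
        ∀ f : EuclideanSpace ℝ (Fin d) → EuclideanSpace ℝ (Fin d),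
          ContDiffOn ℝ (⊤ : ℕ∞) f (ball (0 : EuclideanSpace ℝ (Fin d)) 2) →
          Set.InjOn f (ball (0 : EuclideanSpace ℝ (Fin d)) 2) →
          IsOpen (f '' ball (0 : EuclideanSpace ℝ (Fin d)) 2) →
          (∃ finv, ContDiffOn ℝ (⊤ : ℕ∞) finv (f '' ball (0 : EuclideanSpace ℝ (Fin d)) 2) ∧
            ∀ x ∈ ball (0 : EuclideanSpace ℝ (Fin d)) 2, finv (f x) = x) →
          (∀ x ∈ ball (0 : EuclideanSpace ℝ (Fin d)) 2,
            ‖fderiv ℝ f x - ContinuousLinearMap.id ℝ (EuclideanSpace ℝ (Fin d))‖ < η) →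
          ∃ b : EuclideanSpace ℝ (Fin d),
          ∃ g : EuclideanSpace ℝ (Fin d) → EuclideanSpace ℝ (Fin d),
            ContDiffOn ℝ (⊤ : ℕ∞) g (ball (0 : EuclideanSpace ℝ (Fin d)) 2) ∧
            Set.InjOn g (ball (0 : EuclideanSpace ℝ (Fin d)) 2) ∧
            IsOpen (g '' ball (0 : EuclideanSpace ℝ (Fin d)) 2) ∧
            (∃ ginv, ContDiffOn ℝ (⊤ : ℕ∞) ginv (g '' ball (0 : EuclideanSpace ℝ (Fin d)) 2) ∧
              ∀ x ∈ ball (0 : EuclideanSpace ℝ (Fin d)) 2, ginv (g x) = x) ∧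
            (∀ x ∈ ball (0 : EuclideanSpace ℝ (Fin d)) 2,
              χ' ≤ infDist x Q → g x = f x) ∧
            (∀ z ∈ Q, g z = z + b) ∧
            (∀ x ∈ ball (0 : EuclideanSpace ℝ (Fin d)) 2,
              ‖fderiv ℝ g x - fderiv ℝ f x‖ ≤ θ) := by
  obtain ⟨C, hC0, hC⟩ := exists_uniform_cutoff (EuclideanSpace ℝ (Fin d)) hχ'
  -- `m` bounds both `‖Dg - Df‖` and `‖Dg - Id‖`; the latter has to be less than `1`.
  set m := min θ (1 / 2) with hm
  have hm0 : 0 < m := lt_min hθ (by norm_num)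
  have hη0 : 0 < m / (2 + 3 * C) := by positivity
  refine ⟨m / (2 + 3 * C), hη0, ?_⟩
  set η := m / (2 + 3 * C) with hη
  have hηm : η * (2 + 3 * C) = m := div_mul_cancel₀ _ (by positivity)
  intro Q _ hQ hhomeo _ f hf _ _ _ hDf
  obtain ⟨φ, hφ, hφ0, hφ1, hφQ, hφfar, hφD⟩ := hC Q hQ
  obtain ⟨h⟩ := hhomeo
  obtain ⟨q, hq⟩ : Q.Nonempty := ⟨_, (h.symm ⟨0, mem_closedBall_self zero_le_one⟩).2⟩
  have hq1 : ‖q‖ ≤ 1 := mem_closedBall_zero_iff.1 (hQ hq)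
  have hq2 : q ∈ ball (0 : EuclideanSpace ℝ (Fin d)) 2 :=
    mem_ball_zero_iff.2 (by linarith)
  have hfd : ∀ x ∈ ball (0 : EuclideanSpace ℝ (Fin d)) 2, DifferentiableAt ℝ f x := fun x hx =>
    (hf.contDiffAt (isOpen_ball.mem_nhds hx)).differentiableAt (by simp)
  have hdisp : ∀ x ∈ ball (0 : EuclideanSpace ℝ (Fin d)) 2, ‖x + (f q - q) - f x‖ ≤ 3 * η := by
    intro x hx
    have h1 := (convex_ball (0 : EuclideanSpace ℝ (Fin d)) 2).norm_image_sub_le_of_norm_fderiv_le'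
      hfd (fun y hy => (hDf y hy).le) hq2 hx
    have h2 : x + (f q - q) - f x
        = -(f x - f q - ContinuousLinearMap.id ℝ (EuclideanSpace ℝ (Fin d)) (x - q)) := by
      simp only [ContinuousLinearMap.id_apply]
      abel
    have h3 : ‖x - q‖ ≤ 3 := (norm_sub_le _ _).trans (by linarith [mem_ball_zero_iff.1 hx])
    rw [h2, norm_neg]
    nlinarith
  set g : EuclideanSpace ℝ (Fin d) → EuclideanSpace ℝ (Fin d) :=
    fun x => f x + φ x • (x + (f q - q) - f x) with hg
  have hgsmooth : ContDiffOn ℝ (⊤ : ℕ∞) g (ball (0 : EuclideanSpace ℝ (Fin d)) 2) :=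
    hf.add (hφ.contDiffOn.smul ((contDiffOn_id.add contDiffOn_const).sub hf))
  have hgD : ∀ x ∈ ball (0 : EuclideanSpace ℝ (Fin d)) 2,
      ‖fderiv ℝ g x - fderiv ℝ f x‖ ≤ η * (1 + 3 * C) := by
    intro x hx
    have hfx := (hfd x hx).hasFDerivAt
    have hφx := ((hφ.differentiable (by simp)) x).hasFDerivAt
    have h1 : HasFDerivAt g _ x :=
      hfx.add (hφx.smul (((hasFDerivAt_id x).add_const (f q - q)).sub hfx))
    rw [h1.fderiv, add_sub_cancel_left]
    have h2 : ‖φ x • (ContinuousLinearMap.id ℝ (EuclideanSpace ℝ (Fin d)) - fderiv ℝ f x)‖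
        ≤ 1 * η := by
      rw [norm_smul, norm_sub_rev, Real.norm_of_nonneg (hφ0 x)]
      exact mul_le_mul (hφ1 x) (hDf x hx).le (norm_nonneg _) zero_le_one
    have h3 : ‖(fderiv ℝ φ x).smulRight (x + (f q - q) - f x)‖ ≤ C * (3 * η) := by
      rw [ContinuousLinearMap.norm_smulRight_apply]
      exact mul_le_mul (hφD x hx) (hdisp x hx) (norm_nonneg _) hC0
    exact (norm_add_le_of_le h2 h3).trans (by linarith)
  have hgid : ∀ x ∈ ball (0 : EuclideanSpace ℝ (Fin d)) 2,
      ‖fderiv ℝ g x - ContinuousLinearMap.id ℝ (EuclideanSpace ℝ (Fin d))‖ ≤ m := fun x hx =>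
    (norm_sub_le_norm_sub_add_norm_sub _ (fderiv ℝ f x) _).trans
      (by linarith [hgD x hx, hDf x hx])
  obtain ⟨hinj, hopen, hinv⟩ := diffeo_of_fderiv_near_id isOpen_ball
    (convex_ball _ _) hgsmooth hm0.le
    ((min_le_right θ (1 / 2)).trans_lt (by norm_num)) hgid
  refine ⟨f q - q, g, hgsmooth, hinj, hopen, hinv, fun x _ hx => ?_, fun z hz => ?_,
    fun x hx => (hgD x hx).trans ?_⟩
  · simp [hg, hφfar x hx]
  · simp [hg, hφQ z hz]
  · linarith [min_le_left θ (1 / 2)]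
end

section
/- For every integer d ≥ 1 and all θ > 0, χ′ > 0 there exists η > 0 with the following property. Let Q be a compact subset of the closed unit ball of ℝ^d that is homeomorphic to the closed unit ball of ℝ^d and has diameter equal to 1, and let f : B(0,2) → ℝ^d be a C^∞ map that is a diffeomorphism onto its image, preserves Lebesgue measure, and satisfies ‖Df(x) − Id‖ < η and ‖D²f(x)‖ ≤ η for all x ∈ B(0,2). Then there exist b ∈ ℝ^d and a C^∞ map g : B(0,2) → ℝ^d that is a diffeomorphism onto its image and preserves Lebesgue measure, such that: g(x) = f(x) for every x ∈ B(0,2) whose distance to Q is at least χ′; g(z) = z + b for every z ∈ Q; and ‖Dg(x) − Df(x)‖ ≤ θ for all x ∈ B(0,2). -/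
open Metric MeasureTheory

/-!
The map `f` is written near the unit ball as `f 0 + (x + v x)` with `v` small in `C²`, and the
volume-preserving map `id + v` has to be interpolated, with volume preservation, between the
identity near `Q` and itself away from `Q`. Multiplying `v` by a cutoff destroys volume
preservation; instead `id + v` is decomposed into maps moving two coordinates each, which are
given by generating functions, and the generating functions are cut off.

A function `S` with small second derivatives defines the map
`u + ∂ⱼS(u) eᵢ ↦ u + ∂ᵢS(u) eⱼ`, whose Jacobian is `1` because both sides have Jacobian
`1 + ∂ᵢ∂ⱼS` as functions of `u` (`exists_generated`). Conversely, let `G v k x` consist of the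
first `k` coordinates of `x + v x` and the other coordinates of `x`. Solving an ordinary equation
in the `i`-th variable (`prim`, `c`) gives a volume-preserving map `Fm v i` which agrees with
`G v i` in all coordinates but the `i`-th; `Fm v 0` is the identity and `Fm v (d - 1)` is
`id + v` (`Pert.Fm_zero`, `Pert.Fm_last`). For consecutive `i, j` the map `Fm v j ∘ (Fm v i)⁻¹`
moves only the coordinates `i, j`. Expressed in the mixed coordinates `u = G v j x`, volume
preservation becomes the statement that the form `c v j duᵢ + bet v i duⱼ` is closed in the two
variables, so it has a generating function `S` (`Pert.exists_S`). Only the functions `S`, `∂ᵢS`,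
`∂ⱼS` and their first derivatives are needed to bound the second derivatives of `ρ S` entering
the estimates, and these are controlled by the `C²` norm of `v`. Composing the maps
generated by `ρ S` gives `exists_cutoff`: a volume-preserving map that is `C¹`-close to the
identity, equal to the identity where `ρ = 0` and to `id + v` where `ρ = 1`.

The cutoffs `ρ` are chosen among finitely many functions, attached to the subsets of a finite net
of the unit ball (`exists_cuts`), so that the constants do not depend on `Q`. The resulting map
agrees with `f` on an annulus outside the unit ball, and `f` is used beyond it.
-/

namespace LocalLin

open scoped ContDiff Topology
open Set Filter

/-- Euclidean space of dimension `d`. -/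
abbrev E (d : ℕ) := EuclideanSpace ℝ (Fin d)

/-! ### Integrals depending smoothly on a parameter -/

section Param
variable {V F : Type} [NormedAddCommGroup V] [NormedSpace ℝ V] [ProperSpace V]
  [NormedAddCommGroup F] [NormedSpace ℝ F]

lemma hasFDerivAt_paramIntegral (w : ℝ × V → F) (hw : ContDiff ℝ ∞ w) (u : V) :
    HasFDerivAt (fun u => ∫ t in (0:ℝ)..1, w (t, u))
      (∫ t in (0:ℝ)..1, (fderiv ℝ w (t, u)).comp (ContinuousLinearMap.inr ℝ ℝ V)) u := by
  have hc : Continuous w := hw.continuous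
  have hd : Differentiable ℝ w := hw.differentiable (by simp)
  have hc' : Continuous (fderiv ℝ w) := hw.continuous_fderiv (by simp)
  have hc2 : Continuous fun p : ℝ × V =>
      (fderiv ℝ w p).comp (ContinuousLinearMap.inr ℝ ℝ V) := by fun_prop
  obtain ⟨C, hC⟩ := (isCompact_Icc (a := (0:ℝ)) (b := 1)).prod
    (isCompact_closedBall u 1) |>.exists_bound_of_continuousOn hc2.continuousOn
  refine intervalIntegral.hasFDerivAt_integral_of_dominated_of_fderiv_le
    (F := fun u t => w (t, u))
    (F' := fun u t => (fderiv ℝ w (t, u)).comp (ContinuousLinearMap.inr ℝ ℝ V))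
    (bound := fun _ => C) (closedBall_mem_nhds u one_pos) ?_ ?_ ?_ ?_ ?_ ?_
  · exact Eventually.of_forall fun x => (by fun_prop : Continuous fun t => w (t, x)).aestronglyMeasurable
  · exact (by fun_prop : Continuous fun t => w (t, u)).intervalIntegrable _ _
  · exact (hc2.comp (by fun_prop : Continuous fun t : ℝ => (t, u))).aestronglyMeasurable
  · refine Eventually.of_forall fun t ht x hx => hC (t, x) ⟨?_, hx⟩
    rw [uIoc_of_le zero_le_one] at ht
    exact ⟨ht.1.le, ht.2⟩
  · exact intervalIntegrable_const
  · refine Eventually.of_forall fun t ht x hx => ?_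
    exact (hd (t, x)).hasFDerivAt.comp x (hasFDerivAt_prodMk_right t x)

/-- Smooth functions stay smooth after integrating one variable over `[0,1]`. -/
lemma contDiff_paramIntegral (w : ℝ × V → F) (hw : ContDiff ℝ ∞ w) :
    ContDiff ℝ ∞ (fun u => ∫ t in (0:ℝ)..1, w (t, u)) := by
  rw [contDiff_infty]
  intro n
  induction n generalizing F with
  | zero =>
    simp only [Nat.cast_zero, contDiff_zero]
    exact continuous_iff_continuousAt.2 fun u =>
      (hasFDerivAt_paramIntegral w hw u).continuousAt
  | succ n ih =>
    push_cast
    rw [contDiff_succ_iff_hasFDerivAt]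
    refine ⟨_, ih (fun p => (fderiv ℝ w p).comp (ContinuousLinearMap.inr ℝ ℝ V)) ?_,
      fun u => hasFDerivAt_paramIntegral w hw u⟩
    exact (hw.fderiv_right (m := ∞) (by simp)).clm_comp contDiff_const

end Param

/-! ### Global inverses of maps close to the identity -/

section Inverse
variable {d : ℕ}

/-- A map `id + w` with `‖Dw‖ ≤ ε ≤ 1/2` is a diffeomorphism of the whole space, and its
inverse is `C¹`-close to the identity. -/
lemma exists_inverse (w : E d → E d) (hw : ContDiff ℝ ∞ w) {ε : ℝ} (hε : ε ≤ 1 / 2)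
    (hb : ∀ x, ‖fderiv ℝ w x‖ ≤ ε) :
    ∃ H : E d → E d, ContDiff ℝ ∞ H ∧ (∀ x, H (x + w x) = x) ∧ (∀ u, H u + w (H u) = u) ∧
      ∀ u, ‖fderiv ℝ H u - ContinuousLinearMap.id ℝ (E d)‖ ≤ 2 * ε := by
  have hd : Differentiable ℝ w := hw.differentiable (by simp)
  have hε0 : 0 ≤ ε := (norm_nonneg _).trans (hb 0)
  obtain ⟨c, hc⟩ : ∃ c : NNReal, (c : ℝ) = ε := ⟨ε.toNNReal, Real.coe_toNNReal _ hε0⟩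
  set G : E d → E d := fun x => x + w x with hG
  have hGc : ContDiff ℝ ∞ G := contDiff_id.add hw
  have hlip : LipschitzWith c w :=
    lipschitzWith_of_nnnorm_fderiv_le hd fun x => by
      rw [← NNReal.coe_le_coe, hc]; exact hb x
  have happ : ApproximatesLinearOn G ((ContinuousLinearEquiv.refl ℝ (E d) : E d →L[ℝ] E d))
      univ c := by
    rw [ApproximatesLinearOn.approximatesLinearOn_iff_lipschitzOnWith]
    have : (G - ⇑((ContinuousLinearEquiv.refl ℝ (E d) : E d →L[ℝ] E d))) = w := by
      ext x; simp [hG]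
    rw [this]
    exact hlip.lipschitzOnWith
  have hN : Subsingleton (E d) ∨ c <
      ‖((ContinuousLinearEquiv.refl ℝ (E d)).symm : E d →L[ℝ] E d)‖₊⁻¹ := by
    rcases subsingleton_or_nontrivial (E d) with h | h
    · exact Or.inl h
    · right
      have : ‖((ContinuousLinearEquiv.refl ℝ (E d)).symm : E d →L[ℝ] E d)‖₊ = 1 := by
        apply NNReal.eq
        exact ContinuousLinearMap.norm_id
      rw [this, inv_one]
      rw [← NNReal.coe_lt_coe, hc, NNReal.coe_one]; linarith
  let Φ := happ.toHomeomorph G hN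
  have hΦ : ∀ x, Φ x = G x := fun x => rfl
  have hinv : ∀ x, Φ.symm (x + w x) = x := fun x => Φ.symm_apply_apply x
  have hinv2 : ∀ u, Φ.symm u + w (Φ.symm u) = u := fun u => Φ.apply_symm_apply u
  have hunit : ∀ x, IsUnit (fderiv ℝ G x) := by
    intro x
    have h1 : fderiv ℝ G x = 1 - (-fderiv ℝ w x) := by
      rw [hG, fderiv_fun_add differentiableAt_fun_id (hd x), fderiv_fun_id]
      rw [sub_neg_eq_add]; rfl
    rw [h1]
    exact isUnit_one_sub_of_norm_lt_one (by rw [norm_neg]; linarith [hb x])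
  have hsm : ContDiff ℝ ∞ Φ.symm := by
    rw [contDiff_iff_contDiffAt]
    intro u
    obtain ⟨U, hU⟩ := hunit (Φ.symm u)
    let e := ContinuousLinearEquiv.unitsEquiv ℝ (E d) U
    have he : (e : E d →L[ℝ] E d) = fderiv ℝ G (Φ.symm u) := by
      rw [← hU]; rfl
    refine Φ.toOpenPartialHomeomorph.contDiffAt_symm (f₀' := e) (mem_univ u) ?_ hGc.contDiffAt
    change HasFDerivAt G (e : E d →L[ℝ] E d) (Φ.symm u)
    rw [he]
    exact (hGc.differentiable (by simp) _).hasFDerivAt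
  refine ⟨Φ.symm, hsm, hinv, hinv2, fun u => ?_⟩
  have hHd : Differentiable ℝ Φ.symm := hsm.differentiable (by simp)
  set A := fderiv ℝ Φ.symm u with hA
  have hEq : A + (fderiv ℝ w (Φ.symm u)).comp A = ContinuousLinearMap.id ℝ (E d) := by
    have h1 : HasFDerivAt (fun u => Φ.symm u + w (Φ.symm u))
        (A + (fderiv ℝ w (Φ.symm u)).comp A) u :=
      (hHd u).hasFDerivAt.add ((hd _).hasFDerivAt.comp u (hHd u).hasFDerivAt)
    have h2 : (fun u => Φ.symm u + w (Φ.symm u)) = id := funext hinv2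
    rw [h2] at h1
    exact h1.unique (hasFDerivAt_id u)
  have h3 : A - ContinuousLinearMap.id ℝ (E d) = -(fderiv ℝ w (Φ.symm u)).comp A := by
    rw [← hEq]; abel
  have h4 : ‖A - ContinuousLinearMap.id ℝ (E d)‖ ≤ ε * ‖A‖ := by
    rw [h3, norm_neg]
    exact (ContinuousLinearMap.opNorm_comp_le _ _).trans
      (mul_le_mul_of_nonneg_right (hb _) (norm_nonneg _))
  have h5 : ‖A‖ ≤ ‖A - ContinuousLinearMap.id ℝ (E d)‖ + 1 := by
    calc ‖A‖ = ‖(A - ContinuousLinearMap.id ℝ (E d)) + ContinuousLinearMap.id ℝ (E d)‖ := by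
          rw [sub_add_cancel]
      _ ≤ _ := (norm_add_le _ _).trans (by gcongr; exact ContinuousLinearMap.norm_id_le)
  nlinarith [norm_nonneg A]
end Inverse

/-! ### Primitives along a coordinate direction -/

section Prim
variable {d : ℕ}

/-- The standard basis vectors. -/
noncomputable def e (i : Fin d) : E d := EuclideanSpace.single i 1

/-- The linear map multiplying the `i`-th coordinate by `t` and fixing the others. -/
noncomputable def L (i : Fin d) (t : ℝ) : E d →L[ℝ] E d :=
  ContinuousLinearMap.id ℝ (E d) + (t - 1) • (EuclideanSpace.proj (𝕜 := ℝ) i).smulRight (e i)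

lemma e_apply (i j : Fin d) : e i j = if j = i then 1 else 0 := by
  simp [e]

lemma e_self (i : Fin d) : e i i = 1 := by simp [e_apply]

lemma e_ne {i j : Fin d} (h : j ≠ i) : e i j = 0 := by simp [e_apply, h]

lemma norm_e (i : Fin d) : ‖e i‖ = 1 := by simp [e]

lemma norm_coord_le (u : E d) (i : Fin d) : |u i| ≤ ‖u‖ := by
  simpa using PiLp.norm_apply_le u i

lemma norm_proj_le (i : Fin d) : ‖(EuclideanSpace.proj i : E d →L[ℝ] ℝ)‖ ≤ 1 :=
  ContinuousLinearMap.opNorm_le_bound _ zero_le_one fun u => by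
    simpa using norm_coord_le u i

lemma L_eq (i : Fin d) (t : ℝ) (u : E d) : L i t u = u + ((t - 1) * u i) • e i := by
  simp [L, smul_smul]

lemma L_apply (i : Fin d) (t : ℝ) (u : E d) (j : Fin d) :
    L i t u j = if j = i then t * u i else u j := by
  rw [L_eq]
  by_cases h : j = i
  · subst h; simp [e_apply]; ring
  · simp [e_apply, h]

lemma L_one (i : Fin d) (u : E d) : L i 1 u = u := by simp [L_eq]

lemma L_e_self (i : Fin d) (t : ℝ) : L i t (e i) = t • e i := by
  rw [L_eq, e_self, mul_one]; module

lemma L_e_ne {i j : Fin d} (h : i ≠ j) (t : ℝ) : L i t (e j) = e j := by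
  rw [L_eq, e_ne h]; simp

lemma norm_L_apply_le (i : Fin d) {t : ℝ} (h0 : 0 ≤ t) (h1 : t ≤ 1) (u : E d) :
    ‖L i t u‖ ≤ ‖u‖ := by
  rw [EuclideanSpace.norm_eq, EuclideanSpace.norm_eq]
  refine Real.sqrt_le_sqrt (Finset.sum_le_sum fun j _ => ?_)
  rw [L_apply]
  split_ifs with h
  · subst h
    rw [norm_mul, Real.norm_of_nonneg h0]
    gcongr
    exact mul_le_of_le_one_left (norm_nonneg _) h1
  · exact le_rfl

lemma norm_L_le (i : Fin d) {t : ℝ} (h0 : 0 ≤ t) (h1 : t ≤ 1) : ‖L i t‖ ≤ 1 :=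
  ContinuousLinearMap.opNorm_le_bound _ zero_le_one fun u => by
    simpa using norm_L_apply_le i h0 h1 u

lemma contDiff_L (i : Fin d) : ContDiff ℝ ∞ (fun p : ℝ × E d => L i p.1 p.2) := by
  simp only [L_eq]
  have : ContDiff ℝ ∞ (fun p : ℝ × E d => p.2 i) :=
    (EuclideanSpace.proj (𝕜 := ℝ) i).contDiff.comp contDiff_snd
  fun_prop

lemma hasDerivAt_L (i : Fin d) (u : E d) (t : ℝ) :
    HasDerivAt (fun t => L i t u) (u i • e i) t := by
  simp only [L_eq]
  have h : HasDerivAt (fun t : ℝ => (t - 1) * u i) (u i) t := by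
    simpa using ((hasDerivAt_id t).sub_const 1).mul_const (u i)
  exact (h.smul_const (e i)).const_add u

lemma continuous_L (i : Fin d) : Continuous (fun t => L i t) := by
  unfold L; fun_prop

/-- The function with `i`-th partial derivative `w` and equal to `a` on `{uᵢ = 0}`; it is
`a + ∫₀^{uᵢ} w`, with the integral rescaled to `[0,1]`. -/
noncomputable def prim (i : Fin d) (a w : E d → ℝ) (u : E d) : ℝ :=
  a (L i 0 u) + u i * ∫ t in (0:ℝ)..1, w (L i t u)

variable {i : Fin d} {a w : E d → ℝ}

lemma contDiff_prim (i : Fin d) (ha : ContDiff ℝ ∞ a) (hw : ContDiff ℝ ∞ w) :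
    ContDiff ℝ ∞ (prim i a w) := by
  have h1 := contDiff_paramIntegral (fun p : ℝ × E d => w (L i p.1 p.2))
    (hw.comp (contDiff_L i))
  have h2 : ContDiff ℝ ∞ (fun u : E d => u i) := (EuclideanSpace.proj (𝕜 := ℝ) i).contDiff
  unfold prim
  exact (ha.comp (L i 0).contDiff).add (h2.mul h1)

lemma hasFDerivAt_integral_L (i : Fin d) (hw : ContDiff ℝ ∞ w) (u : E d) :
    HasFDerivAt (fun u => ∫ t in (0:ℝ)..1, w (L i t u))
      (∫ t in (0:ℝ)..1, (fderiv ℝ w (L i t u)).comp (L i t)) u := by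
  have h := hasFDerivAt_paramIntegral (fun p : ℝ × E d => w (L i p.1 p.2))
    (hw.comp (contDiff_L i)) u
  have hd : Differentiable ℝ w := hw.differentiable (by simp)
  refine h.congr_fderiv (intervalIntegral.integral_congr fun t _ => ?_)
  have h1 : HasFDerivAt (fun v => w (L i t v)) ((fderiv ℝ w (L i t u)).comp (L i t)) u :=
    (hd _).hasFDerivAt.comp u (L i t).hasFDerivAt
  have h2 : HasFDerivAt (fun v => w (L i t v))
      ((fderiv ℝ (fun p : ℝ × E d => w (L i p.1 p.2)) (t, u)).comp
        (ContinuousLinearMap.inr ℝ ℝ (E d))) u :=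
    (((hw.comp (contDiff_L i)).differentiable (by simp)) (t, u)).hasFDerivAt.comp u
      (hasFDerivAt_prodMk_right t u)
  exact h2.unique h1

lemma hasFDerivAt_prim (i : Fin d) (ha : ContDiff ℝ ∞ a) (hw : ContDiff ℝ ∞ w) (u : E d) :
    HasFDerivAt (prim i a w)
      ((fderiv ℝ a (L i 0 u)).comp (L i 0) +
        (u i • (∫ t in (0:ℝ)..1, (fderiv ℝ w (L i t u)).comp (L i t)) +
        (∫ t in (0:ℝ)..1, w (L i t u)) • (EuclideanSpace.proj i : E d →L[ℝ] ℝ))) u := by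
  have h0 : HasFDerivAt (fun u => a (L i 0 u)) ((fderiv ℝ a (L i 0 u)).comp (L i 0)) u :=
    (ha.differentiable (by simp) _).hasFDerivAt.comp u (L i 0).hasFDerivAt
  have h1 : HasFDerivAt (fun u : E d => u i) (EuclideanSpace.proj i : E d →L[ℝ] ℝ) u :=
    (EuclideanSpace.proj (𝕜 := ℝ) i).hasFDerivAt
  exact h0.add (h1.mul (hasFDerivAt_integral_L i hw u))

lemma continuous_fderiv_L (i : Fin d) (hw : ContDiff ℝ ∞ w) (u : E d) :
    Continuous fun t => (fderiv ℝ w (L i t u)).comp (L i t) := by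
  have h1 : Continuous (fderiv ℝ w) := hw.continuous_fderiv (by simp)
  have h2 := continuous_L i
  have h3 : Continuous fun t => L i t u := h2.clm_apply continuous_const
  exact (h1.comp h3).clm_comp h2

lemma fderiv_prim_apply (i : Fin d) (ha : ContDiff ℝ ∞ a) (hw : ContDiff ℝ ∞ w) (u h : E d) :
    fderiv ℝ (prim i a w) u h = fderiv ℝ a (L i 0 u) (L i 0 h) +
      (u i * (∫ t in (0:ℝ)..1, fderiv ℝ w (L i t u) (L i t h)) +
        (∫ t in (0:ℝ)..1, w (L i t u)) * h i) := by
  rw [(hasFDerivAt_prim i ha hw u).fderiv]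
  have := ContinuousLinearMap.intervalIntegral_apply
    ((continuous_fderiv_L i hw u).intervalIntegrable (μ := volume) 0 1) h
  simp only [ContinuousLinearMap.comp_apply] at this
  rw [← this]
  rfl

lemma fderiv_prim_self (i : Fin d) (ha : ContDiff ℝ ∞ a) (hw : ContDiff ℝ ∞ w) (u : E d) :
    fderiv ℝ (prim i a w) u (e i) = w u := by
  rw [fderiv_prim_apply i ha hw]
  have hd : Differentiable ℝ w := hw.differentiable (by simp)
  have h3 : Continuous fun t => L i t u := (continuous_L i).clm_apply continuous_const
  have hc : Continuous fun t => w (L i t u) := hw.continuous.comp h3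
  have hc' : Continuous fun t => fderiv ℝ w (L i t u) (L i t (e i)) :=
    (continuous_fderiv_L i hw u).clm_apply continuous_const
  have key : ∫ t in (0:ℝ)..1, (u i * fderiv ℝ w (L i t u) (L i t (e i)) + w (L i t u)) =
      1 * w (L i 1 u) - 0 * w (L i 0 u) := by
    refine intervalIntegral.integral_eq_sub_of_hasDerivAt
      (f := fun t => t * w (L i t u)) (fun t _ => ?_) ?_
    · have h1 : HasDerivAt (fun t => w (L i t u)) (fderiv ℝ w (L i t u) (u i • e i)) t :=
        (hd _).hasFDerivAt.comp_hasDerivAt t (hasDerivAt_L i u t)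
      refine ((hasDerivAt_id t).mul h1).congr_deriv ?_
      rw [L_e_self]
      simp only [map_smul, smul_eq_mul, id]
      ring
    · exact ((continuous_const.mul hc').add hc).intervalIntegrable _ _
  have hc2 : Continuous fun t => u i * fderiv ℝ w (L i t u) (L i t (e i)) := by fun_prop
  rw [intervalIntegral.integral_add (hc2.intervalIntegrable _ _)
    (hc.intervalIntegrable _ _), intervalIntegral.integral_const_mul, L_one] at key
  rw [e_self, mul_one, key, L_e_self]
  simp

lemma prim_fderiv_self (i : Fin d) {β : E d → ℝ} (hβ : ContDiff ℝ ∞ β) (u : E d) :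
    prim i β (fun u => fderiv ℝ β u (e i)) u = β u := by
  have hd : Differentiable ℝ β := hβ.differentiable (by simp)
  have h3 : Continuous fun t => L i t u := (continuous_L i).clm_apply continuous_const
  have hc' : Continuous fun t => fderiv ℝ β (L i t u) (e i) :=
    ((hβ.continuous_fderiv (by simp)).comp h3).clm_apply continuous_const
  have key : ∫ t in (0:ℝ)..1, (u i * fderiv ℝ β (L i t u) (e i)) =
      β (L i 1 u) - β (L i 0 u) := by
    refine intervalIntegral.integral_eq_sub_of_hasDerivAt
      (f := fun t => β (L i t u)) (fun t _ => ?_) ?_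
    · refine ((hd _).hasFDerivAt.comp_hasDerivAt t (hasDerivAt_L i u t)).congr_deriv ?_
      simp
    · exact (continuous_const.mul hc').intervalIntegrable _ _
  rw [intervalIntegral.integral_const_mul, L_one] at key
  rw [prim, key]
  ring

/-- Poincaré lemma in the two variables `i ≠ j`: the form `α duᵢ + β duⱼ` has a potential
in these two variables. -/
lemma exists_potential {i j : Fin d} (hij : i ≠ j) {α β : E d → ℝ}
    (hα : ContDiff ℝ ∞ α) (hβ : ContDiff ℝ ∞ β)
    (hcl : ∀ u, fderiv ℝ α u (e j) = fderiv ℝ β u (e i)) (u : E d) :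
    fderiv ℝ (prim i (prim j 0 β) α) u (e i) = α u ∧
    fderiv ℝ (prim i (prim j 0 β) α) u (e j) = β u := by
  have h0 : ContDiff ℝ ∞ (0 : E d → ℝ) := contDiff_const
  have hp := contDiff_prim j h0 hβ
  refine ⟨fderiv_prim_self i hp hα u, ?_⟩
  rw [fderiv_prim_apply i hp hα, ← prim_fderiv_self i hβ u]
  simp only [L_e_ne hij, hcl, fderiv_prim_self j h0 hβ, e_ne hij, mul_zero, add_zero]
  rfl

/-- `a` and its derivative are bounded by `ε` on the closed ball of radius `R`. -/
def Sm {F : Type} [NormedAddCommGroup F] [NormedSpace ℝ F] (R ε : ℝ) (a : E d → F) : Prop :=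
  ∀ x, ‖x‖ ≤ R → ‖a x‖ ≤ ε ∧ ‖fderiv ℝ a x‖ ≤ ε

lemma Sm.prim {R ε : ℝ} (i : Fin d) (hR : 0 ≤ R) (ha : ContDiff ℝ ∞ a) (hw : ContDiff ℝ ∞ w)
    (sa : Sm R ε a) (sw : Sm R ε w) : Sm R ((2 + R) * ε) (prim i a w) := by
  intro u hu
  have hε : 0 ≤ ε := (norm_nonneg _).trans (sa 0 (by simpa using hR)).1
  have hL : ∀ t : ℝ, 0 ≤ t → t ≤ 1 → ‖L i t u‖ ≤ R := fun t h0 h1 =>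
    (norm_L_apply_le i h0 h1 u).trans hu
  have hui : |u i| ≤ R := (norm_coord_le u i).trans hu
  have I1 : ‖∫ t in (0:ℝ)..1, w (L i t u)‖ ≤ ε := by
    have := intervalIntegral.norm_integral_le_of_norm_le_const (a := (0:ℝ)) (b := 1)
      (f := fun t => w (L i t u)) (C := ε) fun t ht => by
        rw [uIoc_of_le zero_le_one] at ht
        exact (sw _ (hL t ht.1.le ht.2)).1
    simpa using this
  have hcomp : ∀ (A : E d →L[ℝ] ℝ) (t : ℝ), 0 ≤ t → t ≤ 1 → ‖A‖ ≤ ε → ‖A.comp (L i t)‖ ≤ ε := by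
    intro A t h0 h1 hA
    calc _ ≤ ‖A‖ * ‖L i t‖ := ContinuousLinearMap.opNorm_comp_le _ _
      _ ≤ ε * 1 := by gcongr; exact norm_L_le i h0 h1
      _ = ε := mul_one _
  have I2 : ‖∫ t in (0:ℝ)..1, (fderiv ℝ w (L i t u)).comp (L i t)‖ ≤ ε := by
    have := intervalIntegral.norm_integral_le_of_norm_le_const (a := (0:ℝ)) (b := 1)
      (f := fun t => (fderiv ℝ w (L i t u)).comp (L i t)) (C := ε) fun t ht => by
        rw [uIoc_of_le zero_le_one] at ht
        exact hcomp _ t ht.1.le ht.2 (sw _ (hL t ht.1.le ht.2)).2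
    simpa using this
  have s0 := sa _ (hL 0 le_rfl zero_le_one)
  constructor
  · calc ‖LocalLin.prim i a w u‖ ≤ ‖a (L i 0 u)‖ + |u i| * ‖∫ t in (0:ℝ)..1, w (L i t u)‖ := by
          unfold LocalLin.prim
          refine (norm_add_le _ _).trans ?_
          rw [norm_mul, Real.norm_eq_abs (u i)]
      _ ≤ ε + R * ε := by gcongr; exact s0.1
      _ ≤ (2 + R) * ε := by nlinarith
  · rw [(hasFDerivAt_prim i ha hw u).fderiv]
    refine ((norm_add_le _ _).trans (add_le_add le_rfl (norm_add_le _ _))).trans ?_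
    calc _ ≤ ε + (|u i| * ε + ε * 1) := by
          rw [norm_smul, norm_smul, Real.norm_eq_abs (u i)]
          gcongr
          · exact hcomp _ 0 le_rfl zero_le_one s0.2
          · exact norm_proj_le i
      _ ≤ ε + (R * ε + ε * 1) := by gcongr
      _ ≤ _ := by nlinarith
end Prim

/-! ### Maps defined by a generating function -/

section Step
variable {d : ℕ}

lemma det_comp' (A B : E d →L[ℝ] E d) : (A.comp B).det = A.det * B.det :=
  LinearMap.det_comp (A : E d →ₗ[ℝ] E d) (B : E d →ₗ[ℝ] E d)

lemma det_id' : (ContinuousLinearMap.id ℝ (E d)).det = 1 := LinearMap.det_id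

/-- The matrix determinant lemma for the identity plus a rank-one map. -/
lemma det_id_add_smulRight (α : E d →L[ℝ] ℝ) (v : E d) :
    (ContinuousLinearMap.id ℝ (E d) + α.smulRight v).det = 1 + α v := by
  have := LinearMap.transvection.det (α : E d →ₗ[ℝ] ℝ) v
  rw [← ContinuousLinearMap.coe_coe α, ← this]
  rfl

lemma det_mul_det_inverse {w H : E d → E d} (hw : Differentiable ℝ w) (hH : Differentiable ℝ H)
    (h : ∀ u, H u + w (H u) = u) (u : E d) :
    (ContinuousLinearMap.id ℝ (E d) + fderiv ℝ w (H u)).det * (fderiv ℝ H u).det = 1 := by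
  have h1 : HasFDerivAt (fun u => H u + w (H u))
      ((ContinuousLinearMap.id ℝ (E d) + fderiv ℝ w (H u)).comp (fderiv ℝ H u)) u :=
    (((hasFDerivAt_id (H u)).add (hw (H u)).hasFDerivAt).comp u (hH u).hasFDerivAt :)
  rw [show (fun u => H u + w (H u)) = id from funext h] at h1
  rw [← det_comp', h1.unique (hasFDerivAt_id u), det_id']

lemma hasFDerivAt_smul_e {a : E d → ℝ} (ha : Differentiable ℝ a) (i : Fin d) (u : E d) :
    HasFDerivAt (fun u => a u • e i) ((fderiv ℝ a u).smulRight (e i)) u :=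
  (ha u).hasFDerivAt.smul_const (e i)

lemma norm_smulRight_e (A : E d →L[ℝ] ℝ) (i : Fin d) : ‖A.smulRight (e i)‖ = ‖A‖ := by
  rw [ContinuousLinearMap.norm_smulRight_apply, norm_e, mul_one]

/-- If `‖A - id‖ ≤ α` and `‖B - id‖ ≤ β` then `‖A B - id‖ ≤ α + β + α β`. -/
lemma norm_comp_sub_id_le {A B : E d →L[ℝ] E d} {α β : ℝ}
    (hA : ‖A - ContinuousLinearMap.id ℝ (E d)‖ ≤ α)
    (hB : ‖B - ContinuousLinearMap.id ℝ (E d)‖ ≤ β) :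
    ‖A.comp B - ContinuousLinearMap.id ℝ (E d)‖ ≤ α + β + α * β := by
  set I := ContinuousLinearMap.id ℝ (E d)
  have : A.comp B - I = (A - I) + (B - I) + (A - I).comp (B - I) := by
    ext1 x
    simp [I]
    abel
  rw [this]
  refine (norm_add_le _ _).trans (add_le_add ((norm_add_le _ _).trans (add_le_add hA hB)) ?_)
  exact (ContinuousLinearMap.opNorm_comp_le _ _).trans
    (mul_le_mul hA hB (norm_nonneg _) ((norm_nonneg _).trans hA))

/-- A generating function `S` in the mixed variables `u` defines the volume-preserving map
`u + ∂ⱼS(u) eᵢ ↦ u + ∂ᵢS(u) eⱼ`: both sides have Jacobian `1 + ∂ᵢ∂ⱼS`. -/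
lemma exists_generated {i j : Fin d} {S : E d → ℝ} (hS : ContDiff ℝ ∞ S) {ε : ℝ}
    (hε : ε ≤ 1 / 2)
    (hi : ∀ u, ‖fderiv ℝ (fun u => fderiv ℝ S u (e i)) u‖ ≤ ε)
    (hj : ∀ u, ‖fderiv ℝ (fun u => fderiv ℝ S u (e j)) u‖ ≤ ε) :
    ∃ h : E d → E d, ContDiff ℝ ∞ h ∧ (∀ x, (fderiv ℝ h x).det = 1) ∧
      (∀ x, ‖fderiv ℝ h x - ContinuousLinearMap.id ℝ (E d)‖ ≤ 4 * ε) ∧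
      ∀ u, h (u + fderiv ℝ S u (e j) • e i) = u + fderiv ℝ S u (e i) • e j := by
  have hε0 : 0 ≤ ε := (norm_nonneg _).trans (hi 0)
  set a : E d → ℝ := fun u => fderiv ℝ S u (e i) with ha
  set b : E d → ℝ := fun u => fderiv ℝ S u (e j) with hb
  have hDS : ContDiff ℝ ∞ (fderiv ℝ S) := hS.fderiv_right (m := ∞) (by simp)
  have hac : ContDiff ℝ ∞ a := hDS.clm_apply contDiff_const
  have hbc : ContDiff ℝ ∞ b := hDS.clm_apply contDiff_const
  have had : Differentiable ℝ a := hac.differentiable (by simp)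
  have hbd : Differentiable ℝ b := hbc.differentiable (by simp)
  have hsymm : ∀ u, fderiv ℝ a u (e j) = fderiv ℝ b u (e i) := by
    intro u
    have hDd : DifferentiableAt ℝ (fderiv ℝ S) u := hDS.differentiable (by simp) u
    have h1 : fderiv ℝ a u (e j) = fderiv ℝ (fderiv ℝ S) u (e j) (e i) := by
      rw [ha, fderiv_clm_apply hDd (differentiableAt_const _)]
      simp
    have h2 : fderiv ℝ b u (e i) = fderiv ℝ (fderiv ℝ S) u (e i) (e j) := by
      rw [hb, fderiv_clm_apply hDd (differentiableAt_const _)]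
      simp
    rw [h1, h2]
    exact (hS.contDiffAt.isSymmSndFDerivAt
      (by simpa using WithTop.coe_le_coe.2 (le_top : (2 : ℕ∞) ≤ ⊤))) (e j) (e i)
  have hwD : ∀ u, fderiv ℝ (fun u => b u • e i) u = (fderiv ℝ b u).smulRight (e i) :=
    fun u => (hasFDerivAt_smul_e hbd i u).fderiv
  have hwc : ContDiff ℝ ∞ (fun u => b u • e i) := hbc.smul contDiff_const
  obtain ⟨H, hHc, hH1, hH2, hHb⟩ := exists_inverse (fun u => b u • e i) hwc hε fun x => by
    rw [hwD, norm_smulRight_e]; exact hj x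
  have hHd : Differentiable ℝ H := hHc.differentiable (by simp)
  have hR : ∀ x, HasFDerivAt (fun x => H x + a (H x) • e j)
      ((ContinuousLinearMap.id ℝ (E d) + (fderiv ℝ a (H x)).smulRight (e j)).comp
        (fderiv ℝ H x)) x := fun x =>
    (((hasFDerivAt_id (H x)).add (hasFDerivAt_smul_e had j (H x))).comp x (hHd x).hasFDerivAt :)
  refine ⟨fun x => H x + a (H x) • e j, hHc.add ((hac.comp hHc).smul contDiff_const), ?_, ?_, ?_⟩
  · intro x
    rw [(hR x).fderiv, det_comp', det_id_add_smulRight, hsymm]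
    have := det_mul_det_inverse (hwc.differentiable (by simp)) hHd hH2 x
    rwa [hwD, det_id_add_smulRight] at this
  · intro x
    rw [(hR x).fderiv]
    refine (norm_comp_sub_id_le (α := ε) ?_ (hHb x)).trans (by nlinarith)
    rw [add_sub_cancel_left, norm_smulRight_e]
    exact hi _
  · intro u
    change H (u + b u • e i) + a (H (u + b u • e i)) • e j = u + a u • e j
    rw [hH1 u]
end Step

/-! ### Smoothness and size of the inverse determinant -/

section Det
variable {d : ℕ}

lemma contDiff_det : ContDiff ℝ ∞ (fun A : E d →L[ℝ] E d => A.det) := by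
  have h : (fun A : E d →L[ℝ] E d => A.det) = fun A => Matrix.det (Matrix.of fun i j => A (e j) i) := by
    ext1 A
    have := LinearMap.det_toMatrix (EuclideanSpace.basisFun (Fin d) ℝ).toBasis (A : E d →ₗ[ℝ] E d)
    change LinearMap.det (A : E d →ₗ[ℝ] E d) = _
    rw [← this]
    congr 1
  rw [h]
  simp only [Matrix.det_apply, Matrix.of_apply]
  refine ContDiff.sum fun σ _ => ContDiff.const_smul _ (contDiff_prod fun i _ => ?_)
  have : ContDiff ℝ ∞ (fun A : E d →L[ℝ] E d => A (e i)) := contDiff_id.clm_apply contDiff_const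
  exact (EuclideanSpace.proj (𝕜 := ℝ) (σ i)).contDiff.comp this

/-- The function `A ↦ 1 / det (id + A)`. -/
noncomputable def invDet (A : E d →L[ℝ] E d) : ℝ := (ContinuousLinearMap.id ℝ (E d) + A).det⁻¹

lemma det_id_add_ne_zero {A : E d →L[ℝ] E d} (hA : ‖A‖ < 1) :
    (ContinuousLinearMap.id ℝ (E d) + A).det ≠ 0 := by
  have h1 : IsUnit (1 - (-A)) := isUnit_one_sub_of_norm_lt_one (by rwa [norm_neg])
  rw [sub_neg_eq_add] at h1
  obtain ⟨B, hB⟩ := h1.exists_right_inv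
  have h2 : (ContinuousLinearMap.id ℝ (E d) + A).det * B.det = 1 := by
    rw [← det_comp', ← det_id']
    exact congrArg ContinuousLinearMap.det hB
  exact left_ne_zero_of_mul_eq_one h2

lemma contDiffAt_invDet {A : E d →L[ℝ] E d} (hA : ‖A‖ < 1) : ContDiffAt ℝ ∞ invDet A := by
  unfold invDet
  exact (contDiff_det.comp (contDiff_const.add contDiff_id)).contDiffAt.inv
    (det_id_add_ne_zero hA)

lemma exists_invDet_bound (d : ℕ) : ∃ C : ℝ, 1 ≤ C ∧ ∀ A : E d →L[ℝ] E d, ‖A‖ ≤ 1 / 2 →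
    |invDet A - 1| ≤ C * ‖A‖ ∧ ‖fderiv ℝ invDet A‖ ≤ C := by
  have hd : ∀ A : E d →L[ℝ] E d, A ∈ closedBall (0 : E d →L[ℝ] E d) (1/2) →
      DifferentiableAt ℝ invDet A := fun A hA =>
    (contDiffAt_invDet (by rw [mem_closedBall_zero_iff] at hA; linarith)).differentiableAt (by simp)
  have hc : ContinuousOn (fderiv ℝ (invDet (d := d))) (closedBall 0 (1/2)) := fun A hA =>
    ((contDiffAt_invDet (by rw [mem_closedBall_zero_iff] at hA; linarith)).fderiv_right
      (m := 0) (by simp)).continuousAt.continuousWithinAt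
  have hk : IsCompact (closedBall (0 : E d →L[ℝ] E d) (1/2)) := isCompact_closedBall _ _
  obtain ⟨C, hC'⟩ := hk.bddAbove_image
    (ContinuousOn.norm (E := (E d →L[ℝ] E d) →L[ℝ] ℝ) hc)
  have hC : ∀ A ∈ closedBall (0 : E d →L[ℝ] E d) (1/2), ‖fderiv ℝ invDet A‖ ≤ C :=
    fun A hA => hC' (mem_image_of_mem _ hA)
  refine ⟨max C 1, le_max_right _ _, fun A hA => ?_⟩
  have hA' : A ∈ closedBall (0 : E d →L[ℝ] E d) (1/2) := by rwa [mem_closedBall_zero_iff]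
  refine ⟨?_, (hC A hA').trans (le_max_left _ _)⟩
  have h0 : invDet (0 : E d →L[ℝ] E d) = 1 := by
    unfold invDet; rw [add_zero, det_id', inv_one]
  have := (convex_closedBall (0 : E d →L[ℝ] E d) (1/2)).norm_image_sub_le_of_norm_fderiv_le hd
    (fun B hB => (hC B hB).trans (le_max_left C 1))
    (mem_closedBall_self (by norm_num)) hA'
  rwa [h0, sub_zero] at this

end Det

/-! ### The chain of mixed coordinates -/

section Chain
variable {d : ℕ}

/-- The projection onto the first `k` coordinates. -/
noncomputable def Pr (d k : ℕ) : E d →L[ℝ] E d :=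
  ∑ i : Fin d, if i.val < k then (EuclideanSpace.proj (𝕜 := ℝ) i).smulRight (e i) else 0

lemma Pr_apply (k : ℕ) (x : E d) (j : Fin d) : Pr d k x j = if j.val < k then x j else 0 := by
  have : Pr d k x = ∑ i : Fin d, (if i.val < k then x i else 0) • e i := by
    unfold Pr
    rw [sum_apply]
    refine Finset.sum_congr rfl fun i _ => ?_
    split_ifs <;> simp
  rw [this, WithLp.ofLp_sum, Finset.sum_apply, Finset.sum_eq_single j]
  · rw [PiLp.smul_apply, e_self]; simp
  · intro i _ hi
    rw [PiLp.smul_apply, e_ne hi.symm]; simp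
  · simp

lemma norm_Pr_apply_le (k : ℕ) (x : E d) : ‖Pr d k x‖ ≤ ‖x‖ := by
  rw [EuclideanSpace.norm_eq, EuclideanSpace.norm_eq]
  refine Real.sqrt_le_sqrt (Finset.sum_le_sum fun j _ => ?_)
  rw [Pr_apply]
  split_ifs with h
  · exact le_rfl
  · simp; positivity

lemma norm_Pr_le (k : ℕ) : ‖Pr d k‖ ≤ 1 :=
  ContinuousLinearMap.opNorm_le_bound _ zero_le_one fun u => by
    simpa using norm_Pr_apply_le k u

lemma Pr_zero : Pr d 0 = 0 := by
  ext x j; simp [Pr_apply]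

lemma Pr_top (x : E d) : Pr d d x = x := by
  ext j; simp [Pr_apply]

lemma Pr_succ (i : Fin d) (x : E d) : Pr d (i.val + 1) x = Pr d i.val x + x i • e i := by
  ext j
  simp only [Pr_apply, PiLp.add_apply, PiLp.smul_apply, e_apply, smul_eq_mul]
  rcases lt_trichotomy j.val i.val with h | h | h
  · have : j ≠ i := fun hh => by simp [hh] at h
    simp [h, this, Nat.lt_succ_of_lt h]
  · have : j = i := Fin.ext h
    subst this; simp
  · have : j ≠ i := fun hh => by simp [hh] at h
    have h2 : ¬ j.val < i.val + 1 := by omega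
    have h3 : ¬ j.val < i.val := by omega
    simp [h2, h3, this]

/-- A globally defined `C²`-small displacement `v` fixing the origin, for which `id + v` is
volume preserving on the ball of radius `19/10`. -/
structure Pert (v : E d → E d) (ε : ℝ) : Prop where
  smooth : ContDiff ℝ ∞ v
  small : ε ≤ 1 / 20
  b0 : ∀ x, ‖v x‖ ≤ ε
  b1 : ∀ x, ‖fderiv ℝ v x‖ ≤ ε
  b2 : ∀ x, ‖fderiv ℝ (fderiv ℝ v) x‖ ≤ ε
  zero : v 0 = 0
  det : ∀ x, ‖x‖ < 19 / 10 → (ContinuousLinearMap.id ℝ (E d) + fderiv ℝ v x).det = 1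

/-- The mixed coordinates: the first `k` coordinates of `x + v x` and the other ones of `x`. -/
noncomputable def G (v : E d → E d) (k : ℕ) (x : E d) : E d := x + Pr d k (v x)

/-- The inverse of the change of coordinates `G v k`. -/
noncomputable def H (v : E d → E d) (k : ℕ) : E d → E d := Function.invFun (G v k)

variable {v : E d → E d} {ε : ℝ}

lemma Pert.nonneg (hv : Pert v ε) : 0 ≤ ε := (norm_nonneg _).trans (hv.b0 0)

lemma Pert.fderiv_Pr (hv : Pert v ε) (k : ℕ) (x : E d) :
    fderiv ℝ (fun x => Pr d k (v x)) x = (Pr d k).comp (fderiv ℝ v x) :=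
  ((Pr d k).hasFDerivAt.comp x (hv.smooth.differentiable (by simp) x).hasFDerivAt).fderiv

lemma Pert.norm_Pr_comp (hv : Pert v ε) (k : ℕ) (x : E d) :
    ‖(Pr d k).comp (fderiv ℝ v x)‖ ≤ ε :=
  (ContinuousLinearMap.opNorm_comp_le _ _).trans <|
    (mul_le_of_le_one_left (norm_nonneg _) (norm_Pr_le k)).trans (hv.b1 x)

lemma Pert.contDiff_Pr (hv : Pert v ε) (k : ℕ) : ContDiff ℝ ∞ (fun x => Pr d k (v x)) :=
  (Pr d k).contDiff.comp hv.smooth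

lemma Pert.H_spec (hv : Pert v ε) (k : ℕ) :
    ContDiff ℝ ∞ (H v k) ∧ (∀ x, H v k (G v k x) = x) ∧ (∀ u, G v k (H v k u) = u) ∧
      ∀ u, ‖fderiv ℝ (H v k) u - ContinuousLinearMap.id ℝ (E d)‖ ≤ 2 * ε := by
  obtain ⟨H', h1, h2, h3, h4⟩ := exists_inverse (fun x => Pr d k (v x)) (hv.contDiff_Pr k)
    (ε := ε) (by linarith [hv.small]) fun x => by
      rw [hv.fderiv_Pr]; exact hv.norm_Pr_comp k x
  have hinj : Function.Injective (G v k) := Function.LeftInverse.injective h2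
  have : H v k = H' := by
    ext1 u
    apply hinj
    have h5 : G v k (H v k u) = u := Function.invFun_eq (f := G v k) ⟨H' u, h3 u⟩
    rw [h5]
    exact (h3 u).symm
  rw [this]
  exact ⟨h1, h2, h3, h4⟩

lemma Pert.diff_H (hv : Pert v ε) (k : ℕ) : Differentiable ℝ (H v k) :=
  (hv.H_spec k).1.differentiable (by simp)

lemma Pert.norm_H_sub (hv : Pert v ε) (k : ℕ) (u : E d) : ‖H v k u - u‖ ≤ ε := by
  have h := (hv.H_spec k).2.2.1 u
  have : H v k u - u = - Pr d k (v (H v k u)) := by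
    nth_rw 2 [← h]
    simp [G]
  rw [this, norm_neg]
  exact (norm_Pr_apply_le k _).trans (hv.b0 _)

lemma Pert.norm_fderiv_H (hv : Pert v ε) (k : ℕ) (u : E d) : ‖fderiv ℝ (H v k) u‖ ≤ 2 := by
  have h := (hv.H_spec k).2.2.2 u
  calc _ = ‖(fderiv ℝ (H v k) u - ContinuousLinearMap.id ℝ (E d)) +
        ContinuousLinearMap.id ℝ (E d)‖ := by rw [sub_add_cancel]
    _ ≤ 2 * ε + 1 := (norm_add_le _ _).trans (add_le_add h ContinuousLinearMap.norm_id_le)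
    _ ≤ 2 := by linarith [hv.small]

/-- The Jacobian of `H v k`. -/
noncomputable def J (v : E d → E d) (k : ℕ) (u : E d) : ℝ :=
  invDet ((Pr d k).comp (fderiv ℝ v (H v k u)))

lemma Pert.J_eq (hv : Pert v ε) (k : ℕ) (u : E d) : J v k u = (fderiv ℝ (H v k) u).det := by
  have := det_mul_det_inverse ((hv.contDiff_Pr k).differentiable (by simp)) (hv.diff_H k)
    (hv.H_spec k).2.2.1 u
  rw [hv.fderiv_Pr] at this
  rw [J, invDet]
  exact (eq_inv_of_mul_eq_one_right this).symm

lemma Pert.contDiff_J (hv : Pert v ε) (k : ℕ) : ContDiff ℝ ∞ (J v k) := by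
  have h : ContDiff ℝ ∞ (fun u => (Pr d k).comp (fderiv ℝ v (H v k u))) :=
    contDiff_const.clm_comp
      ((hv.smooth.fderiv_right (m := ∞) (by simp)).comp (hv.H_spec k).1)
  rw [contDiff_iff_contDiffAt]
  intro u
  refine ContDiffAt.comp u (contDiffAt_invDet ?_) h.contDiffAt
  exact (hv.norm_Pr_comp k _).trans_lt (by linarith [hv.small])

lemma Pert.sm_J (hv : Pert v ε) {C : ℝ} (hC1 : 1 ≤ C) (hC : ∀ A : E d →L[ℝ] E d, ‖A‖ ≤ 1 / 2 →
    |invDet A - 1| ≤ C * ‖A‖ ∧ ‖fderiv ℝ invDet A‖ ≤ C) (k : ℕ) (R : ℝ) :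
    Sm R (2 * C * ε) (fun u => J v k u - 1) := by
  intro u _
  have hε := hv.nonneg
  have hn := hv.norm_Pr_comp k (H v k u)
  have hh := hC _ (hn.trans (by linarith [hv.small]))
  constructor
  · calc _ ≤ C * ‖(Pr d k).comp (fderiv ℝ v (H v k u))‖ := hh.1
      _ ≤ C * ε := by gcongr
      _ ≤ _ := by nlinarith [mul_nonneg (by linarith : 0 ≤ C) hε]
  · have h1 : HasFDerivAt (fun u => fderiv ℝ v (H v k u))
        ((fderiv ℝ (fderiv ℝ v) (H v k u)).comp (fderiv ℝ (H v k) u)) u :=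
      (((hv.smooth.fderiv_right (m := ∞) (by simp)).differentiable (by simp)) _).hasFDerivAt.comp u
        (hv.diff_H k u).hasFDerivAt
    have h2 : HasFDerivAt (fun u => (Pr d k).comp (fderiv ℝ v (H v k u)))
        ((ContinuousLinearMap.compL ℝ (E d) (E d) (E d) (Pr d k)).comp
        ((fderiv ℝ (fderiv ℝ v) (H v k u)).comp (fderiv ℝ (H v k) u))) u :=
      (ContinuousLinearMap.compL ℝ (E d) (E d) (E d) (Pr d k)).hasFDerivAt.comp u h1
    have h3 := (((contDiffAt_invDet (hn.trans_lt (by linarith [hv.small]))).differentiableAt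
      (by simp)).hasFDerivAt.comp u h2).sub_const (1:ℝ)
    have h4 : ‖(ContinuousLinearMap.compL ℝ (E d) (E d) (E d) (Pr d k))‖ ≤ 1 :=
      ((ContinuousLinearMap.compL ℝ (E d) (E d) (E d)).le_opNorm _).trans
        (mul_le_one₀ (ContinuousLinearMap.norm_compL_le ..) (norm_nonneg _) (norm_Pr_le k))
    have h5 : fderiv ℝ (fun u => J v k u - 1) u = _ := h3.fderiv
    rw [h5]
    refine (ContinuousLinearMap.opNorm_comp_le _ _).trans ?_
    refine (mul_le_mul_of_nonneg_left (ContinuousLinearMap.opNorm_comp_le _ _) (norm_nonneg _)).trans ?_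
    have h6 : ‖(fderiv ℝ (fderiv ℝ v) (H v k u)).comp (fderiv ℝ (H v k) u)‖ ≤ ε * 2 :=
      (ContinuousLinearMap.opNorm_comp_le _ _).trans
        (mul_le_mul (hv.b2 _) (hv.norm_fderiv_H k u) (norm_nonneg _) hε)
    calc _ ≤ C * (1 * (ε * 2)) := by
          gcongr
          exact hh.2
      _ = _ := by ring

end Chain

/-! ### Decomposition into maps moving two coordinates -/

section SmLemmas
variable {d : ℕ} {a b : E d → ℝ} {R R' ε ε' : ℝ}

lemma Sm.mono (h : Sm R ε a) (hR : R' ≤ R) (hε : ε ≤ ε') : Sm R' ε' a := fun x hx =>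
  ⟨(h x (hx.trans hR)).1.trans hε, (h x (hx.trans hR)).2.trans hε⟩

lemma Sm.add (ha : Differentiable ℝ a) (hb : Differentiable ℝ b) (sa : Sm R ε a)
    (sb : Sm R ε' b) : Sm R (ε + ε') (fun x => a x + b x) := fun x hx => by
  refine ⟨(norm_add_le _ _).trans (add_le_add (sa x hx).1 (sb x hx).1), ?_⟩
  have h : fderiv ℝ (fun x => a x + b x) x = _ := ((ha x).hasFDerivAt.add (hb x).hasFDerivAt).fderiv
  rw [h]
  exact (norm_add_le _ _).trans (add_le_add (sa x hx).2 (sb x hx).2)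

lemma Sm.comp {K : E d → E d} (ha : Differentiable ℝ a) (hK : Differentiable ℝ K)
    (sa : Sm R ε a) (h1 : ∀ x, ‖x‖ ≤ R' → ‖K x‖ ≤ R)
    (h2 : ∀ x, ‖fderiv ℝ K x‖ ≤ 2) : Sm R' (2 * ε) (fun x => a (K x)) := fun x hx => by
  have h := sa _ (h1 x hx)
  have hε : 0 ≤ ε := (norm_nonneg _).trans h.1
  refine ⟨h.1.trans (by linarith), ?_⟩
  have h' : fderiv ℝ (fun x => a (K x)) x = _ :=
    ((ha (K x)).hasFDerivAt.comp x (hK x).hasFDerivAt).fderiv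
  rw [h']
  calc _ ≤ ε * 2 := (ContinuousLinearMap.opNorm_comp_le _ _).trans
        (mul_le_mul h.2 (h2 x) (norm_nonneg _) hε)
    _ = _ := by ring

end SmLemmas

section Chain
variable {d : ℕ} {v : E d → E d} {ε : ℝ}

/-- The `i`-th coordinate of the displacement, as a function of the mixed coordinates
`u = G v k x`. -/
noncomputable def disp (v : E d → E d) (k : ℕ) (i : Fin d) (u : E d) : ℝ := v (H v k u) i

/-- The displacement in the `i`-th coordinate from the mixed coordinates `u = G v i x` to
`Fm v i x`: a primitive of `J v i - 1` in the variable `i`, so that `Fm v i` has Jacobian `1`.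
The initial value for `i = 0` is chosen to make `Fm v 0` the identity, and the one for `i > 0`
to make the last map equal to `id + v`. -/
noncomputable def c (v : E d → E d) (i : Fin d) : E d → ℝ :=
  prim i (if i.val = 0 then 0 else disp v i.val i) (fun u => J v i.val u - 1)

/-- The map passing from the mixed coordinates `i + 1` to the mixed coordinates `i`. -/
noncomputable def K (v : E d → E d) (i : Fin d) (u : E d) : E d :=
  u + (- disp v (i.val + 1) i u) • e i

/-- The displacement in the `i`-th coordinate from the mixed coordinates `u = G v (i + 1) x` to
`Fm v i x`; see `Pert.Fm_eq_bet`. -/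
noncomputable def bet (v : E d → E d) (i : Fin d) (u : E d) : ℝ :=
  - disp v (i.val + 1) i u + c v i (K v i u)

/-- The `i`-th intermediate volume-preserving map: its first `i` coordinates are those
of `id + v`, and the later ones except the `i`-th are those of `id`. -/
noncomputable def Fm (v : E d → E d) (i : Fin d) (x : E d) : E d :=
  G v i.val x + c v i (G v i.val x) • e i

lemma Pert.contDiff_disp (hv : Pert v ε) (k : ℕ) (i : Fin d) : ContDiff ℝ ∞ (disp v k i) :=
  (EuclideanSpace.proj (𝕜 := ℝ) i).contDiff.comp (hv.smooth.comp (hv.H_spec k).1)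

lemma Pert.diff_disp (hv : Pert v ε) (k : ℕ) (i : Fin d) : Differentiable ℝ (disp v k i) :=
  (hv.contDiff_disp k i).differentiable (by simp)

lemma Pert.sm_disp (hv : Pert v ε) (k : ℕ) (i : Fin d) (R : ℝ) : Sm R (2 * ε) (disp v k i) := by
  have hd : Differentiable ℝ (fun x => v x i) :=
    ((EuclideanSpace.proj (𝕜 := ℝ) i).contDiff.comp hv.smooth).differentiable (by simp)
  refine Sm.comp (a := fun x => v x i) (R := R + ε) hd (hv.diff_H k) ?_ ?_ (hv.norm_fderiv_H k)
  · intro x _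
    refine ⟨(norm_coord_le _ _).trans (hv.b0 x), ?_⟩
    have : HasFDerivAt (fun x => v x i) ((EuclideanSpace.proj (𝕜 := ℝ) i).comp (fderiv ℝ v x)) x :=
      (EuclideanSpace.proj (𝕜 := ℝ) i).hasFDerivAt.comp x
        (hv.smooth.differentiable (by simp) x).hasFDerivAt
    rw [this.fderiv]
    exact (ContinuousLinearMap.opNorm_comp_le _ _).trans
      ((mul_le_of_le_one_left (norm_nonneg _) (norm_proj_le i)).trans (hv.b1 x))
  · intro x hx
    have := norm_add_le (H v k x - x) x
    rw [sub_add_cancel] at this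
    linarith [hv.norm_H_sub k x]

lemma Pert.contDiff_ini (hv : Pert v ε) (i : Fin d) :
    ContDiff ℝ ∞ (if i.val = 0 then 0 else disp v i.val i) := by
  split_ifs
  · exact contDiff_const
  · exact hv.contDiff_disp _ _

lemma Pert.contDiff_c (hv : Pert v ε) (i : Fin d) : ContDiff ℝ ∞ (c v i) :=
  contDiff_prim i (hv.contDiff_ini i) ((hv.contDiff_J _).sub contDiff_const)

lemma Pert.diff_c (hv : Pert v ε) (i : Fin d) : Differentiable ℝ (c v i) :=
  (hv.contDiff_c i).differentiable (by simp)

lemma Pert.fderiv_c (hv : Pert v ε) (i : Fin d) (u : E d) :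
    fderiv ℝ (c v i) u (e i) = J v i.val u - 1 :=
  fderiv_prim_self i (hv.contDiff_ini i) ((hv.contDiff_J _).sub contDiff_const) u

lemma Pert.sm_c (hv : Pert v ε) {C : ℝ} (hC1 : 1 ≤ C) (hC : ∀ A : E d →L[ℝ] E d, ‖A‖ ≤ 1 / 2 →
    |invDet A - 1| ≤ C * ‖A‖ ∧ ‖fderiv ℝ invDet A‖ ≤ C) (i : Fin d) :
    Sm 5 (14 * (C * ε)) (c v i) := by
  have hε := hv.nonneg
  have hini : Sm 5 (2 * C * ε) (if i.val = 0 then 0 else disp v i.val i) := by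
    split_ifs
    · intro x _
      have h0 : fderiv ℝ (0 : E d → ℝ) x = 0 := fderiv_const_apply _
      rw [h0]
      simp
      positivity
    · refine (hv.sm_disp i.val i 5).mono le_rfl ?_
      nlinarith
  refine (Sm.prim i (by norm_num) (hv.contDiff_ini i) ((hv.contDiff_J _).sub contDiff_const) hini
    (hv.sm_J hC1 hC i.val 5)).mono le_rfl (le_of_eq (by ring))

lemma Pert.G_eq_K (hv : Pert v ε) (i : Fin d) (u : E d) :
    G v i.val (H v (i.val + 1) u) = K v i u := by
  have h := (hv.H_spec (i.val + 1)).2.2.1 u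
  rw [G, Pr_succ, ← add_assoc] at h
  rw [K, neg_smul, ← sub_eq_add_neg, eq_sub_iff_add_eq]
  exact h

lemma Pert.hasFDerivAt_K (hv : Pert v ε) (i : Fin d) (u : E d) :
    HasFDerivAt (K v i) (ContinuousLinearMap.id ℝ (E d) +
      (-fderiv ℝ (disp v (i.val + 1) i) u).smulRight (e i)) u := by
  have h := hasFDerivAt_smul_e (hv.diff_disp (i.val + 1) i).neg i u
  have h' : fderiv ℝ (-disp v (i.val + 1) i) u = -fderiv ℝ (disp v (i.val + 1) i) u :=
    (hv.diff_disp (i.val + 1) i u).hasFDerivAt.neg.fderiv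
  rw [h'] at h
  exact (hasFDerivAt_id u).add h

lemma Pert.norm_K_le (hv : Pert v ε) (i : Fin d) (u : E d) : ‖K v i u‖ ≤ ‖u‖ + ε := by
  refine (norm_add_le _ _).trans (add_le_add le_rfl ?_)
  rw [norm_smul, norm_e, mul_one, norm_neg]
  exact (norm_coord_le _ _).trans (hv.b0 _)

lemma Pert.norm_fderiv_K_le (hv : Pert v ε) (i : Fin d) (u : E d) : ‖fderiv ℝ (K v i) u‖ ≤ 2 := by
  rw [(hv.hasFDerivAt_K i u).fderiv]
  refine (norm_add_le _ _).trans ?_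
  rw [norm_smulRight_e, norm_neg]
  have := (hv.sm_disp (i.val + 1) i ‖u‖ u le_rfl).2
  linarith [ContinuousLinearMap.norm_id_le (𝕜 := ℝ) (E := E d), hv.small]

lemma Pert.J_succ (hv : Pert v ε) (i : Fin d) (u : E d) :
    J v (i.val + 1) u =
      J v i.val (K v i u) * (1 - fderiv ℝ (disp v (i.val + 1) i) u (e i)) := by
  have hH : H v (i.val + 1) = fun u => H v i.val (K v i u) := by
    ext1 u
    rw [← hv.G_eq_K, (hv.H_spec _).2.1]
  have h : HasFDerivAt (fun u => H v i.val (K v i u)) _ u :=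
    (hv.diff_H i.val (K v i u)).hasFDerivAt.comp u (hv.hasFDerivAt_K i u)
  rw [← hH] at h
  rw [hv.J_eq, hv.J_eq, h.fderiv, det_comp', det_id_add_smulRight]
  rfl

lemma Pert.contDiff_K (hv : Pert v ε) (i : Fin d) : ContDiff ℝ ∞ (K v i) :=
  contDiff_id.add ((hv.contDiff_disp _ _).neg.smul contDiff_const)

lemma Pert.contDiff_bet (hv : Pert v ε) (i : Fin d) : ContDiff ℝ ∞ (bet v i) :=
  (hv.contDiff_disp _ _).neg.add ((hv.contDiff_c i).comp (hv.contDiff_K i))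

lemma Pert.fderiv_bet (hv : Pert v ε) (i : Fin d) (u : E d) :
    fderiv ℝ (bet v i) u (e i) = J v (i.val + 1) u - 1 := by
  have h : HasFDerivAt (bet v i) _ u := (hv.diff_disp (i.val + 1) i u).hasFDerivAt.neg.add
    ((hv.diff_c i (K v i u)).hasFDerivAt.comp u (hv.hasFDerivAt_K i u))
  have h2 : (ContinuousLinearMap.id ℝ (E d) +
      (-fderiv ℝ (disp v (i.val + 1) i) u).smulRight (e i)) (e i) =
      (1 - fderiv ℝ (disp v (i.val + 1) i) u (e i)) • e i := by
    simp [sub_eq_add_neg, add_smul]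
  rw [h.fderiv, add_apply, ContinuousLinearMap.comp_apply, h2, map_smul, hv.fderiv_c, hv.J_succ,
    neg_apply, smul_eq_mul]
  ring

lemma Pert.sm_bet (hv : Pert v ε) {C : ℝ} (hC1 : 1 ≤ C) (hC : ∀ A : E d →L[ℝ] E d, ‖A‖ ≤ 1 / 2 →
    |invDet A - 1| ≤ C * ‖A‖ ∧ ‖fderiv ℝ invDet A‖ ≤ C) (i : Fin d) :
    Sm 4 (30 * (C * ε)) (bet v i) := by
  have hε := hv.nonneg
  have h1 : Sm 4 (2 * ε) (fun u => - disp v (i.val + 1) i u) := fun x hx => by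
    have h := hv.sm_disp (i.val + 1) i 4 x hx
    have h' : fderiv ℝ (fun u => -disp v (i.val + 1) i u) x = -fderiv ℝ (disp v (i.val + 1) i) x :=
      (hv.diff_disp (i.val + 1) i x).hasFDerivAt.neg.fderiv
    rw [h', norm_neg, norm_neg]
    exact h
  have h2 := Sm.comp (hv.diff_c i) ((hv.contDiff_K i).differentiable (by simp)) (hv.sm_c hC1 hC i)
    (R' := 4) (fun x hx => (hv.norm_K_le i x).trans (by linarith [hv.small]))
    (hv.norm_fderiv_K_le i)
  refine (h1.add (hv.diff_disp _ _).neg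
    ((hv.diff_c i).comp ((hv.contDiff_K i).differentiable (by simp))) h2).mono le_rfl ?_
  nlinarith

/-- The generating function of the factor `Fm v j ∘ (Fm v i)⁻¹` for consecutive `i, j`. -/
lemma Pert.exists_S (hv : Pert v ε) {C : ℝ} (hC1 : 1 ≤ C)
    (hC : ∀ A : E d →L[ℝ] E d, ‖A‖ ≤ 1 / 2 →
      |invDet A - 1| ≤ C * ‖A‖ ∧ ‖fderiv ℝ invDet A‖ ≤ C) {i j : Fin d}
    (hij : j.val = i.val + 1) :
    ∃ S : E d → ℝ, ContDiff ℝ ∞ S ∧ Sm 4 (1080 * (C * ε)) S ∧ Sm 4 (1080 * (C * ε)) (c v j) ∧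
      Sm 4 (1080 * (C * ε)) (bet v i) ∧ (∀ u, fderiv ℝ S u (e i) = c v j u) ∧
      (∀ u, fderiv ℝ S u (e j) = bet v i u) := by
  have hCε : 0 ≤ C * ε := mul_nonneg (by linarith) hv.nonneg
  have hne : i ≠ j := fun h => by rw [h] at hij; omega
  have h0 : ContDiff ℝ ∞ (0 : E d → ℝ) := contDiff_const
  have s0 : Sm 4 (30 * (C * ε)) (0 : E d → ℝ) := fun x _ => by
    have h0 : fderiv ℝ (0 : E d → ℝ) x = 0 := fderiv_const_apply _
    rw [h0]
    simp
    linarith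
  have hb := hv.sm_bet hC1 hC i
  have hc : Sm 4 (14 * (C * ε)) (c v j) := (hv.sm_c hC1 hC j).mono (by norm_num) le_rfl
  have hp := contDiff_prim j h0 (hv.contDiff_bet i)
  have sp := Sm.prim j (by norm_num) h0 (hv.contDiff_bet i) s0 hb
  have hpot := exists_potential hne (hv.contDiff_c j) (hv.contDiff_bet i) fun u => by
    rw [hv.fderiv_c, hv.fderiv_bet, hij]
  refine ⟨prim i (prim j 0 (bet v i)) (c v j), contDiff_prim i hp (hv.contDiff_c j), ?_,
    hc.mono le_rfl (by linarith), hb.mono le_rfl (by linarith), fun u => (hpot u).1,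
    fun u => (hpot u).2⟩
  exact (Sm.prim i (by norm_num) hp (hv.contDiff_c j) sp
    (hc.mono le_rfl (by linarith))).mono le_rfl (by linarith)

lemma Pert.Fm_eq_bet (hv : Pert v ε) (i : Fin d) (x : E d) :
    G v (i.val + 1) x + bet v i (G v (i.val + 1) x) • e i = Fm v i x := by
  have h := hv.G_eq_K i (G v (i.val + 1) x)
  rw [(hv.H_spec _).2.1] at h
  rw [Fm, h, bet, add_smul, ← add_assoc]
  rfl

lemma Pert.Fm_zero (i : Fin d) (hi : i.val = 0) (x : E d) : Fm v i x = x := by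
  have hJ : ∀ u, J v 0 u = 1 := fun u => by
    rw [J, Pr_zero, invDet]
    simp [det_id']
  have hG : G v 0 x = x := by simp [G, Pr_zero]
  have hc : c v i x = 0 := by
    rw [c, hi, prim]
    simp [hJ]
  rw [Fm, hi, hG, hc, zero_smul, add_zero]

lemma Pert.fderiv_disp_last (hv : Pert v ε) (i : Fin d) (hi : i.val + 1 = d) (w : E d)
    (hw : ‖H v i.val w‖ < 19 / 10) :
    fderiv ℝ (disp v i.val i) w (e i) = J v i.val w - 1 := by
  have heq : (fun w => H v i.val w + v (H v i.val w)) = fun w => w + disp v i.val i w • e i := by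
    ext1 w
    have h := (hv.H_spec i.val).2.2.1 w
    have h2 := Pr_succ i (v (H v i.val w))
    rw [hi, Pr_top] at h2
    conv_lhs => rw [h2, ← add_assoc]
    change G v i.val (H v i.val w) + _ = _
    rw [h]
    rfl
  have h1 : HasFDerivAt (fun w => H v i.val w + v (H v i.val w))
      ((ContinuousLinearMap.id ℝ (E d) + fderiv ℝ v (H v i.val w)).comp
        (fderiv ℝ (H v i.val) w)) w :=
    (((hasFDerivAt_id _).add (hv.smooth.differentiable (by simp) _).hasFDerivAt).comp w
      (hv.diff_H i.val w).hasFDerivAt :)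
  rw [heq] at h1
  have h2 : HasFDerivAt (fun w => w + disp v i.val i w • e i) (ContinuousLinearMap.id ℝ (E d) +
      (fderiv ℝ (disp v i.val i) w).smulRight (e i)) w :=
    (hasFDerivAt_id w).add (hasFDerivAt_smul_e (hv.diff_disp i.val i) i w)
  have h3 := congrArg ContinuousLinearMap.det (h1.unique h2)
  rw [det_comp', hv.det _ hw, ← hv.J_eq, det_id_add_smulRight] at h3
  linarith

lemma Pert.Fm_last (hv : Pert v ε) (i : Fin d) (hi : i.val + 1 = d) (x : E d)
    (hx : ‖x‖ < 17 / 10) : Fm v i x = x + v x := by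
  set u := G v i.val x with hu
  have hHu : H v i.val u = x := (hv.H_spec _).2.1 x
  have hun : ‖u‖ ≤ ‖x‖ + ε :=
    (norm_add_le _ _).trans (add_le_add le_rfl ((norm_Pr_apply_le _ _).trans (hv.b0 x)))
  have hini : (if i.val = 0 then 0 else disp v i.val i) (L i 0 u) = disp v i.val i (L i 0 u) := by
    split_ifs with h0
    · have hL : L i 0 u = 0 := by
        ext j
        have : j = i := by apply Fin.ext; omega
        rw [this, L_apply]; simp
      have hG : G v i.val 0 = 0 := by simp [G, hv.zero]
      have hH : H v i.val 0 = 0 := by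
        have := (hv.H_spec i.val).2.1 0
        rwa [hG] at this
      rw [hL, disp, hH, hv.zero]
      rfl
    · rfl
  have hc : c v i u = v x i := by
    have h1 := prim_fderiv_self i (hv.contDiff_disp i.val i) u
    rw [prim] at h1
    rw [c, prim, hini]
    have h2 : disp v i.val i u = v x i := by rw [disp, hHu]
    rw [← h2, ← h1]
    congr 2
    refine intervalIntegral.integral_congr fun t ht => ?_
    rw [uIcc_of_le zero_le_one] at ht
    refine (hv.fderiv_disp_last i hi _ ?_).symm
    have h3 := norm_add_le (H v i.val (L i t u) - L i t u) (L i t u)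
    rw [sub_add_cancel] at h3
    linarith [hv.norm_H_sub i.val (L i t u), norm_L_apply_le i ht.1 ht.2 u, hv.small]
  have h2 := Pr_succ i (v x)
  rw [hi, Pr_top] at h2
  rw [Fm, ← hu, hc, hu, G, add_assoc, ← h2]

end Chain

/-! ### Cutting off the generating functions -/

section Cutoff
variable {d : ℕ}

/-- A smooth cutoff function supported in the ball of radius `4`, with `C²` norm at most `M`. -/
structure Cut (ρ : E d → ℝ) (M : ℝ) : Prop where
  smooth : ContDiff ℝ ∞ ρ
  b0 : ∀ x, ‖ρ x‖ ≤ M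
  b1 : ∀ x, ‖fderiv ℝ ρ x‖ ≤ M
  b2 : ∀ x, ‖fderiv ℝ (fderiv ℝ ρ) x‖ ≤ M
  out : ∀ x, 4 < ‖x‖ → ρ x = 0

variable {ρ S : E d → ℝ} {M ε : ℝ}

lemma fderiv_cut (hρ : ContDiff ℝ ∞ ρ) (hS : ContDiff ℝ ∞ S) (i : Fin d) :
    (fun u => fderiv ℝ (fun u => ρ u * S u) u (e i)) =
      fun u => ρ u * fderiv ℝ S u (e i) + S u * fderiv ℝ ρ u (e i) := by
  ext1 u
  have h : HasFDerivAt (fun u => ρ u * S u) _ u :=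
    (hρ.differentiable (by simp) u).hasFDerivAt.mul (hS.differentiable (by simp) u).hasFDerivAt
  rw [h.fderiv]
  simp

lemma Cut.bound (hρ : Cut ρ M) (hS : ContDiff ℝ ∞ S) (i : Fin d) (s : Sm 4 ε S)
    (s' : Sm 4 ε (fun u => fderiv ℝ S u (e i))) (u : E d) :
    ‖fderiv ℝ (fun u => fderiv ℝ (fun u => ρ u * S u) u (e i)) u‖ ≤ 4 * M * ε := by
  have hM : 0 ≤ M := (norm_nonneg _).trans (hρ.b0 0)
  have hε : 0 ≤ ε := (norm_nonneg _).trans (s 0 (by simp)).1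
  rcases le_or_gt ‖u‖ 4 with hu | hu
  · rw [fderiv_cut hρ.smooth hS]
    have hDρ : ContDiff ℝ ∞ (fderiv ℝ ρ) := hρ.smooth.fderiv_right (m := ∞) (by simp)
    have hDS : ContDiff ℝ ∞ (fun u => fderiv ℝ S u (e i)) :=
      (hS.fderiv_right (m := ∞) (by simp)).clm_apply contDiff_const
    have hp : HasFDerivAt (fun u => fderiv ℝ ρ u (e i))
        ((fderiv ℝ (fderiv ℝ ρ) u).flip (e i)) u := by
      refine ((hDρ.differentiable (by simp) u).hasFDerivAt.clm_apply
        (hasFDerivAt_const (e i) u)).congr_fderiv ?_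
      simp
    have hpn : ‖(fderiv ℝ (fderiv ℝ ρ) u).flip (e i)‖ ≤ M := by
      refine ((ContinuousLinearMap.le_opNorm _ _)).trans ?_
      rw [norm_e, mul_one, ContinuousLinearMap.opNorm_flip]
      exact hρ.b2 u
    have hpn' : ‖fderiv ℝ ρ u (e i)‖ ≤ M := by
      refine ((ContinuousLinearMap.le_opNorm _ _)).trans ?_
      rw [norm_e, mul_one]
      exact hρ.b1 u
    have h : fderiv ℝ (fun u => ρ u * fderiv ℝ S u (e i) + S u * fderiv ℝ ρ u (e i)) u = _ :=
      (((hρ.smooth.differentiable (by simp) u).hasFDerivAt.mul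
        (hDS.differentiable (by simp) u).hasFDerivAt).add
        ((hS.differentiable (by simp) u).hasFDerivAt.mul hp)).fderiv
    rw [h]
    refine (norm_add_le _ _).trans ((add_le_add (norm_add_le _ _) (norm_add_le _ _)).trans ?_)
    rw [norm_smul, norm_smul, norm_smul, norm_smul]
    have t1 := mul_le_mul (hρ.b0 u) (s' u hu).2 (norm_nonneg _) hM
    have t2 := mul_le_mul (s' u hu).1 (hρ.b1 u) (norm_nonneg _) hε
    have t3 := mul_le_mul (s u hu).1 hpn (norm_nonneg _) hε
    have t4 := mul_le_mul hpn' (s u hu).2 (norm_nonneg _) hM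
    linarith
  · have h0 : (fun u => ρ u * S u) =ᶠ[𝓝 u] fun _ => 0 := by
      filter_upwards [(isOpen_lt continuous_const continuous_norm).mem_nhds hu] with y hy
      rw [hρ.out y hy, zero_mul]
    have h1 : (fun u => fderiv ℝ (fun u => ρ u * S u) u (e i)) =ᶠ[𝓝 u] fun _ => 0 := by
      filter_upwards [h0.fderiv (𝕜 := ℝ)] with y hy
      rw [hy]; simp
    rw [h1.fderiv_eq]
    simp
    positivity

/-- The cut-off version of the decomposition of `id + v` into maps given by generating
functions, up to the `k`-th intermediate map. -/
lemma exists_partial {C : ℝ} (hC1 : 1 ≤ C)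
    (hC : ∀ A : E d →L[ℝ] E d, ‖A‖ ≤ 1 / 2 →
      |invDet A - 1| ≤ C * ‖A‖ ∧ ‖fderiv ℝ invDet A‖ ≤ C) (M : ℝ) (hM : 0 ≤ M) (k : ℕ) :
    ∃ D : ℝ, 0 ≤ D ∧ ∀ (hk : k < d) (ρ : E d → ℝ), Cut ρ M → ∀ v ε, Pert v ε →
      4 * M * (1080 * (C * ε)) ≤ 1 / 2 → ∃ g : E d → E d, ContDiff ℝ ∞ g ∧
        (∀ x, (fderiv ℝ g x).det = 1) ∧
        (∀ x, ‖fderiv ℝ g x - ContinuousLinearMap.id ℝ (E d)‖ ≤ D * ε) ∧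
        (∀ x, ρ =ᶠ[𝓝 x] (fun _ => 0) → g x = x) ∧
        (∀ x, (∀ y, ‖y - x‖ ≤ ε → ρ =ᶠ[𝓝 y] (fun _ => 1)) → g x = Fm v ⟨k, hk⟩ x) := by
  induction k with
  | zero =>
    refine ⟨0, le_rfl, fun hk ρ hρ v ε hv _ => ⟨id, contDiff_id, ?_, ?_, fun _ _ => rfl, ?_⟩⟩
    · intro x; rw [fderiv_id, det_id']
    · intro x; rw [fderiv_id]; simp
    · intro x _; exact (Pert.Fm_zero (v := v) ⟨0, hk⟩ rfl x).symm
  | succ k ih =>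
    obtain ⟨D, hD, ih⟩ := ih
    refine ⟨4 * (4 * M * (1080 * C)) + 3 * D, by positivity, fun hk ρ hρ v ε hv hε => ?_⟩
    obtain ⟨g, g1, g2, g3, g4, g5⟩ := ih (Nat.lt_of_succ_lt hk) ρ hρ v ε hv hε
    set i : Fin d := ⟨k, Nat.lt_of_succ_lt hk⟩ with hi
    set j : Fin d := ⟨k + 1, hk⟩ with hj
    obtain ⟨S, hS, s0, s1, s2, hSi, hSj⟩ := hv.exists_S hC1 hC (i := i) (j := j) rfl
    obtain ⟨h, h1, h2, h3, h4⟩ := exists_generated (i := i) (j := j) (hρ.smooth.mul hS)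
      (ε := 4 * M * (1080 * (C * ε))) hε
      (hρ.bound hS i s0 (by rwa [show (fun u => fderiv ℝ S u (e i)) = c v j from funext hSi]))
      (hρ.bound hS j s0 (by rwa [show (fun u => fderiv ℝ S u (e j)) = bet v i from funext hSj]))
    have hcomp : ∀ x, fderiv ℝ (fun x => h (g x)) x = (fderiv ℝ h (g x)).comp (fderiv ℝ g x) :=
      fun x => ((h1.differentiable (by simp) _).hasFDerivAt.comp x
        (g1.differentiable (by simp) x).hasFDerivAt).fderiv
    refine ⟨fun x => h (g x), h1.comp g1, fun x => ?_, fun x => ?_, fun x hx => ?_, fun x hx => ?_⟩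
    · rw [hcomp, det_comp', h2, g2, mul_one]
    · rw [hcomp]
      refine (norm_comp_sub_id_le (h3 (g x)) (g3 x)).trans ?_
      have := mul_nonneg hD hv.nonneg
      nlinarith
    · have h0 : fderiv ℝ (fun u => ρ u * S u) x = 0 := by
        have : (fun u => ρ u * S u) =ᶠ[𝓝 x] fun _ => 0 := by
          filter_upwards [hx] with y hy
          rw [hy, zero_mul]
        rw [this.fderiv_eq]; simp
      have := h4 x
      rw [h0] at this
      simp only [zero_apply, zero_smul, add_zero] at this
      change h (g x) = x
      rw [g4 x hx, this]
    · set u := G v (k + 1) x with hu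
      have hux : ‖u - x‖ ≤ ε := by
        rw [hu, G, add_sub_cancel_left]
        exact (norm_Pr_apply_le _ _).trans (hv.b0 x)
      have h0 : fderiv ℝ (fun u => ρ u * S u) u = fderiv ℝ S u := by
        have : (fun u => ρ u * S u) =ᶠ[𝓝 u] S := by
          filter_upwards [hx u hux] with y hy
          rw [hy, one_mul]
        rw [this.fderiv_eq]
      have := h4 u
      rw [h0, hSi, hSj, hv.Fm_eq_bet i x] at this
      change h (g x) = _
      rw [g5 x hx, this]
      rfl

/-- The cut-off of a small volume-preserving perturbation `id + v` of the identity: a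
volume-preserving map equal to the identity where `ρ = 0` and to `id + v` where `ρ = 1`. -/
theorem exists_cutoff (hd : 1 ≤ d) (M : ℝ) (hM : 0 ≤ M) :
    ∃ D : ℝ, 0 < D ∧ ∀ (ρ : E d → ℝ), Cut ρ M → ∀ v ε, Pert v ε → D * ε ≤ 1 →
      ∃ g : E d → E d, ContDiff ℝ ∞ g ∧ (∀ x, (fderiv ℝ g x).det = 1) ∧
        (∀ x, ‖fderiv ℝ g x - ContinuousLinearMap.id ℝ (E d)‖ ≤ D * ε) ∧
        (∀ x, ρ =ᶠ[𝓝 x] (fun _ => 0) → g x = x) ∧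
        (∀ x, ‖x‖ < 17 / 10 → (∀ y, ‖y - x‖ ≤ ε → ρ =ᶠ[𝓝 y] (fun _ => 1)) →
          g x = x + v x) := by
  obtain ⟨C, hC1, hC⟩ := exists_invDet_bound d
  obtain ⟨D, hD, h⟩ := exists_partial hC1 hC M hM (d - 1)
  refine ⟨D + 2 * (4 * M * (1080 * C)) + 1, by positivity, fun ρ hρ v ε hv hε => ?_⟩
  have hε0 := hv.nonneg
  have hDε := mul_nonneg hD hε0
  obtain ⟨g, g1, g2, g3, g4, g5⟩ := h (by omega) ρ hρ v ε hv (by nlinarith)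
  have : 0 ≤ 2 * (4 * M * (1080 * C)) * ε := by positivity
  refine ⟨g, g1, g2, fun x => (g3 x).trans (by nlinarith), g4, fun x hx hx' => ?_⟩
  rw [g5 x hx']
  exact hv.Fm_last _ (by simp; omega) x hx

end Cutoff

/-! ### Cutoff functions adapted to a compact set -/

section Cutoffs
variable {d : ℕ}

lemma exists_C2_bound {ψ : E d → ℝ} (hψ : ContDiff ℝ ∞ ψ) (hout : ∀ x, 4 < ‖x‖ → ψ x = 0) :
    ∃ M : ℝ, 0 ≤ M ∧ ∀ n : ℕ, n ≤ 2 → ∀ x, ‖iteratedFDeriv ℝ n ψ x‖ ≤ M := by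
  have hs : HasCompactSupport ψ :=
    HasCompactSupport.intro (isCompact_closedBall (0 : E d) 4) fun x hx => hout x (by simpa using hx)
  have hb : ∀ n : ℕ, ∃ M : ℝ, ∀ x, ‖iteratedFDeriv ℝ n ψ x‖ ≤ M := fun n =>
    (hs.iteratedFDeriv (𝕜 := ℝ) n).exists_bound_of_continuous
      (hψ.continuous_iteratedFDeriv (m := n) (by exact_mod_cast le_top))
  choose m hm using hb
  have h0 : ∀ n, 0 ≤ m n := fun n => (norm_nonneg _).trans (hm n 0)
  refine ⟨m 0 + m 1 + m 2, by linarith [h0 0, h0 1, h0 2], fun n hn x => ?_⟩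
  have := hm n x
  interval_cases n <;> linarith [h0 0, h0 1, h0 2]

lemma norm_fderiv_fderiv {F : Type} [NormedAddCommGroup F] [NormedSpace ℝ F] (f : E d → F)
    (x : E d) : ‖fderiv ℝ (fderiv ℝ f) x‖ = ‖iteratedFDeriv ℝ 2 f x‖ := by
  rw [← norm_iteratedFDeriv_one, norm_iteratedFDeriv_fderiv]

lemma exists_cut {ψ : E d → ℝ} (hψ : ContDiff ℝ ∞ ψ) (hout : ∀ x, 4 < ‖x‖ → ψ x = 0) :
    ∃ M : ℝ, 0 ≤ M ∧ Cut ψ M := by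
  obtain ⟨M, hM, h⟩ := exists_C2_bound hψ hout
  refine ⟨M, hM, hψ, fun x => ?_, fun x => ?_, fun x => ?_, hout⟩
  · rw [← norm_iteratedFDeriv_zero (𝕜 := ℝ)]; exact h 0 (by norm_num) x
  · rw [← norm_iteratedFDeriv_one]; exact h 1 (by norm_num) x
  · rw [norm_fderiv_fderiv]; exact h 2 le_rfl x

lemma Cut.mono {ψ : E d → ℝ} {M M' : ℝ} (h : Cut ψ M) (hM : M ≤ M') : Cut ψ M' :=
  ⟨h.smooth, fun x => (h.b0 x).trans hM, fun x => (h.b1 x).trans hM, fun x => (h.b2 x).trans hM,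
    h.out⟩

/-- Cutoff functions vanishing near `Q` and equal to `1` at distance `≥ χ / 2` from `Q`, with
`C²` norms bounded independently of `Q`: only finitely many cutoffs, attached to the subsets
of a fixed finite net of the unit ball, are needed. -/
lemma exists_cuts (d : ℕ) {χ : ℝ} (hχ : 0 < χ) (hχ1 : χ ≤ 1) :
    ∃ M : ℝ, 0 ≤ M ∧ ∀ Q : Set (E d), Q ⊆ closedBall 0 1 → ∃ ρ, Cut ρ M ∧
      (∀ z ∈ Q, ρ =ᶠ[𝓝 z] fun _ => 0) ∧
      (∀ y, ‖y‖ ≤ 2 → χ / 2 ≤ infDist y Q → ρ =ᶠ[𝓝 y] fun _ => 1) := by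
  classical
  set δ := χ / 12 with hδ
  have hδ0 : 0 < δ := by positivity
  obtain ⟨t, -, htf, htc⟩ := (isCompact_closedBall (0 : E d) 1).finite_cover_balls hδ0
  lift t to Finset (E d) using htf
  let out : ContDiffBump (0 : E d) := ⟨3, 4, by norm_num, by norm_num⟩
  let bump : ∀ z : E d, ContDiffBump z := fun z => ⟨2 * δ, 3 * δ, by positivity, by linarith⟩
  let ρ : Finset (E d) → E d → ℝ := fun N x => out x * ∏ z ∈ N, (1 - bump z x)
  have hρ : ∀ N, ∃ M : ℝ, 0 ≤ M ∧ Cut (ρ N) M := fun N => by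
    refine exists_cut (out.contDiff.mul
      (contDiff_prod fun z _ => contDiff_const.sub (bump z).contDiff)) fun x hx => ?_
    have : out x = 0 := out.zero_of_le_dist (by rw [dist_zero_right]; exact hx.le)
    simp [ρ, this]
  choose M hM0 hM using hρ
  refine ⟨∑ N ∈ t.powerset, M N, Finset.sum_nonneg fun N _ => hM0 N, fun Q hQ => ?_⟩
  set N := t.filter fun z => infDist z Q < δ with hN
  refine ⟨ρ N, (hM N).mono (Finset.single_le_sum (fun N _ => hM0 N)
    (Finset.mem_powerset.2 (Finset.filter_subset _ _))), fun z hz => ?_, fun y hy hyQ => ?_⟩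
  · obtain ⟨w, hw, hzw⟩ := mem_iUnion₂.1 (htc (hQ hz))
    have hwN : w ∈ N := Finset.mem_filter.2 ⟨hw, (infDist_le_dist_of_mem hz).trans_lt
      (by rw [dist_comm]; exact hzw)⟩
    filter_upwards [ball_mem_nhds z hδ0] with y hy
    have : bump w y = 1 := (bump w).one_of_mem_closedBall (by
      have := dist_triangle y z w
      rw [mem_ball] at hy hzw
      rw [mem_closedBall]
      change _ ≤ 2 * δ
      linarith)
    simp only [ρ]
    rw [Finset.prod_eq_zero hwN (by rw [this, sub_self]), mul_zero]
  · filter_upwards [ball_mem_nhds y hδ0] with x hx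
    rw [mem_ball] at hx
    have h1 : out x = 1 := out.one_of_mem_closedBall (by
      have := dist_triangle x y 0
      rw [dist_zero_right y] at this
      rw [mem_closedBall]
      change _ ≤ (3 : ℝ)
      linarith)
    have h2 : ∏ z ∈ N, (1 - bump z x) = 1 := Finset.prod_eq_one fun z hz => by
      have hz := (Finset.mem_filter.1 hz).2
      have h3 : infDist y Q ≤ infDist z Q + dist y z := infDist_le_infDist_add_dist
      have h4 := dist_triangle y x z
      rw [dist_comm y x] at h4
      rw [(bump z).zero_of_le_dist (by change 3 * δ ≤ _; linarith), sub_zero]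
    simp only [ρ]
    rw [h1, h2, mul_one]

end Cutoffs

/-! ### Maps close to the identity on a ball, and volume preservation -/

section Global
variable {d : ℕ}

/-- A map that is `C¹`-close to the identity on a ball, with Jacobian `1`, is a
volume-preserving diffeomorphism onto its image. -/
lemma diffeo_of_close {g : E d → E d} (hg : ContDiffOn ℝ ∞ g (ball 0 2))
    (hb : ∀ x ∈ ball (0 : E d) 2, ‖fderiv ℝ g x - ContinuousLinearMap.id ℝ (E d)‖ ≤ 1 / 2)
    (hdet : ∀ x ∈ ball (0 : E d) 2, (fderiv ℝ g x).det = 1) :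
    InjOn g (ball 0 2) ∧ IsOpen (g '' ball 0 2) ∧
      (∃ ginv, ContDiffOn ℝ ∞ ginv (g '' ball 0 2) ∧ ∀ x ∈ ball (0 : E d) 2, ginv (g x) = x) ∧
      ∀ s ⊆ ball (0 : E d) 2, MeasurableSet s → volume (g '' s) = volume s := by
  have hd : ∀ x ∈ ball (0 : E d) 2, DifferentiableAt ℝ g x := fun x hx =>
    (hg.contDiffAt (isOpen_ball.mem_nhds hx)).differentiableAt (by simp)
  obtain ⟨c, hc⟩ : ∃ c : NNReal, (c : ℝ) = 1 / 2 := ⟨1 / 2, by simp⟩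
  have happ : ApproximatesLinearOn g ((ContinuousLinearEquiv.refl ℝ (E d) : E d →L[ℝ] E d))
      (ball 0 2) c := by
    rw [ApproximatesLinearOn.approximatesLinearOn_iff_lipschitzOnWith]
    refine (convex_ball (0 : E d) 2).lipschitzOnWith_of_nnnorm_hasFDerivWithin_le
      (f' := fun x => fderiv ℝ g x - ContinuousLinearMap.id ℝ (E d)) (fun x hx => ?_)
      fun x hx => ?_
    · exact ((hd x hx).hasFDerivAt.sub
        (ContinuousLinearMap.id ℝ (E d)).hasFDerivAt).hasFDerivWithinAt
    · rw [← NNReal.coe_le_coe, hc]; exact hb x hx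
  have hN : Subsingleton (E d) ∨ c <
      ‖((ContinuousLinearEquiv.refl ℝ (E d)).symm : E d →L[ℝ] E d)‖₊⁻¹ := by
    rcases subsingleton_or_nontrivial (E d) with h | h
    · exact Or.inl h
    · right
      have : ‖((ContinuousLinearEquiv.refl ℝ (E d)).symm : E d →L[ℝ] E d)‖₊ = 1 := by
        apply NNReal.eq
        exact ContinuousLinearMap.norm_id
      rw [this, inv_one]
      rw [← NNReal.coe_lt_coe, hc, NNReal.coe_one]; norm_num
  let Φ := happ.toOpenPartialHomeomorph g (ball 0 2) hN isOpen_ball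
  have hinj : InjOn g (ball 0 2) := Φ.injOn
  refine ⟨hinj, Φ.open_target, ⟨Φ.symm, ?_, fun x hx => Φ.left_inv hx⟩, fun s hs hsm => ?_⟩
  · intro u hu
    have hx : Φ.symm u ∈ ball (0 : E d) 2 := Φ.map_target hu
    have hunit : IsUnit (fderiv ℝ g (Φ.symm u)) := by
      have h1 : fderiv ℝ g (Φ.symm u) =
          1 - (-(fderiv ℝ g (Φ.symm u) - ContinuousLinearMap.id ℝ (E d))) := by
        rw [sub_neg_eq_add, add_comm]
        exact (sub_add_cancel _ _).symm
      rw [h1]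
      exact isUnit_one_sub_of_norm_lt_one (by rw [norm_neg]; linarith [hb _ hx])
    obtain ⟨U, hU⟩ := hunit
    let e := ContinuousLinearEquiv.unitsEquiv ℝ (E d) U
    have he : (e : E d →L[ℝ] E d) = fderiv ℝ g (Φ.symm u) := by
      rw [← hU]; rfl
    refine (Φ.contDiffAt_symm (f₀' := e) hu ?_
      (hg.contDiffAt (isOpen_ball.mem_nhds hx))).contDiffWithinAt
    change HasFDerivAt g (e : E d →L[ℝ] E d) (Φ.symm u)
    rw [he]
    exact (hd _ hx).hasFDerivAt
  · rw [← lintegral_abs_det_fderiv_eq_addHaar_image volume hsm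
      (fun x hx => (hd x (hs hx)).hasFDerivAt.hasFDerivWithinAt) (hinj.mono hs)]
    rw [setLIntegral_congr_fun (g := fun _ => 1) hsm fun x hx => by simp [hdet x (hs hx)]]
    simp

/-- A volume-preserving map that is `C¹`-close to the identity has Jacobian `1`. -/
lemma det_eq_one {f : E d → E d} (hf : ContDiffOn ℝ ∞ f (ball 0 2)) (hinj : InjOn f (ball 0 2))
    (hvol : ∀ s ⊆ ball (0 : E d) 2, MeasurableSet s → volume (f '' s) = volume s)
    (hpos : ∀ x ∈ ball (0 : E d) 2, 0 < (fderiv ℝ f x).det) :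
    ∀ x ∈ ball (0 : E d) 2, (fderiv ℝ f x).det = 1 := by
  have hd : ∀ x ∈ ball (0 : E d) 2, DifferentiableAt ℝ f x := fun x hx =>
    (hf.contDiffAt (isOpen_ball.mem_nhds hx)).differentiableAt (by simp)
  have hcont : ContinuousOn (fun x => ENNReal.ofReal |(fderiv ℝ f x).det|) (ball 0 2) := by
    have h1 : ContinuousOn (fderiv ℝ f) (ball 0 2) :=
      hf.continuousOn_fderiv_of_isOpen isOpen_ball (by simp)
    have h2 : ContinuousOn (fun x => (fderiv ℝ f x).det) (ball 0 2) :=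
      contDiff_det.continuous.comp_continuousOn h1
    exact ENNReal.continuous_ofReal.comp_continuousOn h2.abs
  have hae : (fun x => ENNReal.ofReal |(fderiv ℝ f x).det|)
      =ᵐ[volume.restrict (ball (0 : E d) 2)] fun _ => 1 := by
    refine ae_eq_of_forall_setLIntegral_eq_of_sigmaFinite₀
      (hcont.aemeasurable measurableSet_ball) aemeasurable_const fun s hs _ => ?_
    rw [Measure.restrict_restrict hs]
    have hs' : MeasurableSet (s ∩ ball (0 : E d) 2) := hs.inter measurableSet_ball
    rw [lintegral_abs_det_fderiv_eq_addHaar_image volume hs'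
      (fun x hx => (hd x hx.2).hasFDerivAt.hasFDerivWithinAt) (hinj.mono inter_subset_right),
      hvol _ inter_subset_right hs']
    simp
  intro x hx
  have h := Measure.eqOn_open_of_ae_eq hae isOpen_ball hcont continuousOn_const hx
  simp only [abs_of_pos (hpos x hx)] at h
  rwa [ENNReal.ofReal_eq_one] at h

end Global

/-! ### Extending the displacement of `f` -/

section Extension
variable {d : ℕ}

/-- The displacement `f x - f 0 - x`, cut off outside the ball of radius `19/10`, is a globally
defined small perturbation. -/
lemma exists_pert (d : ℕ) : ∃ A : ℝ, 1 ≤ A ∧ ∀ (f : E d → E d) (η : ℝ), 0 ≤ η →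
    ContDiffOn ℝ ∞ f (ball 0 2) →
    (∀ x ∈ ball (0 : E d) 2, ‖fderiv ℝ f x - ContinuousLinearMap.id ℝ (E d)‖ ≤ η) →
    (∀ x ∈ ball (0 : E d) 2, ‖iteratedFDeriv ℝ 2 f x‖ ≤ η) →
    (∀ x ∈ ball (0 : E d) 2, (fderiv ℝ f x).det = 1) → A * η ≤ 1 / 20 →
    ∃ v, Pert v (A * η) ∧ ∀ x, ‖x‖ ≤ 19 / 10 → f 0 + (x + v x) = f x := by
  let ψ : ContDiffBump (0 : E d) := ⟨19 / 10, 39 / 20, by norm_num, by norm_num⟩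
  obtain ⟨B, hB0, hB⟩ := exists_C2_bound (ψ := ψ) ψ.contDiff fun x hx =>
    ψ.zero_of_le_dist (by rw [dist_zero_right]; change (39 / 20 : ℝ) ≤ _; linarith)
  refine ⟨8 * B + 1, by linarith, fun f η hη hf h1 h2 hdet hsmall => ?_⟩
  set w : E d → E d := fun x => f x - f 0 - x with hw
  have h0m : (0 : E d) ∈ ball (0 : E d) 2 := mem_ball_self (by norm_num)
  have hwc : ContDiffOn ℝ ∞ w (ball 0 2) := (hf.sub contDiffOn_const).sub contDiffOn_id
  have hfd : ∀ x ∈ ball (0 : E d) 2, DifferentiableAt ℝ f x := fun x hx =>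
    (hf.contDiffAt (isOpen_ball.mem_nhds hx)).differentiableAt (by simp)
  have hwd : ∀ x ∈ ball (0 : E d) 2,
      HasFDerivAt w (fderiv ℝ f x - ContinuousLinearMap.id ℝ (E d)) x := fun x hx =>
    ((hfd x hx).hasFDerivAt.sub_const (f 0)).sub (hasFDerivAt_id x)
  have w0 : ∀ x ∈ ball (0 : E d) 2, ‖w x‖ ≤ 2 * η := fun x hx => by
    have := (convex_ball (0 : E d) 2).norm_image_sub_le_of_norm_hasFDerivWithin_le
      (fun x hx => (hwd x hx).hasFDerivWithinAt) h1 h0m hx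
    have hw0 : w 0 = 0 := by simp [hw]
    rw [hw0, sub_zero, sub_zero] at this
    rw [mem_ball_zero_iff] at hx
    nlinarith
  have w2 : ∀ x ∈ ball (0 : E d) 2, ‖iteratedFDeriv ℝ 2 w x‖ ≤ η := fun x hx => by
    have h3 : fderiv ℝ w =ᶠ[𝓝 x] fun x => fderiv ℝ f x - ContinuousLinearMap.id ℝ (E d) := by
      filter_upwards [isOpen_ball.mem_nhds hx] with y hy using (hwd y hy).fderiv
    rw [← norm_fderiv_fderiv, h3.fderiv_eq, fderiv_sub_const, norm_fderiv_fderiv]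
    exact h2 x hx
  have wn : ∀ n : ℕ, n ≤ 2 → ∀ x ∈ ball (0 : E d) 2, ‖iteratedFDeriv ℝ n w x‖ ≤ 2 * η := by
    intro n hn x hx
    interval_cases n
    · rw [norm_iteratedFDeriv_zero]; exact w0 x hx
    · rw [norm_iteratedFDeriv_one, (hwd x hx).fderiv]
      exact (h1 x hx).trans (by linarith)
    · exact (w2 x hx).trans (by linarith)
  set v : E d → E d := fun x => ψ x • w x with hv
  have hv_out : ∀ x, x ∉ ball (0 : E d) 2 → v =ᶠ[𝓝 x] fun _ => 0 := fun x hx => by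
    rw [mem_ball_zero_iff, not_lt] at hx
    have : ∀ᶠ y in 𝓝 x, 39 / 20 < ‖y‖ :=
      (isOpen_lt continuous_const continuous_norm).mem_nhds
        (show (39 / 20 : ℝ) < ‖x‖ by linarith)
    filter_upwards [this] with y hy
    have : ψ y = 0 := ψ.zero_of_le_dist (by rw [dist_zero_right]; exact hy.le)
    rw [hv]
    simp [this]
  have hψc : ContDiff ℝ ∞ ψ := ψ.contDiff
  have hvn : ∀ n : ℕ, n ≤ 2 → ∀ x, ‖iteratedFDeriv ℝ n v x‖ ≤ (8 * B + 1) * η := by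
    intro n hn x
    by_cases hx : x ∈ ball (0 : E d) 2
    · have h3 := norm_iteratedFDerivWithin_smul_le hψc.contDiffOn hwc isOpen_ball.uniqueDiffOn
        hx (n := n) (by exact_mod_cast le_top)
      have h4 : ∀ {F : Type} [NormedAddCommGroup F] [NormedSpace ℝ F] (m : ℕ) (φ : E d → F),
          iteratedFDerivWithin ℝ m φ (ball 0 2) x = iteratedFDeriv ℝ m φ x := fun m φ =>
        iteratedFDerivWithin_of_isOpen m isOpen_ball hx
      rw [h4] at h3
      refine h3.trans ?_
      calc _ ≤ ∑ i ∈ Finset.range (n + 1), (n.choose i : ℝ) * (B * (2 * η)) := by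
            refine Finset.sum_le_sum fun i hi => ?_
            rw [Finset.mem_range] at hi
            rw [h4, h4, mul_assoc]
            refine mul_le_mul_of_nonneg_left ?_ (by positivity)
            exact mul_le_mul (hB i (by omega) x) (wn _ (by omega) x hx) (norm_nonneg _) hB0
        _ = 2 ^ n * (B * (2 * η)) := by
            rw [← Finset.sum_mul]
            congr 1
            exact_mod_cast Nat.sum_range_choose n
        _ ≤ 2 ^ 2 * (B * (2 * η)) := by
            gcongr
            norm_num
        _ ≤ _ := by nlinarith
    · have h3 : iteratedFDeriv ℝ n v x = 0 := by
        rw [((hv_out x hx).iteratedFDeriv ℝ n).eq_of_nhds]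
        rw [iteratedFDeriv_fun_zero]
        rfl
      rw [h3, norm_zero]
      positivity
  have hvw : ∀ x, ‖x‖ ≤ 19 / 10 → v x = w x := fun x hx => by
    have : ψ x = 1 := ψ.one_of_mem_closedBall (by rw [mem_closedBall_zero_iff]; exact hx)
    rw [hv]
    simp [this]
  refine ⟨v, ⟨?_, hsmall, fun x => ?_, fun x => ?_, fun x => ?_, ?_, fun x hx => ?_⟩, fun x hx => ?_⟩
  · rw [contDiff_iff_contDiffAt]
    intro x
    by_cases hx : x ∈ ball (0 : E d) 2
    · exact hψc.contDiffAt.smul (hwc.contDiffAt (isOpen_ball.mem_nhds hx))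
    · exact contDiffAt_const.congr_of_eventuallyEq (hv_out x hx)
  · rw [← norm_iteratedFDeriv_zero (𝕜 := ℝ)]; exact hvn 0 (by norm_num) x
  · rw [← norm_iteratedFDeriv_one]; exact hvn 1 (by norm_num) x
  · rw [norm_fderiv_fderiv]; exact hvn 2 le_rfl x
  · rw [hvw 0 (by simp; norm_num), hw]
    simp
  · have hx2 : x ∈ ball (0 : E d) 2 := by rw [mem_ball_zero_iff]; linarith
    have h3 : v =ᶠ[𝓝 x] w := by
      filter_upwards [(isOpen_lt continuous_norm continuous_const).mem_nhds hx] with y hy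
      exact hvw y (le_of_lt hy)
    rw [h3.fderiv_eq, (hwd x hx2).fderiv, add_sub_cancel]
    exact hdet x hx2
  · rw [hvw x hx, hw]
    simp

end Extension

end LocalLin

open LocalLin in
/-- **Local linearization lemma (volume-preserving case).**  For every `d ≥ 1` and
`θ, χ′ > 0` there is `η > 0` such that: if `Q` is a compact subset of the closed unit ball
of `ℝ^d`, homeomorphic to the closed unit ball and of diameter `1`, and `f : B(0,2) → ℝ^d` is
a `C^∞` diffeomorphism onto its image preserving Lebesgue measure with `‖Df − Id‖ < η` and
`‖D²f‖ ≤ η` on `B(0,2)`, then there is a volume-preserving `C^∞` diffeomorphism onto its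
image `g : B(0,2) → ℝ^d` coinciding with `f` at distance `≥ χ′` from `Q`, equal to a
translation `z ↦ z + b` on `Q`, with `‖Dg − Df‖ ≤ θ` on `B(0,2)`. -/
theorem local_linearization_to_translation_volume_preserving
    (d : ℕ) (hd : 1 ≤ d) (θ χ' : ℝ) (hθ : 0 < θ) (hχ' : 0 < χ') :
    ∃ η : ℝ, 0 < η ∧
      ∀ Q : Set (EuclideanSpace ℝ (Fin d)),
        IsCompact Q → Q ⊆ closedBall (0 : EuclideanSpace ℝ (Fin d)) 1 →
        Nonempty (Q ≃ₜ (closedBall (0 : EuclideanSpace ℝ (Fin d)) 1 :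
          Set (EuclideanSpace ℝ (Fin d)))) →
        Metric.diam Q = 1 →
        ∀ f : EuclideanSpace ℝ (Fin d) → EuclideanSpace ℝ (Fin d),
          ContDiffOn ℝ (⊤ : ℕ∞) f (ball (0 : EuclideanSpace ℝ (Fin d)) 2) →
          Set.InjOn f (ball (0 : EuclideanSpace ℝ (Fin d)) 2) →
          IsOpen (f '' ball (0 : EuclideanSpace ℝ (Fin d)) 2) →
          (∃ finv, ContDiffOn ℝ (⊤ : ℕ∞) finv (f '' ball (0 : EuclideanSpace ℝ (Fin d)) 2) ∧
            ∀ x ∈ ball (0 : EuclideanSpace ℝ (Fin d)) 2, finv (f x) = x) →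
          (∀ s ⊆ ball (0 : EuclideanSpace ℝ (Fin d)) 2, MeasurableSet s →
            volume (f '' s) = volume s) →
          (∀ x ∈ ball (0 : EuclideanSpace ℝ (Fin d)) 2,
            ‖fderiv ℝ f x - ContinuousLinearMap.id ℝ (EuclideanSpace ℝ (Fin d))‖ < η) →
          (∀ x ∈ ball (0 : EuclideanSpace ℝ (Fin d)) 2,
            ‖iteratedFDeriv ℝ 2 f x‖ ≤ η) →
          ∃ b : EuclideanSpace ℝ (Fin d),
          ∃ g : EuclideanSpace ℝ (Fin d) → EuclideanSpace ℝ (Fin d),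
            ContDiffOn ℝ (⊤ : ℕ∞) g (ball (0 : EuclideanSpace ℝ (Fin d)) 2) ∧
            Set.InjOn g (ball (0 : EuclideanSpace ℝ (Fin d)) 2) ∧
            IsOpen (g '' ball (0 : EuclideanSpace ℝ (Fin d)) 2) ∧
            (∃ ginv, ContDiffOn ℝ (⊤ : ℕ∞) ginv (g '' ball (0 : EuclideanSpace ℝ (Fin d)) 2) ∧
              ∀ x ∈ ball (0 : EuclideanSpace ℝ (Fin d)) 2, ginv (g x) = x) ∧
            (∀ s ⊆ ball (0 : EuclideanSpace ℝ (Fin d)) 2, MeasurableSet s →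
              volume (g '' s) = volume s) ∧
            (∀ x ∈ ball (0 : EuclideanSpace ℝ (Fin d)) 2,
              χ' ≤ infDist x Q → g x = f x) ∧
            (∀ z ∈ Q, g z = z + b) ∧
            (∀ x ∈ ball (0 : EuclideanSpace ℝ (Fin d)) 2,
              ‖fderiv ℝ g x - fderiv ℝ f x‖ ≤ θ) := by
  obtain ⟨χ, hχ0, hχ1, hχ2⟩ : ∃ χ : ℝ, 0 < χ ∧ χ ≤ 1 / 2 ∧ χ ≤ χ' :=
    ⟨min χ' (1 / 2), lt_min hχ' (by norm_num), min_le_right _ _, min_le_left _ _⟩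
  obtain ⟨M, hM0, hM⟩ := exists_cuts d hχ0 (by linarith)
  obtain ⟨D, hD0, hD⟩ := exists_cutoff hd M hM0
  obtain ⟨A, hA1, hA⟩ := exists_pert d
  obtain ⟨C, hC1, hC⟩ := exists_invDet_bound d
  have hA0 : 0 < A := by linarith
  have hC0 : 0 < C := by linarith
  -- `A * η` bounds the displacement `v` of `f` in `C²`, and `D * (A * η)` its cut-off in `C¹`.
  obtain ⟨η, hη0, e1, e2, e3, e4, e5⟩ : ∃ η : ℝ, 0 < η ∧ A * η ≤ 1 / 20 ∧ D * (A * η) ≤ 1 / 2 ∧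
      A * η ≤ χ / 2 ∧ D * (A * η) + η ≤ θ ∧ C * η ≤ 1 / 2 := by
    have t : ∀ B ε : ℝ, 0 < ε → ∀ᶠ η in nhdsWithin (0 : ℝ) (Set.Ioi 0), B * η ≤ ε := fun B ε hε => by
      have : Filter.Tendsto (fun η : ℝ => B * η) (nhds 0) (nhds (B * 0)) :=
        (continuous_const.mul continuous_id).tendsto 0
      rw [mul_zero] at this
      exact ((this.eventually (gt_mem_nhds hε)).filter_mono nhdsWithin_le_nhds).mono
        fun _ h => le_of_lt h
    have hpos : ∀ᶠ η in nhdsWithin (0 : ℝ) (Set.Ioi 0), 0 < η := self_mem_nhdsWithin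
    obtain ⟨η, h0, h1, h2, h3, h4, h5⟩ := (hpos.and ((t A (1 / 20) (by norm_num)).and
      ((t (D * A) (1 / 2) (by norm_num)).and ((t A (χ / 2) (by linarith)).and
      ((t (D * A + 1) θ hθ).and (t C (1 / 2) (by norm_num))))))).exists
    exact ⟨η, h0, h1, by linarith, h3, by linarith, h5⟩
  have hη1 : η ≤ 1 / 2 := by nlinarith
  refine ⟨η, hη0, ?_⟩
  intro Q hQc hQ1 _ hdiam f hf hinj _ _ hvol hf1 hf2
  have hQne : Q.Nonempty := by
    rw [Set.nonempty_iff_ne_empty]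
    rintro rfl
    simp at hdiam
  have hpos : ∀ x ∈ ball (0 : E d) 2, 0 < (fderiv ℝ f x).det := fun x hx => by
    have h := (hC (fderiv ℝ f x - ContinuousLinearMap.id ℝ (E d))
      ((hf1 x hx).le.trans hη1)).1
    rw [invDet, add_sub_cancel] at h
    have h3 : C * ‖fderiv ℝ f x - ContinuousLinearMap.id ℝ (E d)‖ ≤ 1 / 2 :=
      (mul_le_mul_of_nonneg_left (hf1 x hx).le hC0.le).trans e5
    have h4 := abs_le.1 (h.trans h3)
    exact inv_pos.1 (by linarith [h4.1])
  have hdet := det_eq_one hf hinj hvol hpos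
  obtain ⟨v, hv, hvf⟩ := hA f η hη0.le hf (fun x hx => (hf1 x hx).le) hf2 hdet e1
  obtain ⟨ρ, hρ, hρ0, hρ1⟩ := hM Q hQ1
  obtain ⟨G, G1, G2, G3, G4, G5⟩ := hD ρ hρ v (A * η) hv (by linarith)
  have hagree : ∀ x : E d, ‖x‖ < 17 / 10 → χ ≤ infDist x Q → f 0 + G x = f x := by
    intro x hx hxQ
    rw [G5 x hx fun y hy => hρ1 y ?_ ?_, hvf x (by linarith)]
    · have := norm_add_le (y - x) x
      rw [sub_add_cancel] at this
      linarith
    · have : infDist x Q ≤ infDist y Q + dist x y := infDist_le_infDist_add_dist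
      rw [dist_comm, dist_eq_norm] at this
      linarith
  have hfar : ∀ x : E d, 3 / 2 < ‖x‖ → χ ≤ infDist x Q := fun x hx => by
    refine (le_infDist hQne).2 fun y hy => ?_
    have h1 := hQ1 hy
    rw [mem_closedBall_zero_iff] at h1
    have h2 := norm_sub_norm_le x y
    rw [dist_eq_norm]
    linarith
  classical
  -- The two formulas agree for `3/2 < ‖x‖ < 17/10`, at distance at least `1/2` from `Q`.
  set g : E d → E d := fun x => if ‖x‖ < 8 / 5 then f 0 + G x else f x with hg
  have g_in : ∀ x : E d, ‖x‖ < 8 / 5 → g =ᶠ[nhds x] fun x => f 0 + G x := fun x hx => by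
    filter_upwards [(isOpen_lt continuous_norm continuous_const).mem_nhds hx] with y hy
    exact if_pos hy
  have g_out : ∀ x : E d, ¬ ‖x‖ < 8 / 5 → g =ᶠ[nhds x] f := fun x hx => by
    filter_upwards [(isOpen_lt continuous_const continuous_norm).mem_nhds
      (show (3 / 2 : ℝ) < ‖x‖ by linarith)] with y hy
    by_cases hy' : ‖y‖ < 8 / 5
    · rw [hg]
      simp only [hy', if_true]
      exact hagree y (by linarith) (hfar y hy)
    · exact if_neg hy'
  have Dg_in : ∀ x : E d, ‖x‖ < 8 / 5 → fderiv ℝ g x = fderiv ℝ G x := fun x hx => by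
    rw [(g_in x hx).fderiv_eq, fderiv_const_add]
  have Dg_out : ∀ x : E d, ¬ ‖x‖ < 8 / 5 → fderiv ℝ g x = fderiv ℝ f x := fun x hx =>
    (g_out x hx).fderiv_eq
  have hgs : ContDiffOn ℝ (⊤ : ℕ∞) g (ball 0 2) := fun x hx => by
    by_cases h : ‖x‖ < 8 / 5
    · exact ((contDiff_const.add G1).contDiffAt.congr_of_eventuallyEq (g_in x h)).contDiffWithinAt
    · exact ((hf.contDiffAt (isOpen_ball.mem_nhds hx)).congr_of_eventuallyEq
        (g_out x h)).contDiffWithinAt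
  obtain ⟨r1, r2, r3, r4⟩ := diffeo_of_close hgs
    (fun x hx => by
      by_cases h : ‖x‖ < 8 / 5
      · rw [Dg_in x h]; exact (G3 x).trans e2
      · rw [Dg_out x h]; exact (hf1 x hx).le.trans hη1)
    (fun x hx => by
      by_cases h : ‖x‖ < 8 / 5
      · rw [Dg_in x h]; exact G2 x
      · rw [Dg_out x h]; exact hdet x hx)
  refine ⟨f 0, g, hgs, r1, r2, r3, r4, fun x hx hxQ => ?_, fun z hz => ?_, fun x hx => ?_⟩
  · by_cases h : ‖x‖ < 8 / 5
    · rw [(g_in x h).eq_of_nhds]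
      exact hagree x (by linarith) (hχ2.trans hxQ)
    · exact (g_out x h).eq_of_nhds
  · have h1 := hQ1 hz
    rw [mem_closedBall_zero_iff] at h1
    rw [(g_in z (by linarith)).eq_of_nhds, G4 z (hρ0 z hz), add_comm]
  · by_cases h : ‖x‖ < 8 / 5
    · rw [Dg_in x h, ← sub_sub_sub_cancel_right _ _ (ContinuousLinearMap.id ℝ (E d))]
      exact (norm_sub_le _ _).trans ((add_le_add (G3 x) (hf1 x hx).le).trans e4)
    · rw [Dg_out x h, sub_self, norm_zero]
      exact hθ.le
end
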